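/- arXiv:2008.03812 — 2 statements merged into one kernel-verified Lean document; each statement's English description precedes it below -/
import Mathlib

section
/- For every natural number m ≥ 2 there exists a constant C > 0 such that for every finite field F of even order q and every subset Y of G = Sp_{2m}(F) with |Y| ≤ 3, the number of y ∈ G for which some x ∈ Y makes {x, y} invariably generate G is at most (1 − 1/(2^m · m!) + C/q) · |G|. -/
/-- `{x, y}` invariably generates `G`: for all `g, h`, the conjugates
`g * x * g⁻¹` and `h * y * h⁻¹` generate `G`. -/
def InvGen {G : Type*} [Group G] (x y : G) : Prop :=
  ∀ g h : G, Subgroup.closure {g * x * g⁻¹, h * y * h⁻¹} = ⊤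

/-!
Let `G = Sp(V)` with `dim V = 2m` over a field of `q` elements, `q` even and `q > 2`. Each of the
following makes `x, y ∈ G` fail to generate `G` invariably, because some conjugates of `x` and `y`
lie in a common proper subgroup:
* both preserve a quadratic form of the same type (plus or minus) polarizing to the symplectic form;
* both have an invariant nondegenerate subspace of dimension `2k`, where `0 < k < m`;
* both have an invariant totally isotropic subspace of dimension `k`, where `0 < k ≤ m`;
* `m = 2k`, `x` interchanges a nondegenerate subspace with its orthogonal complement, and `y` has an
  invariant nondegenerate subspace of dimension `2k`;
* both lie in conjugates of `Sp_2(q^m)`.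

Every `x ∈ G` preserves a quadratic form of one of the two types. It also has an invariant subspace
as above or lies in a conjugate of `Sp_2(q^m)`, and in the absence of an invariant subspace with
`k < m` it lies in such a conjugate or interchanges a subspace with its orthogonal complement.

The conjugates of regular elements of a maximal torus make up a proportion at least
`1 / (2^m m!) - O(1/q)` of `G`, since `2^m m!` is the order of the Weyl group. So it suffices to
find one torus whose regular elements generate `G` invariably with no element of `Y`. The split
torus `(q - 1)^m` works if every `x ∈ Y` is of plus type or has an invariant subspace. The tori
`q^m - 1` and `q^m + 1` work if every `x ∈ Y` is of the type of the torus (plus and minus,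
respectively) or lies in a conjugate of `Sp_2(q^m)`. If all three fail, then `Y` has three elements,
two of minus type and a third which has an invariant subspace with `k < m` or interchanges a
subspace with its orthogonal complement, and the torus `(q^k - 1)(q^(m-k) + 1)` works.
-/

namespace SpInvGen

open Module Polynomial
open LinearMap (BilinForm)

/-! ### Symplectic spaces -/

section Symplectic

variable {F : Type*} [Field F]

/-- A symplectic form: a nondegenerate alternating bilinear form. -/
structure IsSymplectic {V : Type*} [AddCommGroup V] [Module F V] (B : BilinForm F V) : Prop where
  isAlt : B.IsAlt
  nondegenerate : B.Nondegenerate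

variable {V W : Type*} [AddCommGroup V] [Module F V] [AddCommGroup W] [Module F W]
  {B : BilinForm F V} {C : BilinForm F W}

theorem exists_isometryEquiv_of_isCompl (hB : B.IsRefl) (hC : C.IsRefl) {U : Submodule F V}
    {Z : Submodule F W} (hU : IsCompl U (B.orthogonal U)) (hZ : IsCompl Z (C.orthogonal Z))
    (φ : (B.restrict U).IsometryEquiv (C.restrict Z))
    (ψ : (B.restrict (B.orthogonal U)).IsometryEquiv (C.restrict (C.orthogonal Z))) :
    ∃ Φ : B.IsometryEquiv C,
      (∀ u : U, Φ u = φ u) ∧ ∀ v : B.orthogonal U, Φ v = ψ v := by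
  let eU := Submodule.prodEquivOfIsCompl U _ hU
  let eZ := Submodule.prodEquivOfIsCompl Z _ hZ
  let e : V ≃ₗ[F] W := eU.symm.trans ((φ.toLinearEquiv.prodCongr ψ.toLinearEquiv).trans eZ)
  have he (u : U) (v : B.orthogonal U) : e (u + v) = φ u + ψ v := by
    rw [show (u : V) + v = eU (u, v) by simp [eU]]
    simp [e, eZ, ← BilinForm.IsometryEquiv.coe_toLinearEquiv]
  refine ⟨⟨e, fun v w ↦ ?_⟩, fun u ↦ ?_, fun v ↦ ?_⟩
  · obtain ⟨⟨u, u'⟩, rfl⟩ := eU.surjective v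
    obtain ⟨⟨r, r'⟩, rfl⟩ := eU.surjective w
    have hφ : C (φ u) (φ r) = B u r := φ.map_app r u
    have hψ : C (ψ u') (ψ r') = B u' r' := ψ.map_app r' u'
    have hur : B u r' = 0 := r'.2 u u.2
    have hru : B u' r = 0 := hB _ _ (u'.2 r r.2)
    have hur' : C (φ u) (ψ r') = 0 := (ψ r').2 _ (φ u).2
    have hru' : C (ψ u') (φ r) = 0 := hC _ _ ((ψ u').2 _ (φ r).2)
    simp [eU, he, hφ, hψ, hur, hru, hur', hru']
  · change e u = _
    simpa using he u 0
  · change e v = _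
    simpa using he 0 v

namespace IsSymplectic

theorem isRefl (hB : IsSymplectic B) : B.IsRefl := hB.isAlt.isRefl

theorem exists_apply_eq_one (hB : IsSymplectic B) {e : V} (he : e ≠ 0) : ∃ f, B e f = 1 := by
  obtain ⟨f, hf⟩ : ∃ f, B e f ≠ 0 := by
    by_contra! h
    exact he (hB.nondegenerate.1 e h)
  exact ⟨(B e f)⁻¹ • f, by simp [hf]⟩

theorem restrict (hB : IsSymplectic B) {U : Submodule F V} (hU : Disjoint U (B.orthogonal U)) :
    IsSymplectic (B.restrict U) :=
  ⟨fun v ↦ hB.isAlt v, B.nondegenerate_restrict_of_disjoint_orthogonal hB.isRefl hU⟩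

variable [FiniteDimensional F V]

theorem disjoint_orthogonal_orthogonal (hB : IsSymplectic B) {U : Submodule F V}
    (hU : Disjoint U (B.orthogonal U)) :
    Disjoint (B.orthogonal U) (B.orthogonal (B.orthogonal U)) := by
  rw [BilinForm.orthogonal_orthogonal hB.nondegenerate hB.isRefl]
  exact hU.symm

theorem isCompl_orthogonal (hB : IsSymplectic B) {U : Submodule F V}
    (hU : Disjoint U (B.orthogonal U)) : IsCompl U (B.orthogonal U) :=
  (BilinForm.isCompl_orthogonal_iff_disjoint hB.isRefl).2 hU

theorem finrank_add_finrank_orthogonal (hB : IsSymplectic B) (U : Submodule F V) :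
    finrank F U + finrank F (B.orthogonal U) = finrank F V := by
  rw [BilinForm.finrank_orthogonal hB.nondegenerate]
  exact Nat.add_sub_of_le U.finrank_le

end IsSymplectic

/-! ### Hyperbolic pairs and Witt's theorem -/

variable (F) in
/-- The plane spanned by `e` and `f`, which is a hyperbolic plane when `B e f = 1`; it is written as
the span of a family so that `Basis.span` applies. -/
abbrev spanPair (e f : V) : Submodule F V := Submodule.span F (Set.range ![e, f])

theorem orthogonal_spanPair (e f : V) :
    B.orthogonal (spanPair F e f) = (B e).ker ⊓ (B f).ker := by
  ext v
  refine ⟨fun h ↦ ⟨h e (Submodule.subset_span ⟨0, rfl⟩), h f (Submodule.subset_span ⟨1, rfl⟩)⟩,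
    fun ⟨he, hf⟩ u hu ↦ ?_⟩
  have : spanPair F e f ≤ (B.flip v).ker := by
    rw [Submodule.span_le]
    rintro _ ⟨i, rfl⟩
    fin_cases i
    exacts [he, hf]
  exact this hu

section HyperbolicPair

variable {e f : V}

theorem linearIndependent_of_apply_eq_one (hB : B.IsAlt) (hef : B e f = 1) :
    LinearIndependent F ![e, f] := by
  refine LinearIndependent.pair_iff.2 fun s t h ↦ ?_
  have hfe : B f e = -1 := by rw [← hB.neg_eq, hef]
  constructor
  · simpa [hB f, hef] using congrArg (B · f) h
  · simpa [hB e, hfe] using congrArg (B · e) h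

theorem finrank_spanPair (hB : B.IsAlt) (hef : B e f = 1) :
    finrank F (spanPair F e f) = 2 := by
  simpa using finrank_span_eq_card (linearIndependent_of_apply_eq_one hB hef)

theorem disjoint_spanPair_orthogonal (hB : B.IsAlt) (hef : B e f = 1) :
    Disjoint (spanPair F e f) (B.orthogonal (spanPair F e f)) := by
  rw [orthogonal_spanPair, Submodule.disjoint_def]
  rintro v hv ⟨hev, hfv⟩
  have hfe : B f e = -1 := by rw [← hB.neg_eq, hef]
  rw [spanPair, Matrix.range_cons_cons_empty, Submodule.mem_span_pair] at hv
  obtain ⟨a, b, rfl⟩ := hv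
  have hb : b = 0 := by simpa [hB e, hef] using hev
  have ha : a = 0 := by simpa [hB f, hfe] using hfv
  simp [ha, hb]

theorem exists_isometryEquiv_spanPair (hB : B.IsAlt) (hef : B e f = 1) (hC : C.IsAlt)
    {e' f' : W} (hef' : C e' f' = 1) :
    ∃ φ : (B.restrict (spanPair F e f)).IsometryEquiv (C.restrict (spanPair F e' f')),
      ∀ h : e ∈ spanPair F e f, (φ ⟨e, h⟩ : W) = e' := by
  let b := Basis.span (linearIndependent_of_apply_eq_one hB hef)
  let b' := Basis.span (linearIndependent_of_apply_eq_one hC hef')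
  have hb (i) : (b i : V) = ![e, f] i := congrArg Subtype.val (Basis.span_apply _ i)
  have hb' (i) : (b' i : W) = ![e', f'] i := congrArg Subtype.val (Basis.span_apply _ i)
  let φ := b.equiv b' (Equiv.refl _)
  have hφ (i) : φ (b i) = b' i := by simp [φ]
  refine ⟨⟨φ, fun v w ↦ ?_⟩, fun h ↦ ?_⟩
  · suffices H : (C.restrict _).comp φ.toLinearMap φ.toLinearMap = B.restrict _ from
      congrArg (fun D ↦ D v w) H
    refine BilinForm.ext_basis b fun i j ↦ ?_
    have hfe : B f e = -1 := by rw [← hB.neg_eq, hef]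
    have hfe' : C f' e' = -1 := by rw [← hC.neg_eq, hef']
    simp only [BilinForm.comp_apply, LinearEquiv.coe_coe, hφ, BilinForm.restrict_apply,
      LinearMap.domRestrict_apply, hb, hb']
    fin_cases i <;> fin_cases j <;> simp [hB.self_eq_zero, hC.self_eq_zero, hef, hef', hfe, hfe']
  · have : (⟨e, h⟩ : spanPair F e f) = b 0 := Subtype.ext (hb 0).symm
    rw [this]
    exact (congrArg Subtype.val (hφ 0)).trans (hb' 0)

end HyperbolicPair

theorem finrank_submoduleOf_orthogonal_spanPair [FiniteDimensional F V] {e f : V} (hB : B.IsRefl)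
    (hef : B e f = 1) {U : Submodule F V} (hU : U ≤ B.orthogonal U) (he : e ∈ U) :
    finrank F (U.submoduleOf (B.orthogonal (spanPair F e f))) + 1 = finrank F U := by
  let g : U →ₗ[F] F := (B.flip f).domRestrict U
  have hg : Function.Surjective g := LinearMap.surjective fun h ↦ by
    simpa [g, hef] using LinearMap.congr_fun h ⟨e, he⟩
  have hker : g.ker.map U.subtype =
      (U.submoduleOf (B.orthogonal (spanPair F e f))).map (Submodule.subtype _) := by
    ext u
    rw [Submodule.submoduleOf, Submodule.map_comap_subtype, inf_comm, orthogonal_spanPair]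
    constructor
    · rintro ⟨u, hu, rfl⟩
      exact ⟨u.2, hU u.2 e he, hB _ _ hu⟩
    · rintro ⟨hu, -, hfu⟩
      exact ⟨⟨u, hu⟩, hB _ _ hfu, rfl⟩
  rw [← Submodule.finrank_map_subtype_eq, ← hker, Submodule.finrank_map_subtype_eq,
    ← g.finrank_range_add_finrank_ker, LinearMap.range_eq_top.2 hg, finrank_top, finrank_self,
    add_comm]

namespace IsSymplectic

theorem exists_isometryEquiv_extending [FiniteDimensional F V] [FiniteDimensional F W]
    (hB : IsSymplectic B) (hC : IsSymplectic C) {e f : V} {e' f' : W} (hef : B e f = 1)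
    (hef' : C e' f' = 1)
    (ψ : (B.restrict (B.orthogonal (spanPair F e f))).IsometryEquiv
      (C.restrict (C.orthogonal (spanPair F e' f')))) :
    ∃ Φ : B.IsometryEquiv C, Φ e = e' ∧ ∀ v : B.orthogonal (spanPair F e f), Φ v = ψ v := by
  obtain ⟨φ, hφ⟩ := exists_isometryEquiv_spanPair hB.isAlt hef hC.isAlt hef'
  obtain ⟨Φ, hΦφ, hΦψ⟩ := exists_isometryEquiv_of_isCompl hB.isRefl hC.isRefl
    (hB.isCompl_orthogonal (disjoint_spanPair_orthogonal hB.isAlt hef))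
    (hC.isCompl_orthogonal (disjoint_spanPair_orthogonal hC.isAlt hef')) φ ψ
  have he : e ∈ spanPair F e f := Submodule.subset_span ⟨0, rfl⟩
  exact ⟨Φ, (hΦφ ⟨e, he⟩).trans (hφ he), hΦψ⟩

theorem restrict_orthogonal_spanPair [FiniteDimensional F V] (hB : IsSymplectic B) {e f : V}
    (hef : B e f = 1) : IsSymplectic (B.restrict (B.orthogonal (spanPair F e f))) :=
  hB.restrict (hB.disjoint_orthogonal_orthogonal (disjoint_spanPair_orthogonal hB.isAlt hef))

theorem finrank_orthogonal_spanPair [FiniteDimensional F V] (hB : IsSymplectic B) {e f : V}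
    (hef : B e f = 1) : 2 + finrank F (B.orthogonal (spanPair F e f)) = finrank F V := by
  rw [← finrank_spanPair hB.isAlt hef, hB.finrank_add_finrank_orthogonal]

theorem exists_hyperbolicPair [Nontrivial V] (hB : IsSymplectic B) : ∃ e f, B e f = 1 :=
  let ⟨e, he⟩ := exists_ne (0 : V)
  ⟨e, hB.exists_apply_eq_one he⟩

theorem even_finrank [FiniteDimensional F V] (hB : IsSymplectic B) : Even (finrank F V) := by
  induction hn : finrank F V using Nat.strong_induction_on generalizing V with
  | _ n ih =>
    rcases subsingleton_or_nontrivial V with hV | hV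
    · simp [← hn, finrank_zero_of_subsingleton]
    · obtain ⟨e, f, hef⟩ := hB.exists_hyperbolicPair
      have hdim := hB.finrank_orthogonal_spanPair hef
      have := ih _ (by lia) (hB.restrict_orthogonal_spanPair hef) rfl
      rw [← hn, ← hdim]
      exact even_two.add this

theorem equivalent [FiniteDimensional F V] [FiniteDimensional F W] (hB : IsSymplectic B)
    (hC : IsSymplectic C) (h : finrank F V = finrank F W) : B.Equivalent C := by
  induction hn : finrank F V using Nat.strong_induction_on generalizing V W with
  | _ n ih =>
    rcases subsingleton_or_nontrivial V with hV | hV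
    · exact ⟨⟨LinearEquiv.ofFinrankEq V W h, fun v w ↦ by simp [Subsingleton.elim v 0]⟩⟩
    · have : Nontrivial W := nontrivial_of_finrank_pos (R := F) (h ▸ finrank_pos)
      obtain ⟨e, f, hef⟩ := hB.exists_hyperbolicPair
      obtain ⟨e', f', hef'⟩ := hC.exists_hyperbolicPair
      have hdim := hB.finrank_orthogonal_spanPair hef
      have hdim' := hC.finrank_orthogonal_spanPair hef'
      obtain ⟨ψ⟩ := ih _ (by lia) (hB.restrict_orthogonal_spanPair hef)
        (hC.restrict_orthogonal_spanPair hef') (by lia) rfl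
      obtain ⟨Φ, -⟩ := hB.exists_isometryEquiv_extending hC hef hef' ψ
      exact ⟨Φ⟩

theorem exists_isometryEquiv_map_eq_of_isotropic [FiniteDimensional F V] [FiniteDimensional F W]
    (hB : IsSymplectic B) (hC : IsSymplectic C) (h : finrank F V = finrank F W)
    {U : Submodule F V} {Z : Submodule F W} (hU : U ≤ B.orthogonal U) (hZ : Z ≤ C.orthogonal Z)
    (hUZ : finrank F U = finrank F Z) :
    ∃ Φ : B.IsometryEquiv C, U.map (Φ.toLinearEquiv : V →ₗ[F] W) = Z := by
  induction hn : finrank F U generalizing V W with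
  | zero =>
    obtain ⟨Φ⟩ := hB.equivalent hC h
    obtain rfl := Submodule.finrank_eq_zero.1 hn
    obtain rfl := Submodule.finrank_eq_zero.1 (hUZ ▸ hn)
    exact ⟨Φ, Submodule.map_bot _⟩
  | succ n ih =>
    obtain ⟨e, he, he0⟩ := U.exists_mem_ne_zero_of_ne_bot (by rintro rfl; simp at hn)
    obtain ⟨e', he', he0'⟩ := Z.exists_mem_ne_zero_of_ne_bot (by rintro rfl; simp [hUZ] at hn)
    obtain ⟨f, hef⟩ := hB.exists_apply_eq_one he0
    obtain ⟨f', hef'⟩ := hC.exists_apply_eq_one he0'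
    have hdim := hB.finrank_orthogonal_spanPair hef
    have hdim' := hC.finrank_orthogonal_spanPair hef'
    have hUe := finrank_submoduleOf_orthogonal_spanPair hB.isRefl hef hU he
    have hZe := finrank_submoduleOf_orthogonal_spanPair hC.isRefl hef' hZ he'
    obtain ⟨ψ, hψ⟩ := ih (hB.restrict_orthogonal_spanPair hef)
      (hC.restrict_orthogonal_spanPair hef') (by lia) (U := U.submoduleOf _)
      (Z := Z.submoduleOf _) (fun u hu v hv ↦ hU hu _ hv) (fun u hu v hv ↦ hZ hu _ hv)
      (by lia) (by lia)
    obtain ⟨Φ, hΦe, hΦψ⟩ := hB.exists_isometryEquiv_extending hC hef hef' ψ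
    refine ⟨Φ, Submodule.eq_of_le_of_finrank_eq ?_ (by rw [LinearEquiv.finrank_map_eq, hUZ])⟩
    rintro _ ⟨u, hu, rfl⟩
    obtain ⟨r, hr⟩ : ∃ r : B.orthogonal (spanPair F e f), u - B u f • e = r := by
      refine ⟨⟨u - B u f • e, ?_⟩, rfl⟩
      rw [orthogonal_spanPair]
      exact ⟨by simp [hB.isAlt.self_eq_zero, hU hu e he],
        by simp [← hB.isAlt.neg_eq e f, ← hB.isAlt.neg_eq u f, hef]⟩
    have hrU : r ∈ U.submoduleOf _ := by
      change (r : V) ∈ U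
      exact hr ▸ U.sub_mem hu (U.smul_mem _ he)
    have hψr : ψ r ∈ Z.submoduleOf _ := hψ ▸ ⟨r, hrU, rfl⟩
    have hΦu : Φ u = B u f • e' + ψ r := by
      rw [← hΦψ, ← hΦe, ← map_smul, ← map_add, ← hr, add_sub_cancel]
    change Φ u ∈ Z
    exact hΦu ▸ Z.add_mem (Z.smul_mem _ he') hψr

theorem exists_isometryEquiv_map_eq_of_disjoint [FiniteDimensional F V] [FiniteDimensional F W]
    (hB : IsSymplectic B) (hC : IsSymplectic C) (h : finrank F V = finrank F W)
    {U : Submodule F V} {Z : Submodule F W} (hU : Disjoint U (B.orthogonal U))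
    (hZ : Disjoint Z (C.orthogonal Z)) (hUZ : finrank F U = finrank F Z) :
    ∃ Φ : B.IsometryEquiv C, U.map (Φ.toLinearEquiv : V →ₗ[F] W) = Z ∧
      (B.orthogonal U).map (Φ.toLinearEquiv : V →ₗ[F] W) = C.orthogonal Z := by
  have hdim := hB.finrank_add_finrank_orthogonal U
  have hdim' := hC.finrank_add_finrank_orthogonal Z
  obtain ⟨φ⟩ := (hB.restrict hU).equivalent (hC.restrict hZ) hUZ
  obtain ⟨ψ⟩ := (hB.restrict (hB.disjoint_orthogonal_orthogonal hU)).equivalent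
    (hC.restrict (hC.disjoint_orthogonal_orthogonal hZ)) (by lia)
  obtain ⟨Φ, hφ, hψ⟩ := exists_isometryEquiv_of_isCompl hB.isRefl hC.isRefl
    (hB.isCompl_orthogonal hU) (hC.isCompl_orthogonal hZ) φ ψ
  refine ⟨Φ, Submodule.eq_of_le_of_finrank_eq ?_ ?_, Submodule.eq_of_le_of_finrank_eq ?_ ?_⟩
  · rintro _ ⟨u, hu, rfl⟩
    exact (hφ ⟨u, hu⟩).symm ▸ (φ ⟨u, hu⟩).2
  · rw [LinearEquiv.finrank_map_eq, hUZ]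
  · rintro _ ⟨u, hu, rfl⟩
    exact (hψ ⟨u, hu⟩).symm ▸ (ψ ⟨u, hu⟩).2
  · rw [LinearEquiv.finrank_map_eq]
    lia

end IsSymplectic

end Symplectic

/-! ### The symplectic group -/

section SymplecticGroup

variable {F V : Type*} [Field F] [AddCommGroup V] [Module F V] {B : BilinForm F V}

/-- The group of isometries of a bilinear form, realised inside the general linear group. -/
def Sp (B : BilinForm F V) : Subgroup (V ≃ₗ[F] V) where
  carrier := {g | ∀ v w, B (g v) (g w) = B v w}
  mul_mem' {a b} ha hb v w := (ha _ _).trans (hb _ _)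
  one_mem' _ _ := rfl
  inv_mem' {a} ha v w := by
    simpa using (ha (a.symm v) (a.symm w)).symm

theorem toLinearEquiv_mem_Sp (Φ : B.IsometryEquiv B) : Φ.toLinearEquiv ∈ Sp B :=
  fun v w ↦ Φ.map_app w v

/-- An element of `Sp B`, as an isometry of `B` with itself. -/
def isometryEquivOfMemSp {g : V ≃ₗ[F] V} (hg : g ∈ Sp B) : B.IsometryEquiv B :=
  { g with map_app' := fun v w ↦ hg v w }

theorem apply_symm_left_of_mem_Sp {g : V ≃ₗ[F] V} (hg : g ∈ Sp B) (v w : V) :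
    B (g.symm v) w = B v (g w) := by
  rw [← hg, g.apply_symm_apply]

theorem apply_left_of_mem_Sp {g : V ≃ₗ[F] V} (hg : g ∈ Sp B) (v w : V) :
    B (g v) w = B v (g.symm w) := by
  rw [← hg v, g.apply_symm_apply]

/-- The symplectic transvection `v ↦ v + c B(u, v) u`. -/
def transvection (hB : B.IsAlt) (u : V) (c : F) : V ≃ₗ[F] V :=
  LinearEquiv.transvection (f := c • B u) (v := u) (by simp [hB.self_eq_zero])

theorem transvection_apply (hB : B.IsAlt) (u : V) (c : F) (v : V) :
    transvection hB u c v = v + (c * B u v) • u :=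
  LinearEquiv.transvection.apply _ _

theorem transvection_mem_Sp (hB : B.IsAlt) (u : V) (c : F) : transvection hB u c ∈ Sp B := by
  intro v w
  simp only [transvection_apply, map_add, map_smul, LinearMap.add_apply, LinearMap.smul_apply,
    smul_eq_mul, hB.self_eq_zero, ← hB.neg_eq u v]
  ring

theorem not_invGen_of_mem {G : Type*} [Group G] {H : Subgroup G} (hH : H ≠ ⊤) {x y g : G}
    (hx : x ∈ H) (hy : g * y * g⁻¹ ∈ H) : ¬ InvGen x y := fun h ↦ by
  refine hH (top_le_iff.1 (h 1 g ▸ (Subgroup.closure_le H).2 ?_))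
  rintro _ (rfl | rfl)
  exacts [by simpa using hx, hy]

end SymplecticGroup

/-! ### Quadratic forms in characteristic two -/

section ArtinSchreier

variable (F : Type*) [Field F] [CharP F 2]

/-- The Artin–Schreier map `z ↦ z² + z`. -/
def artinSchreier : F →+ F where
  toFun z := z ^ 2 + z
  map_zero' := by ring
  map_add' x y := by rw [CharTwo.add_sq]; ring

/-- The group in which the Arf invariant of a quadratic form over `F` takes its values. -/
abbrev ArfGroup := F ⧸ (artinSchreier F).range

variable {F}

theorem artinSchreier_apply (z : F) : artinSchreier F z = z ^ 2 + z := rfl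

theorem mk_arfGroup_eq_iff {a b : F} :
    (a : ArfGroup F) = b ↔ a + b ∈ (artinSchreier F).range := by
  rw [QuotientAddGroup.eq, CharTwo.neg_eq]

theorem mk_arfGroup_sq (a : F) : ((a ^ 2 : F) : ArfGroup F) = a := by
  rw [mk_arfGroup_eq_iff]
  exact ⟨a, rfl⟩

theorem card_ker_artinSchreier : Nat.card (artinSchreier F).ker = 2 := by
  have : ((artinSchreier F).ker : Set F) = {0, 1} := by
    ext z
    have h : artinSchreier F z = z * (z - 1) := by
      rw [CharTwo.sub_eq_add, artinSchreier_apply]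
      ring
    simp [h, sub_eq_zero]
  exact (Nat.card_congr (Equiv.setCongr this)).trans (Set.ncard_pair zero_ne_one)

theorem card_arfGroup [Finite F] : Nat.card (ArfGroup F) = 2 := by
  have hindex := (artinSchreier F).range.card_mul_index
  have hker := (artinSchreier F).ker.card_mul_index
  rw [AddSubgroup.index_ker, card_ker_artinSchreier, ← hindex, mul_comm] at hker
  exact (Nat.eq_of_mul_eq_mul_left Nat.card_pos hker).symm

theorem arfGroup_eq_of_ne_zero [Finite F] {c d : ArfGroup F} (hc : c ≠ 0) (hd : d ≠ 0) :
    c = d :=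
  ((Nat.card_eq_two_iff' 0).1 card_arfGroup).unique hc hd

end ArtinSchreier

section QuadraticForm

variable {F V W : Type*} [Field F] [AddCommGroup V] [Module F V] [AddCommGroup W] [Module F W]
  {B : BilinForm F V} {C : BilinForm F W}

theorem apply_add_of_polarBilin_eq {Q : QuadraticForm F V} (hQ : Q.polarBilin = B) (v w : V) :
    Q (v + w) = Q v + Q w + B v w := by
  rw [QuadraticMap.map_add Q v w, ← hQ, QuadraticMap.polarBilin_apply_apply]

theorem polarBilin_comp_eq {Q : QuadraticForm F W} (hQ : Q.polarBilin = C)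
    (Φ : B.IsometryEquiv C) : (Q.comp (Φ.toLinearEquiv : V →ₗ[F] W)).polarBilin = B := by
  ext v w
  rw [Q.polarBilin_comp, hQ]
  exact Φ.map_app w v

/-- The quadratic form `Q + B(w, ·)²`, which has the same polarization as `Q` in characteristic
two. -/
def shift (B : BilinForm F V) (Q : QuadraticForm F V) (w : V) : QuadraticForm F V :=
  Q + QuadraticMap.sq.comp (B w)

theorem shift_apply (Q : QuadraticForm F V) (w v : V) : shift B Q w v = Q v + B w v ^ 2 := by
  simp [shift, sq]

theorem shift_comp (Q : QuadraticForm F W) (Φ : B.IsometryEquiv C) (w : V) :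
    (shift C Q (Φ.toLinearEquiv w)).comp (Φ.toLinearEquiv : V →ₗ[F] W) =
      shift B (Q.comp (Φ.toLinearEquiv : V →ₗ[F] W)) w := by
  ext v
  simp only [QuadraticMap.comp_apply, shift_apply, LinearEquiv.coe_coe]
  rw [show C (Φ.toLinearEquiv w) (Φ.toLinearEquiv v) = B w v from Φ.map_app v w]

/-- A quadratic form is hyperbolic if it vanishes on a subspace of half the dimension. -/
def IsHyperbolic (Q : QuadraticForm F V) : Prop :=
  ∃ U : Submodule F V, (∀ u ∈ U, Q u = 0) ∧ 2 * finrank F U = finrank F V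

theorem IsHyperbolic.comp {Q : QuadraticForm F W} (hQ : IsHyperbolic Q) (Φ : V ≃ₗ[F] W) :
    IsHyperbolic (Q.comp (Φ : V →ₗ[F] W)) := by
  obtain ⟨U, hU, hdim⟩ := hQ
  refine ⟨U.map (Φ.symm : W →ₗ[F] V), ?_, by rw [LinearEquiv.finrank_map_eq, hdim, Φ.finrank_eq]⟩
  rintro _ ⟨u, hu, rfl⟩
  simpa using hU u hu

theorem le_orthogonal_of_forall_apply_eq_zero {Q : QuadraticForm F V} (hQ : Q.polarBilin = B)
    {U : Submodule F V} (hU : ∀ u ∈ U, Q u = 0) : U ≤ B.orthogonal U := by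
  intro v hv u hu
  simpa [hU, hu, hv, U.add_mem hu hv] using (apply_add_of_polarBilin_eq hQ u v).symm

variable [CharP F 2]

theorem apply_comm_of_isAlt (hB : B.IsAlt) (v w : V) : B v w = B w v := by
  rw [← hB.neg_eq, CharTwo.neg_eq]

theorem polarBilin_shift {Q : QuadraticForm F V} (hQ : Q.polarBilin = B) (w : V) :
    (shift B Q w).polarBilin = B := by
  ext u v
  rw [QuadraticMap.polarBilin_apply_apply, QuadraticMap.polar, shift_apply, shift_apply,
    shift_apply, apply_add_of_polarBilin_eq hQ, map_add, CharTwo.add_sq]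
  ring

theorem shift_shift (Q : QuadraticForm F V) (w w' : V) :
    shift B (shift B Q w) (w + w') = shift B Q w' := by
  ext v
  simp only [shift_apply, map_add, LinearMap.add_apply, CharTwo.add_sq]
  linear_combination B w v ^ 2 * CharTwo.two_eq_zero (R := F)

/-- The forms with given polarization `B` are the shifts of any one of them: the sum of two such
forms is the square of a linear functional. -/
theorem exists_eq_shift [PerfectRing F 2] [FiniteDimensional F V] (hB : B.Nondegenerate)
    {Q Q' : QuadraticForm F V} (hQ : Q.polarBilin = B) (hQ' : Q'.polarBilin = B) :
    ∃ w, Q' = shift B Q w := by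
  let f : V →ₗ[F] F :=
    { toFun v := (frobeniusEquiv F 2).symm (Q v + Q' v)
      map_add' v w := by
        rw [← map_add, apply_add_of_polarBilin_eq hQ, apply_add_of_polarBilin_eq hQ']
        congr 1
        linear_combination B v w * CharTwo.two_eq_zero (R := F)
      map_smul' c v := by
        rw [Q.map_smul, Q'.map_smul, smul_eq_mul, smul_eq_mul, ← mul_add, map_mul, ← sq,
          frobeniusEquiv_symm_pow]
        rfl }
  refine ⟨(B.toDual hB).symm f, QuadraticMap.ext fun v ↦ ?_⟩
  rw [shift_apply, BilinForm.apply_toDual_symm_apply]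
  change Q' v = Q v + (frobeniusEquiv F 2).symm (Q v + Q' v) ^ 2
  rw [frobeniusEquiv_symm_pow_p, CharTwo.add_cancel_left]

/-- Dye's theorem: if `Q ∘ g = Q + B(a, ·)²` then `a` is orthogonal to the fixed vectors of `g`,
so it is of the form `g⁻¹ w - w`, and the shift of `Q` by `w` is `g`-invariant. -/
theorem exists_invariant_quadraticForm [PerfectRing F 2] [FiniteDimensional F V]
    (hB : IsSymplectic B) {Q₀ : QuadraticForm F V} (hQ₀ : Q₀.polarBilin = B) {g : V ≃ₗ[F] V}
    (hg : g ∈ Sp B) :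
    ∃ Q : QuadraticForm F V, Q.polarBilin = B ∧ ∀ v, Q (g v) = Q v := by
  obtain ⟨a, ha⟩ := exists_eq_shift hB.nondegenerate hQ₀
    (polarBilin_comp_eq hQ₀ (isometryEquivOfMemSp hg))
  replace ha (v : V) : Q₀ (g v) = Q₀ v + B a v ^ 2 := by
    rw [← shift_apply, ← ha]
    rfl
  let R : Submodule F V := ((g.symm : V →ₗ[F] V) - LinearMap.id).range
  have hBR (w v : V) : B (g.symm w - w) v = B w (g v) - B w v := by
    rw [map_sub, LinearMap.sub_apply, apply_symm_left_of_mem_Sp hg]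
  have haR : a ∈ R := by
    rw [← BilinForm.orthogonal_orthogonal hB.nondegenerate hB.isRefl R]
    intro u hu
    have hgu : g u = u := sub_eq_zero.1 <| hB.nondegenerate.2 _ fun w ↦ by
      rw [map_sub, ← hBR]
      exact hu _ ⟨w, rfl⟩
    have : B a u ^ 2 = 0 := by simpa [hgu] using ha u
    exact hB.isRefl _ _ (pow_eq_zero_iff two_ne_zero |>.1 this)
  obtain ⟨w, rfl⟩ := haR
  refine ⟨shift B Q₀ w, polarBilin_shift hQ₀ w, fun v ↦ ?_⟩
  have hwv : B (((g.symm : V →ₗ[F] V) - LinearMap.id : V →ₗ[F] V) w) v = B w (g v) + B w v :=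
    (hBR w v).trans (CharTwo.sub_eq_add _ _)
  rw [shift_apply, shift_apply, ha, hwv, CharTwo.add_sq]
  linear_combination B w (g v) ^ 2 * CharTwo.two_eq_zero (R := F)

theorem exists_mem_Sp_shift_eq_comp (hB : B.IsAlt) {Q : QuadraticForm F V}
    (hQ : Q.polarBilin = B) {w : V} (hw : Q w ∈ (artinSchreier F).range) :
    ∃ g ∈ Sp B, shift B Q w = Q.comp (g : V →ₗ[F] V) := by
  obtain ⟨e, he⟩ : ∃ e, e ^ 2 * Q w + e = 1 := by
    by_cases h0 : Q w = 0
    · exact ⟨1, by simp [h0]⟩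
    · obtain ⟨z, hz⟩ := hw
      rw [artinSchreier_apply] at hz
      exact ⟨z / Q w, by field_simp; linear_combination hz⟩
  refine ⟨transvection hB w e, transvection_mem_Sp hB w e, QuadraticMap.ext fun v ↦ ?_⟩
  rw [QuadraticMap.comp_apply, LinearEquiv.coe_coe, transvection_apply,
    apply_add_of_polarBilin_eq hQ, Q.map_smul, map_smul, apply_comm_of_isAlt hB v w, shift_apply]
  simp only [smul_eq_mul]
  linear_combination -(B w v) ^ 2 * he

theorem exists_mem_Sp_shift_eq_shift_comp (hB : B.IsAlt) {Q : QuadraticForm F V}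
    (hQ : Q.polarBilin = B) {w w' : V} (h : (Q w : ArfGroup F) = Q w') :
    ∃ g ∈ Sp B, shift B Q w' = (shift B Q w).comp (g : V →ₗ[F] V) := by
  rw [← shift_shift Q w w']
  refine exists_mem_Sp_shift_eq_comp hB (polarBilin_shift hQ w) ?_
  have : shift B Q w (w + w') = Q w + Q w' + artinSchreier F (B w w') := by
    rw [shift_apply, apply_add_of_polarBilin_eq hQ, map_add, hB.self_eq_zero, zero_add,
      artinSchreier_apply]
    ring
  exact this ▸ add_mem (mk_arfGroup_eq_iff.1 h) ⟨_, rfl⟩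

theorem IsHyperbolic.exists_mem_Sp_eq_comp [PerfectRing F 2] [FiniteDimensional F V]
    (hB : IsSymplectic B) {Q Q' : QuadraticForm F V} (hQ : Q.polarBilin = B)
    (hQ' : Q'.polarBilin = B) (hyp : IsHyperbolic Q) (hyp' : IsHyperbolic Q') :
    ∃ g ∈ Sp B, Q' = Q.comp (g : V →ₗ[F] V) := by
  obtain ⟨U, hU, hUdim⟩ := hyp
  obtain ⟨Z, hZ, hZdim⟩ := hyp'
  have hZle := le_orthogonal_of_forall_apply_eq_zero hQ' hZ
  obtain ⟨Φ, hΦ⟩ := hB.exists_isometryEquiv_map_eq_of_isotropic hB rfl hZle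
    (le_orthogonal_of_forall_apply_eq_zero hQ hU) (by lia)
  have hQΦ (z : V) (hz : z ∈ Z) : Q (Φ.toLinearEquiv z) = 0 :=
    hU _ (hΦ ▸ Submodule.mem_map_of_mem hz)
  obtain ⟨w, rfl⟩ := exists_eq_shift hB.nondegenerate (polarBilin_comp_eq hQ Φ) hQ'
  have hZorth : Z = B.orthogonal Z := by
    refine Submodule.eq_of_le_of_finrank_eq hZle ?_
    rw [BilinForm.finrank_orthogonal hB.nondegenerate]
    lia
  have hw : w ∈ Z := by
    rw [hZorth]
    intro z hz
    have h := hZ z hz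
    rw [shift_apply, QuadraticMap.comp_apply, LinearEquiv.coe_coe, hQΦ z hz, zero_add] at h
    exact hB.isRefl _ _ (pow_eq_zero_iff two_ne_zero |>.1 h)
  obtain ⟨g, hg, hg'⟩ := exists_mem_Sp_shift_eq_comp hB.isAlt (polarBilin_comp_eq hQ Φ) (w := w)
    ⟨0, by simpa using (hQΦ w hw).symm⟩
  exact ⟨Φ.toLinearEquiv * g, mul_mem (toLinearEquiv_mem_Sp Φ) hg, hg'⟩

/-- The quadratic form `Q` polarizes to `B` and has Arf invariant `c`. The invariant is read off
from a presentation of `Q` as the shift of a hyperbolic form. -/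
def HasArfInvariant (B : BilinForm F V) (Q : QuadraticForm F V) (c : ArfGroup F) : Prop :=
  ∃ Q₀ w, Q₀.polarBilin = B ∧ IsHyperbolic Q₀ ∧ Q = shift B Q₀ w ∧ (Q₀ w : ArfGroup F) = c

theorem HasArfInvariant.polarBilin_eq {Q : QuadraticForm F V} {c : ArfGroup F}
    (hQ : HasArfInvariant B Q c) : Q.polarBilin = B := by
  obtain ⟨Q₀, w, h, -, rfl, -⟩ := hQ
  exact polarBilin_shift h w

theorem HasArfInvariant.comp {Q : QuadraticForm F W} {c : ArfGroup F}
    (hQ : HasArfInvariant C Q c) (Φ : B.IsometryEquiv C) :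
    HasArfInvariant B (Q.comp (Φ.toLinearEquiv : V →ₗ[F] W)) c := by
  obtain ⟨Q₀, w, h, hyp, rfl, rfl⟩ := hQ
  obtain ⟨w, rfl⟩ := Φ.toLinearEquiv.surjective w
  exact ⟨_, w, polarBilin_comp_eq h Φ, hyp.comp Φ.toLinearEquiv, shift_comp Q₀ Φ w, rfl⟩

theorem HasArfInvariant.exists_mem_Sp_eq_comp [PerfectRing F 2] [FiniteDimensional F V]
    (hB : IsSymplectic B) {Q Q' : QuadraticForm F V} {c : ArfGroup F}
    (hQ : HasArfInvariant B Q c) (hQ' : HasArfInvariant B Q' c) :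
    ∃ g ∈ Sp B, Q' = Q.comp (g : V →ₗ[F] V) := by
  obtain ⟨Q₀, w, h, hyp, rfl, hw⟩ := hQ
  obtain ⟨Q₀', w', h', hyp', rfl, hw'⟩ := hQ'
  obtain ⟨g, hg, rfl⟩ := hyp.exists_mem_Sp_eq_comp hB h h' hyp'
  obtain ⟨k, hk, hk'⟩ := exists_mem_Sp_shift_eq_shift_comp hB.isAlt h (hw.trans hw'.symm)
  refine ⟨k * g, mul_mem hk hg, ?_⟩
  calc shift B (Q₀.comp (g : V →ₗ[F] V)) w' = (shift B Q₀ (g w')).comp (g : V →ₗ[F] V) :=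
        (shift_comp Q₀ (isometryEquivOfMemSp hg) w').symm
    _ = (shift B Q₀ w).comp ((k * g : V ≃ₗ[F] V) : V →ₗ[F] V) :=
        congrArg (QuadraticMap.comp · (g : V →ₗ[F] V)) hk'

/-- The stabilizer of a quadratic form in the symplectic group. -/
def orthogonalSubgroup (B : BilinForm F V) (Q : QuadraticForm F V) : Subgroup (Sp B) where
  carrier := {g | ∀ v, Q (g.1 v) = Q v}
  mul_mem' {a b} ha hb v := (ha (b.1 v)).trans (hb v)
  one_mem' _ := rfl
  inv_mem' {a} ha v := by
    simpa [eq_comm] using ha (a.1.symm v)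

theorem exists_add_sq_mul_ne_zero [Finite F] (hF : 2 < Nat.card F) (a : F) :
    ∃ c : F, c + c ^ 2 * a ≠ 0 := by
  by_contra! h
  have ha : a = 1 := by linear_combination h 1 - CharTwo.two_eq_zero (R := F)
  have huniv : (Set.univ : Set F) ⊆ {0, 1} := fun c _ ↦ by
    have : c * (c - 1) = 0 := by
      linear_combination h c - c ^ 2 * ha - c * CharTwo.two_eq_zero (R := F)
    simpa [sub_eq_zero] using this
  have := Set.ncard_le_ncard huniv
  rw [Set.ncard_univ, Set.ncard_pair zero_ne_one] at this
  lia

theorem orthogonalSubgroup_ne_top [Finite F] (hF : 2 < Nat.card F) [Nontrivial V]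
    (hB : IsSymplectic B) {Q : QuadraticForm F V} (hQ : Q.polarBilin = B) :
    orthogonalSubgroup B Q ≠ ⊤ := by
  intro h
  obtain ⟨u, hu⟩ := exists_ne (0 : V)
  obtain ⟨v, hv⟩ := hB.exists_apply_eq_one hu
  obtain ⟨c, hc⟩ := exists_add_sq_mul_ne_zero hF (Q u)
  have hmem : (⟨_, transvection_mem_Sp hB.isAlt u c⟩ : Sp B) ∈ orthogonalSubgroup B Q :=
    h ▸ Subgroup.mem_top _
  have hfix : Q (transvection hB.isAlt u c v) = Q v := hmem v
  rw [transvection_apply, apply_add_of_polarBilin_eq hQ, Q.map_smul, map_smul,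
    apply_comm_of_isAlt hB.isAlt v u, hv, smul_eq_mul, smul_eq_mul] at hfix
  exact hc (by linear_combination hfix)

/-- `x` preserves a quadratic form of Arf invariant `c` which polarizes to `B`. -/
def FixesQuadraticForm (B : BilinForm F V) (c : ArfGroup F) (x : V ≃ₗ[F] V) : Prop :=
  ∃ Q, HasArfInvariant B Q c ∧ ∀ v, Q (x v) = Q v

theorem exists_fixesQuadraticForm [PerfectRing F 2] [FiniteDimensional F V]
    (hB : IsSymplectic B) {Q₀ : QuadraticForm F V} (hQ₀ : Q₀.polarBilin = B)
    (hyp : IsHyperbolic Q₀) {x : V ≃ₗ[F] V} (hx : x ∈ Sp B) :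
    ∃ c, FixesQuadraticForm B c x := by
  obtain ⟨Q, hQ, hQx⟩ := exists_invariant_quadraticForm hB hQ₀ hx
  obtain ⟨w, hw⟩ := exists_eq_shift hB.nondegenerate hQ₀ hQ
  exact ⟨_, Q, ⟨Q₀, w, hQ₀, hyp, hw, rfl⟩, hQx⟩

theorem not_invGen_of_fixesQuadraticForm [Finite F] (hF : 2 < Nat.card F) [Nontrivial V]
    [FiniteDimensional F V] (hB : IsSymplectic B) {c : ArfGroup F} {x y : Sp B}
    (hx : FixesQuadraticForm B c x) (hy : FixesQuadraticForm B c y) : ¬ InvGen x y := by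
  obtain ⟨Q, hQ, hQx⟩ := hx
  obtain ⟨Q', hQ', hQy⟩ := hy
  obtain ⟨g, hg, rfl⟩ := hQ.exists_mem_Sp_eq_comp hB hQ'
  refine not_invGen_of_mem (orthogonalSubgroup_ne_top hF hB hQ.polarBilin_eq) (g := ⟨g, hg⟩)
    hQx fun v ↦ ?_
  simpa using hQy (g.symm v)

end QuadraticForm

/-! ### Obstructions to invariable generation -/

section Obstructions

open scoped Pointwise
open MulAction (stabilizer)

theorem not_invGen_of_smul_eq {G α : Type*} [Group G] [MulAction G α] {x y g : G} {a b : α}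
    (ha : stabilizer G a ≠ ⊤) (hx : x • a = a) (hy : y • b = b) (hg : g • b = a) :
    ¬ InvGen x y :=
  not_invGen_of_mem ha hx (g := g) <| by
    rw [MulAction.mem_stabilizer_iff, mul_smul, mul_smul, inv_smul_eq_iff.2 hg.symm, hy, hg]

variable {F V : Type*} [Field F] [AddCommGroup V] [Module F V] {B : BilinForm F V}

theorem map_orthogonal {W : Type*} [AddCommGroup W] [Module F W] {C : BilinForm F W}
    (Φ : C.IsometryEquiv B) (U : Submodule F W) :
    (C.orthogonal U).map (Φ.toLinearEquiv : W →ₗ[F] V) =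
      B.orthogonal (U.map (Φ.toLinearEquiv : W →ₗ[F] V)) := by
  ext v
  obtain ⟨v, rfl⟩ := Φ.toLinearEquiv.surjective v
  rw [Submodule.mem_map_equiv, LinearEquiv.symm_apply_apply]
  simp only [BilinForm.mem_orthogonal_iff, Submodule.mem_map, forall_exists_index, and_imp,
    forall_apply_eq_imp_iff₂]
  exact forall₂_congr fun u _ ↦ by rw [← Φ.map_app]; rfl

theorem map_orthogonal_of_mem_Sp {g : V ≃ₗ[F] V} (hg : g ∈ Sp B) (U : Submodule F V) :
    (B.orthogonal U).map (g : V →ₗ[F] V) = B.orthogonal (U.map (g : V →ₗ[F] V)) :=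
  map_orthogonal (isometryEquivOfMemSp hg) U

theorem map_eq_of_mem_invtSubmodule [FiniteDimensional F V] {x : V ≃ₗ[F] V} {U : Submodule F V}
    (hU : U ∈ End.invtSubmodule (x : End F V)) : U.map (x : V →ₗ[F] V) = U :=
  Submodule.eq_of_le_of_finrank_eq ((End.mem_invtSubmodule_iff_map_le _).1 hU)
    (LinearEquiv.finrank_map_eq _ _)

theorem orthogonal_mem_invtSubmodule [FiniteDimensional F V] {x : V ≃ₗ[F] V} (hx : x ∈ Sp B)
    {U : Submodule F V} (hU : U ∈ End.invtSubmodule (x : End F V)) :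
    B.orthogonal U ∈ End.invtSubmodule (x : End F V) := by
  rw [End.mem_invtSubmodule_iff_map_le]
  exact (map_orthogonal_of_mem_Sp hx U).trans_le (by rw [map_eq_of_mem_invtSubmodule hU])

theorem smul_coe_eq_coe_map (g : Sp B) (U : Submodule F V) :
    g • (U : Set V) = (U.map (g.1 : V →ₗ[F] V) : Submodule F V) := rfl

theorem transvection_mem_of_stabilizer_eq_top (hB : B.IsAlt) {S : Set V}
    (hS : stabilizer (Sp B) S = ⊤) (u : V) {v : V} (hv : v ∈ S) : v + B u v • u ∈ S := by
  have hmem : (⟨_, transvection_mem_Sp hB u 1⟩ : Sp B) • S = S :=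
    MulAction.mem_stabilizer_iff.1 (hS ▸ Subgroup.mem_top _)
  rw [← hmem]
  exact ⟨v, hv, by simpa using transvection_apply hB u 1 v⟩

theorem stabilizer_coe_ne_top (hB : IsSymplectic B) {U : Submodule F V} (hbot : U ≠ ⊥)
    (htop : U ≠ ⊤) : stabilizer (Sp B) (U : Set V) ≠ ⊤ := by
  intro h
  obtain ⟨w, hw, hw0⟩ := Submodule.exists_mem_ne_zero_of_ne_bot hbot
  obtain ⟨u, hu, hwu⟩ : ∃ u, u ∉ U ∧ B u w ≠ 0 := by
    obtain ⟨f, hf⟩ := hB.exists_apply_eq_one hw0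
    obtain ⟨u₀, hu₀⟩ := SetLike.exists_not_mem_of_ne_top U htop rfl
    have hfw : B f w ≠ 0 := by simp [← hB.isAlt.neg_eq w f, hf]
    by_cases hfU : f ∈ U
    · by_cases hu₀w : B u₀ w = 0
      · exact ⟨u₀ + f, fun h ↦ hu₀ ((U.add_mem_iff_left hfU).1 h), by simpa [hu₀w] using hfw⟩
      · exact ⟨u₀, hu₀, hu₀w⟩
    · exact ⟨f, hfU, hfw⟩
  have hmem : w + B u w • u ∈ U := transvection_mem_of_stabilizer_eq_top hB.isAlt h u hw
  exact hu ((U.smul_mem_iff hwu).1 ((U.add_mem_iff_right hw).1 hmem))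

theorem stabilizer_union_orthogonal_ne_top (hB : IsSymplectic B) {U : Submodule F V}
    (hU : Disjoint U (B.orthogonal U)) (hbot : U ≠ ⊥) (hbot' : B.orthogonal U ≠ ⊥) :
    stabilizer (Sp B) ((U : Set V) ∪ B.orthogonal U) ≠ ⊤ := by
  intro h
  obtain ⟨a, ha, ha0⟩ := Submodule.exists_mem_ne_zero_of_ne_bot hbot
  obtain ⟨b, hb, hb0⟩ := Submodule.exists_mem_ne_zero_of_ne_bot hbot'
  obtain ⟨⟨v, hv⟩, hav⟩ := (hB.restrict hU).exists_apply_eq_one (e := ⟨a, ha⟩)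
    (by simpa [← Subtype.coe_inj] using ha0)
  replace hav : B a v = 1 := hav
  have hbv : B b v = 0 := hB.isRefl _ _ (hb v hv)
  have hmem : v + (a + b) ∈ (U : Set V) ∪ B.orthogonal U := by
    simpa [hav, hbv] using
      transvection_mem_of_stabilizer_eq_top hB.isAlt h (a + b) (Set.mem_union_left _ hv)
  rw [← add_assoc] at hmem
  rcases hmem with hmem | hmem
  · exact hb0 (Submodule.disjoint_def.1 hU b ((U.add_mem_iff_right (U.add_mem hv ha)).1 hmem) hb)
  · have hva := Submodule.disjoint_def.1 hU _ (U.add_mem hv ha)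
      (((B.orthogonal U).add_mem_iff_left hb).1 hmem)
    have : B a v = 0 := by
      rw [eq_neg_of_add_eq_zero_left hva, map_neg, hB.isAlt.self_eq_zero, neg_zero]
    exact one_ne_zero (hav.symm.trans this)

/-- `x` leaves invariant a nondegenerate subspace of dimension `2 * k`. -/
def HasNondegenerateInvariant (B : BilinForm F V) (k : ℕ) (x : V ≃ₗ[F] V) : Prop :=
  ∃ U ∈ End.invtSubmodule (x : End F V), Disjoint U (B.orthogonal U) ∧ finrank F U = 2 * k

/-- `x` leaves invariant a totally isotropic subspace of dimension `k`. -/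
def HasIsotropicInvariant (B : BilinForm F V) (k : ℕ) (x : V ≃ₗ[F] V) : Prop :=
  ∃ U ∈ End.invtSubmodule (x : End F V), U ≤ B.orthogonal U ∧ finrank F U = k

/-- `x` interchanges a nondegenerate subspace and its orthogonal complement. -/
def SwapsOrthogonal (B : BilinForm F V) (x : V ≃ₗ[F] V) : Prop :=
  ∃ U, Disjoint U (B.orthogonal U) ∧ U.map (x : V →ₗ[F] V) = B.orthogonal U

theorem ne_bot_and_ne_top_of_finrank [FiniteDimensional F V] {U : Submodule F V}
    (hpos : 0 < finrank F U) (hlt : finrank F U < finrank F V) : U ≠ ⊥ ∧ U ≠ ⊤ := by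
  constructor <;> rintro rfl
  · simp at hpos
  · simp at hlt

theorem not_invGen_of_hasIsotropicInvariant [FiniteDimensional F V] (hB : IsSymplectic B)
    {k : ℕ} (hk : 0 < k) (hkV : k < finrank F V) {x y : Sp B} (hx : HasIsotropicInvariant B k x)
    (hy : HasIsotropicInvariant B k y) : ¬ InvGen x y := by
  obtain ⟨U, hUx, hU, hUk⟩ := hx
  obtain ⟨Z, hZy, hZ, hZk⟩ := hy
  obtain ⟨hbot, htop⟩ := ne_bot_and_ne_top_of_finrank (hUk ▸ hk) (hUk ▸ hkV)
  obtain ⟨Φ, rfl⟩ :=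
    hB.exists_isometryEquiv_map_eq_of_isotropic hB rfl hZ hU (hZk.trans hUk.symm)
  exact not_invGen_of_smul_eq (stabilizer_coe_ne_top hB hbot htop)
    (congrArg SetLike.coe (map_eq_of_mem_invtSubmodule hUx))
    (congrArg SetLike.coe (map_eq_of_mem_invtSubmodule hZy))
    (smul_coe_eq_coe_map ⟨_, toLinearEquiv_mem_Sp Φ⟩ Z)

theorem not_invGen_of_hasNondegenerateInvariant [FiniteDimensional F V] (hB : IsSymplectic B)
    {k : ℕ} (hk : 0 < k) (hkV : 2 * k < finrank F V) {x y : Sp B}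
    (hx : HasNondegenerateInvariant B k x) (hy : HasNondegenerateInvariant B k y) :
    ¬ InvGen x y := by
  obtain ⟨U, hUx, hU, hUk⟩ := hx
  obtain ⟨Z, hZy, hZ, hZk⟩ := hy
  obtain ⟨hbot, htop⟩ := ne_bot_and_ne_top_of_finrank (U := U) (by lia) (by lia)
  obtain ⟨Φ, rfl, -⟩ :=
    hB.exists_isometryEquiv_map_eq_of_disjoint hB rfl hZ hU (hZk.trans hUk.symm)
  exact not_invGen_of_smul_eq (stabilizer_coe_ne_top hB hbot htop)
    (congrArg SetLike.coe (map_eq_of_mem_invtSubmodule hUx))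
    (congrArg SetLike.coe (map_eq_of_mem_invtSubmodule hZy))
    (smul_coe_eq_coe_map ⟨_, toLinearEquiv_mem_Sp Φ⟩ Z)

theorem finrank_eq_two_mul_of_map_eq_orthogonal [FiniteDimensional F V] (hB : IsSymplectic B)
    {x : V ≃ₗ[F] V} {U : Submodule F V} (hU : U.map (x : V →ₗ[F] V) = B.orthogonal U) :
    finrank F V = 2 * finrank F U := by
  have hdim := BilinForm.finrank_orthogonal hB.nondegenerate U
  rw [← hU, LinearEquiv.finrank_map_eq] at hdim
  have := U.finrank_le
  lia

theorem SwapsOrthogonal.exists_finrank_eq [FiniteDimensional F V] (hB : IsSymplectic B)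
    {x : V ≃ₗ[F] V} (hx : SwapsOrthogonal B x) : ∃ k, finrank F V = 4 * k := by
  obtain ⟨U, hU, hUx⟩ := hx
  obtain ⟨k, hk⟩ := (hB.restrict hU).even_finrank
  exact ⟨k, by rw [finrank_eq_two_mul_of_map_eq_orthogonal hB hUx]; lia⟩

theorem not_invGen_of_swapsOrthogonal [FiniteDimensional F V] (hB : IsSymplectic B) {k : ℕ}
    (hk : 0 < k) (hkV : finrank F V = 4 * k) {x y : Sp B} (hx : SwapsOrthogonal B x)
    (hy : HasNondegenerateInvariant B k y) : ¬ InvGen x y := by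
  obtain ⟨U, hU, hUx⟩ := hx
  obtain ⟨Z, hZy, hZ, hZk⟩ := hy
  have hdim := finrank_eq_two_mul_of_map_eq_orthogonal hB hUx
  have hUk : finrank F U = 2 * k := by lia
  have hbot := (ne_bot_and_ne_top_of_finrank (U := U) (by lia) (by lia)).1
  have hbot' : B.orthogonal U ≠ ⊥ := by
    rwa [← hUx, Ne, Submodule.map_eq_bot_iff]
  obtain ⟨Φ, hΦ, hΦ'⟩ :=
    hB.exists_isometryEquiv_map_eq_of_disjoint hB rfl hZ hU (hZk.trans hUk.symm)
  refine not_invGen_of_smul_eq (b := (Z : Set V) ∪ B.orthogonal Z)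
    (g := ⟨_, toLinearEquiv_mem_Sp Φ⟩) (stabilizer_union_orthogonal_ne_top hB hU hbot hbot')
    ?_ ?_ ?_ <;> rw [Set.smul_set_union, smul_coe_eq_coe_map, smul_coe_eq_coe_map]
  · rw [map_orthogonal_of_mem_Sp x.2, hUx,
      BilinForm.orthogonal_orthogonal hB.nondegenerate hB.isRefl, Set.union_comm]
  · rw [map_orthogonal_of_mem_Sp y.2, map_eq_of_mem_invtSubmodule hZy]
  · rw [hΦ, hΦ']

end Obstructions

/-! ### Extension field structures -/

section TracePairing

variable (F K : Type*) [Field F] [Field K] [Algebra F K]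

/-- The form `(a, b), (c, d) ↦ Tr (ad + bc)` on `K × K`: the symplectic plane over `K`, seen as a
symplectic space over `F`. -/
noncomputable def tracePairing : BilinForm F (K × K) :=
  (Algebra.traceForm F K).compl₁₂ (.fst F K K) (.snd F K K) +
    (Algebra.traceForm F K).compl₁₂ (.snd F K K) (.fst F K K)

theorem tracePairing_apply (p q : K × K) :
    tracePairing F K p q = Algebra.trace F K (p.1 * q.2 + p.2 * q.1) := by
  simp [tracePairing, Algebra.traceForm_apply]

theorem isSymplectic_tracePairing [CharP F 2] [FiniteDimensional F K] [Algebra.IsSeparable F K] :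
    IsSymplectic (tracePairing F K) := by
  have hchar : CharP K 2 := charP_of_injective_algebraMap (algebraMap F K).injective 2
  have halt : (tracePairing F K).IsAlt := fun p ↦ by
    rw [tracePairing_apply, mul_comm, CharTwo.add_self_eq_zero, map_zero]
  have htrace (a : K) (ha : ∀ c, Algebra.trace F K (a * c) = 0) : a = 0 :=
    (traceForm_nondegenerate F K).1 a ha
  refine ⟨halt, halt.isRefl.nondegenerate_iff_separatingLeft.2 fun p hp ↦
    Prod.ext (htrace _ fun c ↦ ?_) (htrace _ fun c ↦ ?_)⟩
  · simpa [tracePairing_apply] using hp (0, c)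
  · simpa [tracePairing_apply] using hp (c, 0)

end TracePairing

section FieldStructure

variable {F V K : Type*} [Field F] [AddCommGroup V] [Module F V] [Field K] [Algebra F K]
  {B : BilinForm F V} {ρ : K →ₐ[F] End F V}

/-- `x` is `K`-linear for some `K`-vector space structure on `V` by `B`-self-adjoint scalars. For
such a structure `B` is the trace of a `K`-bilinear alternating form, so `x` lies in the extension
field subgroup it defines. -/
def PreservesFieldStructure (K : Type*) [Field K] [Algebra F K] (B : BilinForm F V)
    (x : V ≃ₗ[F] V) : Prop :=
  ∃ ρ : K →ₐ[F] End F V, (∀ a, B.IsSelfAdjoint (ρ a)) ∧ ∀ a, Commute (ρ a) (x : End F V)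

theorem algHom_apply_injective (ρ : K →ₐ[F] End F V) {a : K} (ha : a ≠ 0) :
    Function.Injective (ρ a) := by
  refine Function.LeftInverse.injective (g := ρ a⁻¹) fun v ↦ ?_
  rw [← End.mul_apply, ← map_mul, inv_mul_cancel₀ ha, map_one, End.one_apply]

/-- The orbit map `a ↦ a • v` of the scalar action `ρ`. -/
def orbitMap (ρ : K →ₐ[F] End F V) (v : V) : K →ₗ[F] V :=
  LinearMap.applyₗ v ∘ₗ ρ.toLinearMap

theorem orbitMap_apply (ρ : K →ₐ[F] End F V) (v : V) (a : K) : orbitMap ρ v a = ρ a v := rfl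

theorem algHom_apply_orbitMap (ρ : K →ₐ[F] End F V) (v : V) (a c : K) :
    ρ a (orbitMap ρ v c) = orbitMap ρ v (a * c) := by
  rw [orbitMap_apply, orbitMap_apply, map_mul, End.mul_apply]

theorem orbitMap_injective (ρ : K →ₐ[F] End F V) {v : V} (hv : v ≠ 0) :
    Function.Injective (orbitMap ρ v) := by
  rw [← LinearMap.ker_eq_bot, LinearMap.ker_eq_bot']
  intro a h
  by_contra ha
  exact hv (algHom_apply_injective ρ ha (h.trans (map_zero _).symm))

theorem mem_range_orbitMap (ρ : K →ₐ[F] End F V) (v : V) :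
    v ∈ LinearMap.range (orbitMap ρ v) :=
  ⟨1, by rw [orbitMap_apply, map_one, End.one_apply]⟩

theorem finrank_range_orbitMap (ρ : K →ₐ[F] End F V) {v : V} (hv : v ≠ 0) :
    finrank F (LinearMap.range (orbitMap ρ v)) = finrank F K :=
  LinearMap.finrank_range_of_inj (orbitMap_injective ρ hv)

theorem apply_orbitMap_left (hρ : ∀ a, B.IsSelfAdjoint (ρ a)) (u v : V) (a c : K) :
    B (orbitMap ρ u a) (orbitMap ρ v c) = B (orbitMap ρ u (a * c)) v := by
  rw [orbitMap_apply ρ v, ← hρ, algHom_apply_orbitMap, mul_comm]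

theorem apply_orbitMap_self [CharP F 2] [PerfectField F] [FiniteDimensional F K] (hB : B.IsAlt)
    (hρ : ∀ a, B.IsSelfAdjoint (ρ a)) (u : V) (a c : K) :
    B (orbitMap ρ u a) (orbitMap ρ u c) = 0 := by
  have hchar : CharP K 2 := charP_of_injective_algebraMap (algebraMap F K).injective 2
  have hperf : PerfectField K := Algebra.IsAlgebraic.perfectField (K := F)
  obtain ⟨e, he⟩ := surjective_frobenius K 2 (a * c)
  rw [apply_orbitMap_left hρ, ← he, frobenius_def, sq, ← apply_orbitMap_left hρ, hB.self_eq_zero]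

theorem range_orbitMap_le_orthogonal [CharP F 2] [PerfectField F] [FiniteDimensional F K]
    (hB : B.IsAlt) (hρ : ∀ a, B.IsSelfAdjoint (ρ a)) (u : V) :
    LinearMap.range (orbitMap ρ u) ≤ B.orthogonal (LinearMap.range (orbitMap ρ u)) := by
  rintro _ ⟨a, rfl⟩ _ ⟨c, rfl⟩
  exact apply_orbitMap_self hB hρ u c a

theorem exists_apply_orbitMap_eq_trace [FiniteDimensional F V] (hB : B.Nondegenerate)
    (ρ : K →ₐ[F] End F V) {v : V} (hv : v ≠ 0) :
    ∃ w, ∀ a, B w (orbitMap ρ v a) = Algebra.trace F K a := by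
  obtain ⟨φ, hφ⟩ := LinearMap.dualMap_surjective_of_injective (orbitMap_injective ρ hv)
    (Algebra.trace F K)
  obtain ⟨w, rfl⟩ := (B.toDual hB).surjective φ
  exact ⟨w, LinearMap.congr_fun hφ⟩

theorem exists_isometryEquiv_tracePairing [CharP F 2] [PerfectField F] [FiniteDimensional F V]
    [FiniteDimensional F K] (hB : IsSymplectic B) (hdim : finrank F V = 2 * finrank F K)
    (hρ : ∀ a, B.IsSelfAdjoint (ρ a)) :
    ∃ Θ : (tracePairing F K).IsometryEquiv B, ∀ (c : K) p, Θ (c • p) = ρ c (Θ p) := by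
  have hV : Nontrivial V := nontrivial_of_finrank_pos (R := F) (by
    have := finrank_pos (R := F) (M := K)
    lia)
  obtain ⟨v, hv⟩ := exists_ne (0 : V)
  obtain ⟨w, hw⟩ := exists_apply_orbitMap_eq_trace hB.nondegenerate ρ hv
  let Θ : K × K →ₗ[F] V := (orbitMap ρ v).coprod (orbitMap ρ w)
  have hvw (a c : K) : B (orbitMap ρ v a) (orbitMap ρ w c) = Algebra.trace F K (a * c) := by
    rw [apply_orbitMap_left hρ, apply_comm_of_isAlt hB.isAlt, hw]
  have hΘ (p q : K × K) : B (Θ p) (Θ q) = tracePairing F K p q := by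
    simp only [Θ, LinearMap.coprod_apply, map_add, LinearMap.add_apply, tracePairing_apply,
      apply_orbitMap_self hB.isAlt hρ, hvw, apply_comm_of_isAlt hB.isAlt (orbitMap ρ w _)]
    rw [zero_add, add_zero, add_comm, mul_comm q.1]
  have hinj : Function.Injective Θ := (injective_iff_map_eq_zero Θ).2 fun p hp ↦
    (isSymplectic_tracePairing F K).nondegenerate.1 p fun q ↦ by
      rw [← hΘ, hp, map_zero, LinearMap.zero_apply]
  refine ⟨⟨.ofInjectiveOfFinrankEq Θ hinj (by rw [finrank_prod, hdim, two_mul]), hΘ⟩, fun c p ↦ ?_⟩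
  change Θ (c • p) = ρ c (Θ p)
  simp only [Θ, LinearMap.coprod_apply, map_add, algHom_apply_orbitMap, Prod.smul_fst,
    Prod.smul_snd, smul_eq_mul]

/-- The elements of `Sp B` that are `K`-linear for the scalar action `ρ`. -/
def fieldCentralizer (B : BilinForm F V) (ρ : K →ₐ[F] End F V) : Subgroup (Sp B) where
  carrier := {g | ∀ a v, ρ a (g.1 v) = g.1 (ρ a v)}
  mul_mem' {g h} hg hh a v := (hg a (h.1 v)).trans (congrArg g.1 (hh a v))
  one_mem' _ _ := rfl
  inv_mem' {g} hg a v := g.1.injective <| by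
    change g.1 (ρ a (g.1.symm v)) = g.1 (g.1.symm (ρ a v))
    rw [← hg, g.1.apply_symm_apply, g.1.apply_symm_apply]

theorem fieldCentralizer_ne_top [Nontrivial V] (hB : IsSymplectic B) (hK : 2 ≤ finrank F K)
    (ρ : K →ₐ[F] End F V) : fieldCentralizer B ρ ≠ ⊤ := by
  intro htop
  obtain ⟨u, hu⟩ := exists_ne (0 : V)
  obtain ⟨v, huv⟩ := hB.exists_apply_eq_one hu
  have hmem (a : K) : ρ a (transvection hB.isAlt u 1 v) = transvection hB.isAlt u 1 (ρ a v) :=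
    (htop ▸ Subgroup.mem_top _ :
      (⟨_, transvection_mem_Sp hB.isAlt u 1⟩ : Sp B) ∈ fieldCentralizer B ρ) a v
  have hscalar (a : K) : B u (ρ a v) • (1 : K) = a := by
    apply orbitMap_injective ρ hu
    rw [map_smul, orbitMap_apply, orbitMap_apply, map_one, End.one_apply]
    simpa [transvection_apply, huv] using (hmem a).symm
  exact absurd (finrank_le_one (1 : K) fun a ↦ ⟨_, hscalar a⟩) (by lia)

theorem not_invGen_of_preservesFieldStructure [CharP F 2] [PerfectField F] [FiniteDimensional F V]
    (hB : IsSymplectic B) (hdim : finrank F V = 2 * finrank F K) (hK : 2 ≤ finrank F K)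
    {x y : Sp B} (hx : PreservesFieldStructure K B x) (hy : PreservesFieldStructure K B y) :
    ¬ InvGen x y := by
  have hV : Nontrivial V := nontrivial_of_finrank_pos (R := F) (by lia)
  have hKfin : FiniteDimensional F K := FiniteDimensional.of_finrank_pos (by lia)
  obtain ⟨ρ, hρ, hρx⟩ := hx
  obtain ⟨σ, hσ, hσy⟩ := hy
  obtain ⟨Θ, hΘ⟩ := exists_isometryEquiv_tracePairing hB hdim hρ
  obtain ⟨Θ', hΘ'⟩ := exists_isometryEquiv_tracePairing hB hdim hσ
  let Ψ : B.IsometryEquiv B := Θ'.symm.trans Θ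
  have hΨ (a : K) (v : V) : ρ a (Ψ v) = Ψ (σ a v) := by
    obtain ⟨p, rfl⟩ := Θ'.toLinearEquiv.surjective v
    change ρ a (Θ (Θ'.toLinearEquiv.symm (Θ'.toLinearEquiv p))) =
      Θ (Θ'.toLinearEquiv.symm (σ a (Θ' p)))
    rw [← hΘ', LinearEquiv.symm_apply_apply, ← hΘ]
    exact congrArg Θ (Θ'.toLinearEquiv.symm_apply_apply _).symm
  refine not_invGen_of_mem (H := fieldCentralizer B ρ) (g := ⟨_, toLinearEquiv_mem_Sp Ψ⟩)
    (fieldCentralizer_ne_top hB hK ρ) (fun a v ↦ LinearMap.congr_fun (hρx a).eq v) fun a v ↦ ?_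
  obtain ⟨v, rfl⟩ := Ψ.toLinearEquiv.surjective v
  change ρ a (Ψ (y.1 (Ψ.toLinearEquiv.symm (Ψ v)))) = Ψ (y.1 (Ψ.toLinearEquiv.symm (ρ a (Ψ v))))
  have hsymm (w : V) : Ψ.toLinearEquiv.symm (Ψ w) = w := Ψ.toLinearEquiv.symm_apply_apply w
  rw [hsymm, hΨ, hΨ, hsymm]
  exact congrArg Ψ (LinearMap.congr_fun (hσy a).eq v)

end FieldStructure

section FieldStructureOfMinimal

variable {F V : Type*} [Field F] [AddCommGroup V] [Module F V] {B : BilinForm F V}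

theorem two_mul_finrank_le_of_le_orthogonal [FiniteDimensional F V] (hB : B.Nondegenerate)
    {U : Submodule F V} (hU : U ≤ B.orthogonal U) : 2 * finrank F U ≤ finrank F V := by
  have hdim := Submodule.finrank_mono hU
  rw [BilinForm.finrank_orthogonal hB] at hdim
  have := U.finrank_le
  lia

theorem ker_mem_invtSubmodule_of_commute {T x : End F V} (h : Commute T x) :
    LinearMap.ker T ∈ End.invtSubmodule x := fun v hv ↦ by
  rw [LinearMap.mem_ker] at hv
  rw [Submodule.mem_comap, LinearMap.mem_ker, ← End.mul_apply, h.eq, End.mul_apply, hv, map_zero]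

theorem symm_mem_invtSubmodule [FiniteDimensional F V] {x : V ≃ₗ[F] V} {U : Submodule F V}
    (hU : U ∈ End.invtSubmodule (x : End F V)) : U ∈ End.invtSubmodule (x.symm : End F V) :=
  End.mem_invtSubmodule_symm_iff_le_map.2 (map_eq_of_mem_invtSubmodule hU).ge

theorem isSelfAdjoint_of_mem_adjoin {T Q : End F V} (hT : B.IsSelfAdjoint T)
    (hQ : Q ∈ Algebra.adjoin F {T}) : B.IsSelfAdjoint Q := by
  induction hQ using Algebra.adjoin_induction with
  | mem S hS => rwa [Set.mem_singleton_iff.1 hS]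
  | algebraMap c => exact fun v w ↦ by simp
  | add P Q _ _ hP hQ => exact LinearMap.IsAdjointPair.add hP hQ
  | mul P Q hPT hQT hP hQ =>
    have hPQ : Commute P Q :=
      Algebra.commute_of_mem_adjoin_singleton_of_commute hQT
        (Algebra.commute_of_mem_adjoin_self hPT).symm
    have := LinearMap.IsAdjointPair.mul hP hQ
    rwa [← hPQ.eq] at this

theorem mem_invtSubmodule_of_mem_adjoin {T Q : End F V} {U : Submodule F V}
    (hT : U ∈ End.invtSubmodule T) (hQ : Q ∈ Algebra.adjoin F {T}) :
    U ∈ End.invtSubmodule Q := by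
  induction hQ using Algebra.adjoin_induction with
  | mem S hS => rwa [Set.mem_singleton_iff.1 hS]
  | algebraMap c => exact fun v hv ↦ U.smul_mem c hv
  | add P Q _ _ hP hQ => exact fun v hv ↦ U.add_mem (hP hv) (hQ hv)
  | mul _ _ _ _ hP hQ => exact fun v hv ↦ hP (hQ hv)

theorem exists_field_algHom_range_eq_adjoin.{u, v} {F : Type u} {V : Type v} [Field F]
    [AddCommGroup V] [Module F V] [FiniteDimensional F V] [Nontrivial V] {T : End F V}
    (hT : ∀ Q ∈ Algebra.adjoin F {T}, Q = 0 ∨ Function.Injective Q) :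
    ∃ (L : Type v) (_ : Field L) (_ : Algebra F L) (_ : FiniteDimensional F L)
      (ρ : L →ₐ[F] End F V), ρ.range = Algebra.adjoin F {T} := by
  let A := Algebra.adjoin F {T}
  have : IsMulCommutative A := Algebra.isMulCommutative_adjoin F (by simp)
  have : NoZeroDivisors A := ⟨fun {P Q} hPQ ↦ by
    refine (hT P P.2).imp Subtype.ext fun hP ↦ Subtype.ext (LinearMap.ext fun v ↦ hP ?_)
    exact (LinearMap.congr_fun (congrArg Subtype.val hPQ) v).trans (map_zero P.1).symm⟩
  have : IsDomain A := NoZeroDivisors.to_isDomain A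
  have : IsArtinianRing A := IsArtinianRing.of_finite F A
  let : Field A := (IsArtinianRing.isField_of_isDomain A).toField
  exact ⟨A, inferInstance, inferInstance, inferInstance, A.val, A.range_val⟩

theorem PreservesFieldStructure.of_finrank_eq [Finite F] {K L : Type*} [Field K] [Algebra F K]
    [Field L] [Algebra F L] [FiniteDimensional F L] (hKL : finrank F K = finrank F L)
    {x : V ≃ₗ[F] V} (hx : PreservesFieldStructure L B x) : PreservesFieldStructure K B x := by
  have : Finite L := Module.finite_of_finite F
  obtain ⟨f⟩ := FiniteField.nonempty_algHom_of_finrank_dvd (F := F) (dvd_of_eq hKL)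
  obtain ⟨ρ, hρ, hρx⟩ := hx
  exact ⟨ρ.comp f, fun a ↦ hρ _, fun a ↦ hρx _⟩

/-- The endomorphism `x + x⁻¹`, which commutes with `x` and is self-adjoint when `x` is an
isometry. -/
def addSymm (x : V ≃ₗ[F] V) : End F V := x + x.symm

theorem addSymm_apply (x : V ≃ₗ[F] V) (v : V) : addSymm x v = x v + x.symm v := rfl

theorem commute_addSymm (x : V ≃ₗ[F] V) : Commute (addSymm x) (x : End F V) :=
  LinearMap.ext fun v ↦ by simp [addSymm_apply]

theorem isSelfAdjoint_addSymm {x : V ≃ₗ[F] V} (hx : x ∈ Sp B) :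
    B.IsSelfAdjoint (addSymm x) := fun v w ↦ by
  rw [addSymm_apply, addSymm_apply, map_add, map_add, LinearMap.add_apply, apply_left_of_mem_Sp hx,
    apply_symm_left_of_mem_Sp hx, add_comm]

theorem range_orbitMap_sup_range_orbitMap_mem_invtSubmodule {L : Type*} [Field L] [Algebra F L]
    {ρ : L →ₐ[F] End F V} {x : V ≃ₗ[F] V} (hρx : ∀ a, Commute (ρ a) (x : End F V)) {v : V}
    {a b : L} (h : x (x v) = ρ a v + ρ b (x v)) :
    LinearMap.range (orbitMap ρ v) ⊔ LinearMap.range (orbitMap ρ (x v)) ∈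
      End.invtSubmodule (x : End F V) := by
  have hx (c : L) (u : V) : x (orbitMap ρ u c) = ρ c (x u) :=
    (LinearMap.congr_fun (hρx c).eq u).symm
  rw [End.mem_invtSubmodule, sup_le_iff]
  constructor
  · rintro _ ⟨c, rfl⟩
    exact Submodule.mem_sup_right ⟨c, (hx c v).symm⟩
  · rintro _ ⟨c, rfl⟩
    rw [Submodule.mem_comap, LinearEquiv.coe_coe, hx, h, map_add]
    exact Submodule.add_mem_sup ⟨c * a, by simp [orbitMap_apply]⟩ ⟨c * b, by simp [orbitMap_apply]⟩

theorem preservesFieldStructure_of_irreducible [Finite F] [CharP F 2] [FiniteDimensional F V]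
    [Nontrivial V] (hB : IsSymplectic B) {x : V ≃ₗ[F] V} (hx : x ∈ Sp B)
    (hirr : ∀ U ∈ End.invtSubmodule (x : End F V), U = ⊥ ∨ U = ⊤)
    {K : Type*} [Field K] [Algebra F K] (hdim : finrank F V = 2 * finrank F K) :
    PreservesFieldStructure K B x := by
  have hcomm {Q : End F V} (hQ : Q ∈ Algebra.adjoin F {addSymm x}) : Commute Q (x : End F V) :=
    (Algebra.commute_of_mem_adjoin_singleton_of_commute hQ (commute_addSymm x).symm).symm
  obtain ⟨L, _, _, _, ρ, hρ⟩ := exists_field_algHom_range_eq_adjoin fun Q hQ ↦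
    (hirr _ (ker_mem_invtSubmodule_of_commute (hcomm hQ))).symm.imp
      LinearMap.ker_eq_top.1 LinearMap.ker_eq_bot.1
  have hmem (a : L) : ρ a ∈ Algebra.adjoin F {addSymm x} := hρ ▸ ρ.mem_range_self a
  have hadj (a : L) := isSelfAdjoint_of_mem_adjoin (isSelfAdjoint_addSymm hx) (hmem a)
  obtain ⟨θ, hθ⟩ : ∃ θ, ρ θ = addSymm x := by
    rw [← AlgHom.mem_range, hρ]
    exact Algebra.self_mem_adjoin_singleton F _
  obtain ⟨v, hv⟩ := exists_ne (0 : V)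
  have htop : LinearMap.range (orbitMap ρ v) ⊔ LinearMap.range (orbitMap ρ (x v)) = ⊤ := by
    have hxx : x (x v) = ρ (-1) v + ρ θ (x v) := by simp [hθ, addSymm_apply]
    refine (hirr _ (range_orbitMap_sup_range_orbitMap_mem_invtSubmodule (fun a ↦ hcomm (hmem a))
      hxx)).resolve_left fun h ↦ hv ((Submodule.mem_bot F).1 ?_)
    rw [← h]
    exact Submodule.mem_sup_left (mem_range_orbitMap ρ v)
  have hle := Submodule.finrank_add_le_finrank_add_finrank (LinearMap.range (orbitMap ρ v))
    (LinearMap.range (orbitMap ρ (x v)))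
  have hge := two_mul_finrank_le_of_le_orthogonal hB.nondegenerate
    (range_orbitMap_le_orthogonal hB.isAlt hadj v)
  rw [finrank_range_orbitMap ρ hv] at hle hge
  rw [htop, finrank_top, finrank_range_orbitMap ρ (by simpa using hv)] at hle
  exact .of_finrank_eq (by lia) ⟨ρ, hadj, fun a ↦ hcomm (hmem a)⟩

theorem eq_zero_of_mem_orthogonal_of_isCompl (hB : B.Nondegenerate) {U U' : Submodule F V}
    (hc : IsCompl U U') {v : V} (hv : v ∈ B.orthogonal U) (hv' : v ∈ B.orthogonal U') : v = 0 :=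
  hB.2 v fun w ↦ by
    obtain ⟨u, u', hu, hu', rfl⟩ := Submodule.codisjoint_iff_exists_add_eq.1 hc.codisjoint w
    rw [map_add, LinearMap.add_apply, hv u hu, hv' u' hu', add_zero]

theorem eq_zero_or_injective_of_isSelfAdjoint [FiniteDimensional F V] (hB : IsSymplectic B)
    {U U' : Submodule F V} (hc : IsCompl U U') (hU' : U' ≤ B.orthogonal U')
    {Q : End F V} (hQ : B.IsSelfAdjoint Q)
    (hQU : U ∈ End.invtSubmodule Q) (hQU' : U' ∈ End.invtSubmodule Q)
    (h : U ≤ LinearMap.ker Q ∨ Disjoint U (LinearMap.ker Q)) : Q = 0 ∨ Function.Injective Q := by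
  refine h.imp (fun hker ↦ LinearMap.ext fun v ↦ ?_) fun hdisj ↦ LinearMap.ker_eq_bot.1 ?_
  · obtain ⟨u, u', hu, hu', rfl⟩ := Submodule.codisjoint_iff_exists_add_eq.1 hc.codisjoint v
    rw [map_add, LinearMap.mem_ker.1 (hker hu), zero_add]
    refine eq_zero_of_mem_orthogonal_of_isCompl hB.nondegenerate hc (fun w hw ↦ ?_) (hU' (hQU' hu'))
    change B w (Q u') = 0
    rw [← hQ, LinearMap.mem_ker.1 (hker hw), map_zero, LinearMap.zero_apply]
  · have hmap : U.map Q = U := by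
      refine Submodule.eq_of_le_of_finrank_eq ((End.mem_invtSubmodule_iff_map_le _).1 hQU) ?_
      rw [← LinearMap.range_domRestrict, LinearMap.finrank_range_of_inj]
      exact LinearMap.injective_domRestrict_iff.2 hdisj
    refine LinearMap.ker_eq_bot'.2 fun v hv ↦ ?_
    obtain ⟨u, u', hu, hu', rfl⟩ := Submodule.codisjoint_iff_exists_add_eq.1 hc.codisjoint v
    have hQu : Q u = 0 := Submodule.disjoint_def.1 hc.disjoint _ (hQU hu) <| by
      rw [eq_neg_of_add_eq_zero_left ((map_add Q u u').symm.trans hv)]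
      exact U'.neg_mem (hQU' hu')
    have hu0 : u = 0 := Submodule.disjoint_def.1 hdisj u hu hQu
    subst hu0
    rw [zero_add] at hv ⊢
    refine eq_zero_of_mem_orthogonal_of_isCompl hB.nondegenerate hc (fun w hw ↦ ?_) (hU' hu')
    obtain ⟨w, -, rfl⟩ := hmap ▸ hw
    change B (Q w) u' = 0
    rw [hQ, hv, map_zero]

theorem exists_isSelfAdjoint_of_isCompl [FiniteDimensional F V] {x : V ≃ₗ[F] V} (hx : x ∈ Sp B)
    {U U' : Submodule F V} (hUx : U ∈ End.invtSubmodule (x : End F V))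
    (hUx' : U' ∈ End.invtSubmodule (x : End F V)) (hc : IsCompl U U')
    (hU : U ≤ B.orthogonal U) (hU' : U' ≤ B.orthogonal U') :
    ∃ T : End F V, B.IsSelfAdjoint T ∧ Commute T (x : End F V) ∧ (∀ u ∈ U, T u = x u) ∧
      ∀ u ∈ U', T u = x.symm u := by
  let T : End F V :=
    LinearMap.ofIsCompl hc ((x : End F V) ∘ₗ U.subtype) ((x.symm : End F V) ∘ₗ U'.subtype)
  have hT (u : V) (hu : u ∈ U) : T u = x u := LinearMap.ofIsCompl_apply_left hc ⟨u, hu⟩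
  have hT' (u : V) (hu : u ∈ U') : T u = x.symm u := LinearMap.ofIsCompl_apply_right hc ⟨u, hu⟩
  have hxU (u : V) (hu : u ∈ U) : x u ∈ U := hUx hu
  have hxU' (u : V) (hu : u ∈ U') : x u ∈ U' := hUx' hu
  have hsU' (u : V) (hu : u ∈ U') : x.symm u ∈ U' := symm_mem_invtSubmodule hUx' hu
  refine ⟨T, fun v w ↦ ?_, LinearMap.ext fun v ↦ ?_, hT, hT'⟩
  · obtain ⟨u, u', hu, hu', rfl⟩ := Submodule.codisjoint_iff_exists_add_eq.1 hc.codisjoint v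
    obtain ⟨w, w', hw, hw', rfl⟩ := Submodule.codisjoint_iff_exists_add_eq.1 hc.codisjoint w
    simp only [map_add, LinearMap.add_apply, hT u hu, hT w hw, hT' u' hu', hT' w' hw']
    rw [hU hw _ (hxU u hu), hU (hxU w hw) u hu, hU' hw' _ (hsU' u' hu'),
      hU' (hsU' w' hw') u' hu', apply_left_of_mem_Sp hx, apply_symm_left_of_mem_Sp hx]
  · obtain ⟨u, u', hu, hu', rfl⟩ := Submodule.codisjoint_iff_exists_add_eq.1 hc.codisjoint v
    simp [hT u hu, hT' u' hu', hT _ (hxU u hu), hT' _ (hxU' u' hu')]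

/-- The scalar structure is generated by the endomorphism acting as `x` on `U` and as `x⁻¹` on
`U'`; it is self-adjoint because `U` and `U'` are dual to each other under `B`. -/
theorem preservesFieldStructure_of_isCompl [Finite F] [CharP F 2] [FiniteDimensional F V]
    (hB : IsSymplectic B) {x : V ≃ₗ[F] V} (hx : x ∈ Sp B) {U U' : Submodule F V}
    (hUx : U ∈ End.invtSubmodule (x : End F V)) (hUx' : U' ∈ End.invtSubmodule (x : End F V))
    (hc : IsCompl U U') (hU : U ≤ B.orthogonal U) (hU' : U' ≤ B.orthogonal U') (hbot : U ≠ ⊥)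
    (hmin : ∀ Z ∈ End.invtSubmodule (x : End F V), Z ≤ U → Z = ⊥ ∨ Z = U)
    {K : Type*} [Field K] [Algebra F K] (hdim : finrank F U = finrank F K) :
    PreservesFieldStructure K B x := by
  obtain ⟨v, hv, hv0⟩ := Submodule.exists_mem_ne_zero_of_ne_bot hbot
  have hV : Nontrivial V := ⟨v, 0, hv0⟩
  obtain ⟨T, hT, hTx, hTU, hTU'⟩ := exists_isSelfAdjoint_of_isCompl hx hUx hUx' hc hU hU'
  have hUT : U ∈ End.invtSubmodule T := fun u hu ↦ by
    rw [Submodule.mem_comap, hTU u hu]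
    exact hUx hu
  have hUT' : U' ∈ End.invtSubmodule T := fun u hu ↦ by
    rw [Submodule.mem_comap, hTU' u hu]
    exact symm_mem_invtSubmodule hUx' hu
  have hcomm {Q : End F V} (hQ : Q ∈ Algebra.adjoin F {T}) : Commute Q (x : End F V) :=
    (Algebra.commute_of_mem_adjoin_singleton_of_commute hQ hTx.symm).symm
  obtain ⟨L, _, _, _, ρ, hρ⟩ := exists_field_algHom_range_eq_adjoin fun Q hQ ↦
    eq_zero_or_injective_of_isSelfAdjoint hB hc hU' (isSelfAdjoint_of_mem_adjoin hT hQ)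
      (mem_invtSubmodule_of_mem_adjoin hUT hQ) (mem_invtSubmodule_of_mem_adjoin hUT' hQ)
      ((hmin _ (End.invtSubmodule.inf_mem hUx (ker_mem_invtSubmodule_of_commute (hcomm hQ)))
        inf_le_left).symm.imp inf_eq_left.1 disjoint_iff.2)
  have hmem (a : L) : ρ a ∈ Algebra.adjoin F {T} := hρ ▸ ρ.mem_range_self a
  obtain ⟨θ, hθ⟩ : ∃ θ, ρ θ = T := by
    rw [← AlgHom.mem_range, hρ]
    exact Algebra.self_mem_adjoin_singleton F _
  have hrange : LinearMap.range (orbitMap ρ v) = U := by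
    refine (hmin _ ?_ ?_).resolve_left fun h ↦ hv0 <| (Submodule.mem_bot F).1 <|
      h ▸ mem_range_orbitMap ρ v
    · rintro _ ⟨a, rfl⟩
      refine ⟨a * θ, ?_⟩
      rw [← algHom_apply_orbitMap, orbitMap_apply, hθ, hTU v hv]
      exact LinearMap.congr_fun (hcomm (hmem a)).eq v
    · rintro _ ⟨a, rfl⟩
      exact mem_invtSubmodule_of_mem_adjoin hUT (hmem a) hv
  exact .of_finrank_eq (by rw [← hdim, ← hrange, finrank_range_orbitMap ρ hv0])
    ⟨ρ, fun a ↦ isSelfAdjoint_of_mem_adjoin hT (hmem a), fun a ↦ hcomm (hmem a)⟩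

end FieldStructureOfMinimal

section Lagrangian

variable {F V : Type*} [Field F] [AddCommGroup V] [Module F V] {B : BilinForm F V}

theorem exists_mem_adjoin_sq_eq [CharP F 2] [PerfectRing F 2] {A : Type*} [Ring A] [Algebra F A]
    {X Q : A} (hQ : Q ∈ Algebra.adjoin F {X ^ 2}) : ∃ P ∈ Algebra.adjoin F {X}, P ^ 2 = Q := by
  have hcomm {P Q : A} (hP : P ∈ Algebra.adjoin F {X}) (hQ : Q ∈ Algebra.adjoin F {X}) :
      Commute P Q :=
    Algebra.commute_of_mem_adjoin_singleton_of_commute hQ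
      (Algebra.commute_of_mem_adjoin_self hP).symm
  induction hQ using Algebra.adjoin_induction with
  | mem S hS => exact ⟨X, Algebra.self_mem_adjoin_singleton F X, hS.symm⟩
  | algebraMap c =>
    obtain ⟨d, rfl⟩ := surjective_frobenius F 2 c
    exact ⟨algebraMap F A d, Subalgebra.algebraMap_mem _ d, by rw [frobenius_def, map_pow]⟩
  | add _ _ _ _ hP hQ =>
    obtain ⟨P, hP, rfl⟩ := hP
    obtain ⟨Q, hQ, rfl⟩ := hQ
    refine ⟨P + Q, add_mem hP hQ, ?_⟩
    have h2 : (2 : A) = 0 := by rw [← map_ofNat (algebraMap F A) 2, CharTwo.two_eq_zero, map_zero]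
    rw [(hcomm hP hQ).add_sq, h2, zero_mul, zero_mul, add_zero]
  | mul _ _ _ _ hP hQ =>
    obtain ⟨P, hP, rfl⟩ := hP
    obtain ⟨Q, hQ, rfl⟩ := hQ
    exact ⟨P * Q, mul_mem hP hQ, (hcomm hP hQ).mul_pow 2⟩

theorem range_mem_invtSubmodule_of_commute {T x : End F V} (h : Commute T x) :
    LinearMap.range T ∈ End.invtSubmodule x := by
  rintro _ ⟨v, rfl⟩
  exact ⟨x v, LinearMap.congr_fun h.eq v⟩

theorem eq_zero_or_injective_of_mem_adjoin_sq [CharP F 2] [PerfectRing F 2]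
    [FiniteDimensional F V] {X : End F V} {U : Submodule F V} (hbot : U ≠ ⊥)
    (hU : ∀ Z ∈ End.invtSubmodule X, Z = ⊥ ∨ Z = U ∨ Z = ⊤) {Q : End F V}
    (hQ : Q ∈ Algebra.adjoin F {X ^ 2}) : Q = 0 ∨ Function.Injective Q := by
  obtain ⟨P, hP, rfl⟩ := exists_mem_adjoin_sq_eq hQ
  have hPX : Commute P X := (Algebra.commute_of_mem_adjoin_self hP).symm
  rcases hU _ (ker_mem_invtSubmodule_of_commute hPX) with h | h | h
  · have hinj := LinearMap.ker_eq_bot.1 h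
    exact .inr (pow_two P ▸ hinj.comp hinj)
  · have hle : LinearMap.range P ≤ U := by
      rcases hU _ (range_mem_invtSubmodule_of_commute hPX) with h' | h' | h'
      · exact h' ▸ bot_le
      · exact h'.le
      · exact absurd (h.symm.trans (LinearMap.ker_eq_bot_iff_range_eq_top.2 h')) hbot
    refine .inl <| LinearMap.ext fun v ↦ ?_
    rw [pow_two, End.mul_apply, LinearMap.mem_ker.1 (h.ge (hle (P.mem_range_self v))),
      LinearMap.zero_apply]
  · exact .inl (by rw [LinearMap.ker_eq_top.1 h, zero_pow two_ne_zero])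

theorem apply_ne_of_invtSubmodule [FiniteDimensional F V] {x : V ≃ₗ[F] V} {U : Submodule F V}
    (hdim : 2 ≤ finrank F U) (hU : ∀ Z ∈ End.invtSubmodule (x : End F V), Z = ⊥ ∨ Z = U ∨ Z = ⊤)
    {v : V} (hv : v ≠ 0) : x v ≠ v := fun hxv ↦ by
  have hspan : F ∙ v ∈ End.invtSubmodule (x : End F V) := by
    rw [End.mem_invtSubmodule, Submodule.span_singleton_le_iff_mem]
    exact Submodule.mem_span_singleton.2 ⟨1, by simp [hxv]⟩
  have h1 := finrank_span_singleton (K := F) hv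
  have := U.finrank_le
  rcases hU _ hspan with h | h | h <;> rw [h] at h1
  · simp at h1
  · lia
  · rw [finrank_top] at h1
    lia

theorem exists_ne_zero_apply_eq [CharP F 2] [Nontrivial V] {x : V ≃ₗ[F] V}
    (hx : ∀ v, x (x v) = v) : ∃ v ≠ 0, x v = v := by
  obtain ⟨v, hv⟩ := exists_ne (0 : V)
  by_cases h : x v + v = 0
  · have hneg : -v = v := by rw [← neg_one_smul F, CharTwo.neg_eq, one_smul]
    exact ⟨v, hv, (eq_neg_of_add_eq_zero_left h).trans hneg⟩
  · exact ⟨x v + v, h, by rw [map_add, hx, add_comm]⟩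

theorem swapsOrthogonal_of_map_le_orthogonal (hB : IsSymplectic B) {x : V ≃ₗ[F] V}
    {W : Submodule F V} (hle : W.map (x : V →ₗ[F] V) ≤ B.orthogonal W)
    (htop : W ⊔ W.map (x : V →ₗ[F] V) = ⊤) : SwapsOrthogonal B x := by
  have hdisj : Disjoint W (B.orthogonal W) := Submodule.disjoint_def.2 fun u hu hu' ↦
    hB.nondegenerate.2 u fun v ↦ by
      obtain ⟨a, ha, b, hb, rfl⟩ := Submodule.mem_sup.1 (htop ▸ Submodule.mem_top (x := v))
      rw [map_add, LinearMap.add_apply, hu' a ha, hB.isRefl _ _ (hle hb u hu), add_zero]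
  refine ⟨W, hdisj, eq_of_le_of_inf_le_of_sup_le (z := W) hle ?_ ?_⟩
  · rw [hdisj.symm.eq_bot]
    exact bot_le
  · rw [sup_comm _ W, sup_comm _ W, htop]
    exact le_top

theorem mem_range_of_forall_apply_eq_zero {M N : Type*} [AddCommGroup M] [Module F M]
    [AddCommGroup N] [Module F N] [FiniteDimensional F N] (β : M →ₗ[F] Dual F N) (α : Dual F N)
    (h : ∀ n, (∀ m, β m n = 0) → α n = 0) : α ∈ LinearMap.range β := by
  rw [← Subspace.dualCoannihilator_dualAnnihilator_eq (W := LinearMap.range β),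
    Submodule.mem_dualAnnihilator]
  exact fun n hn ↦ h n fun m ↦ (Submodule.mem_dualCoannihilator _).1 hn _ ⟨m, rfl⟩

theorem apply_self_eq_zero_of_isSelfAdjoint (hB : B.IsAlt) {T E E' : End F V}
    (hT : B.IsSelfAdjoint T) (hTE : Commute T E) (hE : B.IsAdjointPair B E E') (hadd : E + E' = 1)
    (v : V) : B v (T v) = 0 :=
  calc B v (T v) = B v ((E + E') (T v)) := by rw [hadd, End.one_apply]
    _ = B v (E (T v)) + B v (E' (T v)) := by rw [LinearMap.add_apply, map_add]
    _ = B (T v) (E v) + B (E v) (T v) := by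
      rw [← End.mul_apply, ← hTE.eq, End.mul_apply, hT, hE]
    _ = 0 := by rw [← hB.neg_eq (E v), neg_add_cancel]

variable {L : Type*} [Field L] [Algebra F L] {ρ : L →ₐ[F] End F V} {x : V ≃ₗ[F] V} {θ : L}

theorem ne_zero_of_algHom_eq_sq [Nontrivial V] (hθ : ρ θ = (x : End F V) ^ 2) : θ ≠ 0 := by
  rintro rfl
  obtain ⟨v, hv⟩ := exists_ne (0 : V)
  have hxx : x (x v) = 0 := by
    rw [map_zero] at hθ
    exact (LinearMap.congr_fun hθ v).symm
  exact hv (by simpa using hxx)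

theorem algHom_inv_apply_eq_symm_symm [Nontrivial V] (hθ : ρ θ = (x : End F V) ^ 2) (v : V) :
    ρ θ⁻¹ v = x.symm (x.symm v) :=
  calc ρ θ⁻¹ v = ρ θ⁻¹ (ρ θ (x.symm (x.symm v))) := by simp [hθ, pow_two]
    _ = x.symm (x.symm v) := by
      rw [← End.mul_apply, ← map_mul, inv_mul_cancel₀ (ne_zero_of_algHom_eq_sq hθ), map_one,
        End.one_apply]

theorem add_inv_ne_zero_of_algHom_eq_sq [CharP F 2] [Nontrivial V]
    (hθ : ρ θ = (x : End F V) ^ 2) (hx : ∀ v ≠ 0, x v ≠ v) : θ + θ⁻¹ ≠ 0 := fun h ↦ by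
  have : CharP L 2 := charP_of_injective_algebraMap (algebraMap F L).injective 2
  have hone : θ = 1 := by
    simpa [CharTwo.neg_eq, ne_zero_of_algHom_eq_sq hθ] using
      self_eq_inv₀.1 (CharTwo.add_eq_zero.1 h)
  obtain ⟨v, hv, hxv⟩ := exists_ne_zero_apply_eq (x := x) fun v ↦ by
    rw [hone, map_one] at hθ
    exact (LinearMap.congr_fun hθ v).symm
  exact hx v hv hxv

theorem isAdjointPair_algHom_inv [Nontrivial V] (hx : x ∈ Sp B) (hθ : ρ θ = (x : End F V) ^ 2) :
    B.IsAdjointPair B (ρ θ) (ρ θ⁻¹) := fun v w ↦ by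
  rw [algHom_inv_apply_eq_symm_symm hθ, hθ]
  exact (apply_left_of_mem_Sp hx _ _).trans (apply_left_of_mem_Sp hx _ _)

theorem exists_isAdjointPair [Nontrivial V] (hx : x ∈ Sp B) (hθ : ρ θ = (x : End F V) ^ 2)
    {Q : End F V} (hQ : Q ∈ Algebra.adjoin F {(x : End F V) ^ 2}) :
    ∃ a, B.IsAdjointPair B Q (ρ a) := by
  induction hQ using Algebra.adjoin_induction with
  | mem S hS => exact ⟨θ⁻¹, Set.mem_singleton_iff.1 hS ▸ hθ ▸ isAdjointPair_algHom_inv hx hθ⟩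
  | algebraMap c => exact ⟨algebraMap F L c, fun v w ↦ by simp⟩
  | add _ _ _ _ hP hQ =>
    obtain ⟨a, ha⟩ := hP
    obtain ⟨b, hb⟩ := hQ
    exact ⟨a + b, map_add ρ a b ▸ ha.add hb⟩
  | mul _ _ _ _ hP hQ =>
    obtain ⟨a, ha⟩ := hP
    obtain ⟨b, hb⟩ := hQ
    exact ⟨b * a, map_mul ρ b a ▸ ha.mul hb⟩

theorem isSelfAdjoint_algHom_inv {c : L} (hc : c ≠ 0) (h : B.IsSelfAdjoint (ρ c)) :
    B.IsSelfAdjoint (ρ c⁻¹) := fun v w ↦ by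
  have hinv (u : V) : ρ c (ρ c⁻¹ u) = u := by
    rw [← End.mul_apply, ← map_mul, mul_inv_cancel₀ hc, map_one, End.one_apply]
  rw [← hinv w, ← h, hinv, hinv]

theorem exists_isAdjointPair_add_eq_one [Nontrivial V] (hx : x ∈ Sp B)
    (hθ : ρ θ = (x : End F V) ^ 2) (hne : θ + θ⁻¹ ≠ 0) :
    ∃ e e' : L, e + e' = 1 ∧ B.IsAdjointPair B (ρ e) (ρ e') := by
  have hadj : B.IsSelfAdjoint (ρ (θ + θ⁻¹)) := fun v w ↦ by
    simp only [map_add, LinearMap.add_apply, algHom_inv_apply_eq_symm_symm hθ]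
    rw [isAdjointPair_algHom_inv hx hθ, algHom_inv_apply_eq_symm_symm hθ, hθ, add_comm]
    congr 1
    exact (apply_symm_left_of_mem_Sp hx _ _).trans (apply_symm_left_of_mem_Sp hx _ _)
  refine ⟨θ * (θ + θ⁻¹)⁻¹, (θ + θ⁻¹)⁻¹ * θ⁻¹, ?_, ?_⟩
  · rw [mul_comm _ θ⁻¹, ← add_mul, mul_inv_cancel₀ hne]
  · rw [map_mul, map_mul]
    exact (isAdjointPair_algHom_inv hx hθ).mul (isSelfAdjoint_algHom_inv hne hadj)

theorem apply_add_apply_eq_zero_of_forall_mem [Nontrivial V] [FiniteDimensional F V]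
    (hB : IsSymplectic B) (hx : x ∈ Sp B)
    (hθ : ρ θ = (x : End F V) ^ 2) (hρx : ∀ a, Commute (ρ a) (x : End F V)) {U : Submodule F V}
    (hUx : U ∈ End.invtSubmodule (x : End F V)) (hUρ : ∀ a, U ∈ End.invtSubmodule (ρ a))
    (hUo : B.orthogonal U = U) {k k' : L} (hk : B.IsAdjointPair B (ρ k) (ρ k')) {v : V}
    (hv : v ∉ U) (h : ∀ w ∈ U, B v (ρ k (x w)) + B (ρ k (x v)) w = 0) (u w : V) :
    B u (ρ k (x w)) + B (ρ k (x u)) w = 0 := by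
  have hρx' (a : L) (u : V) : x (ρ a u) = ρ a (x u) := (LinearMap.congr_fun (hρx a).eq u).symm
  have key (u w : V) : B u (x (ρ (k + k' * θ⁻¹) w)) = B u (ρ k (x w)) + B (ρ k (x u)) w := by
    rw [hρx', map_add, map_mul, LinearMap.add_apply, End.mul_apply,
      algHom_inv_apply_eq_symm_symm hθ, x.symm_apply_apply, map_add, hk,
      apply_left_of_mem_Sp hx, ← x.symm_apply_apply (ρ k' (x.symm w)), hρx', x.apply_symm_apply]
  suffices hzero : k + k' * θ⁻¹ = 0 by
    rw [← key, hzero, map_zero, LinearMap.zero_apply, map_zero, map_zero]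
  by_contra hne
  refine hv (hUo ▸ fun u hu ↦ ?_)
  obtain ⟨w, hw, rfl⟩ : ∃ w ∈ U, x (ρ (k + k' * θ⁻¹) w) = u := by
    refine ⟨ρ (k + k' * θ⁻¹)⁻¹ (x.symm u), hUρ _ (symm_mem_invtSubmodule hUx hu), ?_⟩
    rw [← End.mul_apply, ← map_mul, mul_inv_cancel₀ hne, map_one, End.one_apply,
      x.apply_symm_apply]
  exact hB.isRefl _ _ ((key v w).trans (h w hw))

theorem exists_notMem_forall_apply_eq_zero [CharP F 2] [Nontrivial V] [FiniteDimensional F V]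
    [FiniteDimensional F L] (hB : IsSymplectic B) (hx : x ∈ Sp B)
    (hθ : ρ θ = (x : End F V) ^ 2) (hρx : ∀ a, Commute (ρ a) (x : End F V))
    (hadj : ∀ a, ∃ a', B.IsAdjointPair B (ρ a) (ρ a')) (hne : θ + θ⁻¹ ≠ 0) {U : Submodule F V}
    (htop : U ≠ ⊤) (hUx : U ∈ End.invtSubmodule (x : End F V))
    (hUρ : ∀ a, U ∈ End.invtSubmodule (ρ a)) (hUo : B.orthogonal U = U) :
    ∃ v ∉ U, ∀ k, B v (ρ k (x v)) = 0 := by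
  obtain ⟨v, -, hv⟩ := SetLike.exists_of_lt htop.lt_top
  let β : U →ₗ[F] Dual F L := LinearMap.mk₂ F
    (fun w k ↦ B v (ρ k (x w)) + B w (ρ k (x v)))
    (fun a b k ↦ by simp only [Submodule.coe_add, map_add, LinearMap.add_apply]; abel)
    (fun c a k ↦ by simp only [Submodule.coe_smul, map_smul, LinearMap.smul_apply, smul_add])
    (fun a k l ↦ by simp only [map_add, LinearMap.add_apply]; abel)
    (fun c a k ↦ by simp only [map_smul, LinearMap.smul_apply, smul_add])
  obtain ⟨⟨w, hw⟩, hβ⟩ : -(B v).comp (orbitMap ρ (x v)) ∈ LinearMap.range β := by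
    refine mem_range_of_forall_apply_eq_zero _ _ fun k hk ↦ neg_eq_zero.2 ?_
    obtain ⟨k', hk'⟩ := hadj k
    obtain ⟨e, e', he, hee⟩ := exists_isAdjointPair_add_eq_one hx hθ hne
    have hskew := apply_add_apply_eq_zero_of_forall_mem hB hx hθ hρx hUx hUρ hUo hk' hv
      fun w hw ↦ by rw [apply_comm_of_isAlt hB.isAlt (ρ k (x v))]; exact hk ⟨w, hw⟩
    have hself : B.IsSelfAdjoint (ρ k * (x : End F V)) := fun u w ↦
      (CharTwo.add_eq_zero.1 (hskew u w)).symm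
    exact apply_self_eq_zero_of_isSelfAdjoint hB.isAlt hself
      (((Commute.all k e).map ρ).mul_left (hρx e).symm) hee (by rw [← map_add, he, map_one]) v
  refine ⟨v + w, fun h ↦ hv (by simpa using U.sub_mem h hw), fun k ↦ ?_⟩
  have hww : B w (ρ k (x w)) = 0 := (hUo.ge (hUρ k (hUx hw))) w hw
  have hβk : B v (ρ k (x w)) + B w (ρ k (x v)) = -B v (ρ k (x v)) := LinearMap.congr_fun hβ k
  calc B (v + w) (ρ k (x (v + w)))
      = B v (ρ k (x v)) + (B v (ρ k (x w)) + B w (ρ k (x v))) + B w (ρ k (x w)) := by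
        simp only [map_add, LinearMap.add_apply]; abel
    _ = 0 := by rw [hβk, hww, add_neg_cancel, add_zero]

theorem swapsOrthogonal_of_forall_apply_eq_zero (hB : IsSymplectic B)
    (hρx : ∀ a, Commute (ρ a) (x : End F V))
    (hadj : ∀ a, ∃ a', B.IsAdjointPair B (ρ a) (ρ a')) {v : V} (hv : ∀ k, B v (ρ k (x v)) = 0)
    (htop : LinearMap.range (orbitMap ρ v) ⊔ LinearMap.range (orbitMap ρ (x v)) = ⊤) :
    SwapsOrthogonal B x := by
  have hmap : (LinearMap.range (orbitMap ρ v)).map (x : V →ₗ[F] V) =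
      LinearMap.range (orbitMap ρ (x v)) := by
    rw [← LinearMap.range_comp]
    congr 1
    ext a
    exact (LinearMap.congr_fun (hρx a).eq v).symm
  refine swapsOrthogonal_of_map_le_orthogonal hB (W := LinearMap.range (orbitMap ρ v)) ?_
    (hmap.symm ▸ htop)
  rw [hmap]
  rintro _ ⟨b, rfl⟩ _ ⟨a, rfl⟩
  obtain ⟨a', ha'⟩ := hadj a
  change B (ρ a v) (ρ b (x v)) = 0
  rw [ha', ← End.mul_apply, ← map_mul, hv]

theorem swapsOrthogonal_of_invtSubmodule [CharP F 2] [PerfectRing F 2] [FiniteDimensional F V]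
    (hB : IsSymplectic B) (hx : x ∈ Sp B) {U : Submodule F V} (hdim : 2 ≤ finrank F U)
    (htop : U ≠ ⊤) (hUo : B.orthogonal U = U) (hUx : U ∈ End.invtSubmodule (x : End F V))
    (hU : ∀ Z ∈ End.invtSubmodule (x : End F V), Z = ⊥ ∨ Z = U ∨ Z = ⊤) :
    SwapsOrthogonal B x := by
  have hbot : U ≠ ⊥ := by rintro rfl; simp at hdim
  have hV : Nontrivial V := (Submodule.nontrivial_iff F).1 ⟨U, ⊤, htop⟩
  obtain ⟨L, _, _, _, ρ, hρ⟩ := exists_field_algHom_range_eq_adjoin fun Q hQ ↦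
    eq_zero_or_injective_of_mem_adjoin_sq hbot hU hQ
  have hmem (a : L) : ρ a ∈ Algebra.adjoin F {(x : End F V) ^ 2} := hρ ▸ ρ.mem_range_self a
  have hρx (a : L) : Commute (ρ a) (x : End F V) :=
    (Algebra.commute_of_mem_adjoin_singleton_of_commute (hmem a) (Commute.self_pow _ 2)).symm
  obtain ⟨θ, hθ⟩ : ∃ θ, ρ θ = (x : End F V) ^ 2 := by
    rw [← AlgHom.mem_range, hρ]
    exact Algebra.self_mem_adjoin_singleton F _
  have hUρ (a : L) : U ∈ End.invtSubmodule (ρ a) :=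
    mem_invtSubmodule_of_mem_adjoin (fun u hu ↦ hUx (x := x u) (hUx hu)) (hmem a)
  have hadj (a : L) := exists_isAdjointPair hx hθ (hmem a)
  have hne := add_inv_ne_zero_of_algHom_eq_sq hθ fun v ↦ apply_ne_of_invtSubmodule hdim hU
  obtain ⟨v, hv, hBv⟩ := exists_notMem_forall_apply_eq_zero hB hx hθ hρx hadj hne htop hUx hUρ hUo
  refine swapsOrthogonal_of_forall_apply_eq_zero hB hρx hadj hBv ?_
  have hxx : x (x v) = ρ θ v + ρ 0 (x v) := by rw [hθ, map_zero]; exact (add_zero _).symm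
  have hinv := range_orbitMap_sup_range_orbitMap_mem_invtSubmodule hρx hxx
  have hle : v ∈ LinearMap.range (orbitMap ρ v) ⊔ LinearMap.range (orbitMap ρ (x v)) :=
    Submodule.mem_sup_left (mem_range_orbitMap ρ v)
  rcases hU _ hinv with h | h | h
  · rw [h, Submodule.mem_bot] at hle
    exact absurd (hle ▸ U.zero_mem) hv
  · exact absurd (h ▸ hle) hv
  · exact h

end Lagrangian

section MinimalInvariant

variable {F V : Type*} [Field F] [AddCommGroup V] [Module F V] {B : BilinForm F V}
  {x : V ≃ₗ[F] V} {U : Submodule F V}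

/-- `U` is minimal among the nonzero `x`-invariant subspaces. -/
def IsMinimalInvariant (x : V ≃ₗ[F] V) (U : Submodule F V) : Prop :=
  Minimal (fun Z ↦ Z ∈ End.invtSubmodule (x : End F V) ∧ Z ≠ ⊥) U

theorem exists_isMinimalInvariant_le [FiniteDimensional F V]
    (hU : U ∈ End.invtSubmodule (x : End F V)) (hbot : U ≠ ⊥) :
    ∃ Z ≤ U, IsMinimalInvariant x Z :=
  exists_minimal_le_of_wellFoundedLT _ U ⟨hU, hbot⟩

theorem IsMinimalInvariant.eq_bot_or_eq (hU : IsMinimalInvariant x U) :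
    ∀ Z ∈ End.invtSubmodule (x : End F V), Z ≤ U → Z = ⊥ ∨ Z = U := fun _ hZ hle ↦
  or_iff_not_imp_left.2 fun hbot ↦ hU.eq_of_le ⟨hZ, hbot⟩ hle

theorem IsMinimalInvariant.disjoint {Z : Submodule F V} (hU : IsMinimalInvariant x U)
    (hZ : IsMinimalInvariant x Z) (hne : U ≠ Z) : Disjoint U Z :=
  have hinf := End.invtSubmodule.inf_mem hU.prop.1 hZ.prop.1
  disjoint_iff.2 <| by_contra fun hbot ↦ hne <|
    ((hU.eq_bot_or_eq _ hinf inf_le_left).resolve_left hbot).symm.trans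
      ((hZ.eq_bot_or_eq _ hinf inf_le_right).resolve_left hbot)

variable [FiniteDimensional F V]

theorem IsMinimalInvariant.finrank_pos (hU : IsMinimalInvariant x U) : 0 < finrank F U :=
  Nat.pos_of_ne_zero (mt Submodule.finrank_eq_zero.1 hU.prop.2)

theorem IsMinimalInvariant.exists_hasNondegenerateInvariant_or_le_orthogonal
    (hB : IsSymplectic B) (hx : x ∈ Sp B) (hU : IsMinimalInvariant x U) (htop : U ≠ ⊤) :
    (∃ k, 0 < k ∧ 2 * k < finrank F V ∧ HasNondegenerateInvariant B k x) ∨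
      U ≤ B.orthogonal U := by
  have hinf := End.invtSubmodule.inf_mem hU.prop.1 (orthogonal_mem_invtSubmodule hx hU.prop.1)
  refine (hU.eq_bot_or_eq _ hinf inf_le_left).imp (fun h ↦ ?_) inf_eq_left.1
  have hdisj := disjoint_iff.2 h
  obtain ⟨k, hk⟩ := (hB.restrict hdisj).even_finrank
  have hpos := hU.finrank_pos
  have hlt := Submodule.finrank_lt htop
  exact ⟨k, by lia, by lia, U, hU.prop.1, hdisj, by lia⟩

theorem preservesFieldStructure_of_isMinimalInvariant_top [Finite F] [CharP F 2]
    (hB : IsSymplectic B) (hx : x ∈ Sp B) (htop : IsMinimalInvariant x ⊤) {K : Type*} [Field K]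
    [Algebra F K] (hdim : finrank F V = 2 * finrank F K) : PreservesFieldStructure K B x :=
  have : Nontrivial V := (Submodule.nontrivial_iff F).1 ⟨⊤, ⊥, htop.prop.2⟩
  preservesFieldStructure_of_irreducible hB hx (fun Z hZ ↦ htop.eq_bot_or_eq Z hZ le_top) hdim

theorem hasInvariant_or_preservesFieldStructure [Finite F] [CharP F 2] [Nontrivial V]
    (hB : IsSymplectic B) (hx : x ∈ Sp B) {K : Type*} [Field K] [Algebra F K]
    (hdim : finrank F V = 2 * finrank F K) :
    (∃ k, 0 < k ∧ k < finrank F K ∧ HasNondegenerateInvariant B k x) ∨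
      (∃ k, 0 < k ∧ k ≤ finrank F K ∧ HasIsotropicInvariant B k x) ∨
      PreservesFieldStructure K B x := by
  obtain ⟨U, -, hU⟩ := exists_isMinimalInvariant_le (End.invtSubmodule.top_mem (x : End F V))
    top_ne_bot
  obtain rfl | htop := eq_or_ne U ⊤
  · exact .inr (.inr (preservesFieldStructure_of_isMinimalInvariant_top hB hx hU hdim))
  rcases hU.exists_hasNondegenerateInvariant_or_le_orthogonal hB hx htop with
    ⟨k, hk, hlt, h⟩ | hUo
  · exact .inl ⟨k, hk, by lia, h⟩
  · have := two_mul_finrank_le_of_le_orthogonal hB.nondegenerate hUo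
    exact .inr (.inl ⟨finrank F U, hU.finrank_pos, by lia, U, hU.prop.1, hUo, rfl⟩)

theorem IsMinimalInvariant.eq_bot_or_eq_or_eq_top (hB : IsSymplectic B) (hx : x ∈ Sp B)
    (hU : IsMinimalInvariant x U) (hUo : B.orthogonal U = U)
    (huniq : ∀ Z, IsMinimalInvariant x Z → Z = U) :
    ∀ Z ∈ End.invtSubmodule (x : End F V), Z = ⊥ ∨ Z = U ∨ Z = ⊤ := by
  intro Z hZ
  refine or_iff_not_imp_left.2 fun hbot ↦ ?_
  obtain ⟨U', hle, hU'⟩ := exists_isMinimalInvariant_le hZ hbot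
  rw [huniq U' hU'] at hle
  have hZo : B.orthogonal Z ≤ U := (BilinForm.orthogonal_le hle).trans hUo.le
  have hZZ := BilinForm.orthogonal_orthogonal hB.nondegenerate hB.isRefl Z
  rcases hU.eq_bot_or_eq _ (orthogonal_mem_invtSubmodule hx hZ) hZo with h | h
  · right
    rw [← hZZ, h, eq_top_iff]
    exact fun v _ u hu ↦ by simp [(Submodule.mem_bot F).1 hu]
  · left
    rw [← hZZ, h, hUo]

theorem preservesFieldStructure_or_hasInvariant_or_swapsOrthogonal [Finite F] [CharP F 2]
    (hB : IsSymplectic B) (hx : x ∈ Sp B) {K : Type*} [Field K]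
    [Algebra F K] (hK : 2 ≤ finrank F K) (hdim : finrank F V = 2 * finrank F K) :
    PreservesFieldStructure K B x ∨ (∃ k, 0 < k ∧ k < finrank F K ∧
      (HasNondegenerateInvariant B k x ∨ HasIsotropicInvariant B k x)) ∨ SwapsOrthogonal B x := by
  have hV : Nontrivial V := nontrivial_of_finrank_pos (R := F) (by lia)
  by_contra! ⟨hfield, hinv, hswap⟩
  have hlag (U) (hU : IsMinimalInvariant x U) : U ≤ B.orthogonal U ∧ finrank F U = finrank F K := by
    obtain rfl | htop := eq_or_ne U ⊤
    · exact absurd (preservesFieldStructure_of_isMinimalInvariant_top hB hx hU hdim) hfield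
    rcases hU.exists_hasNondegenerateInvariant_or_le_orthogonal hB hx htop with
      ⟨k, hk, hlt, h⟩ | hUo
    · exact absurd h (hinv k hk (by lia)).1
    · have := two_mul_finrank_le_of_le_orthogonal hB.nondegenerate hUo
      have := fun h ↦ (hinv _ hU.finrank_pos h).2 ⟨U, hU.prop.1, hUo, rfl⟩
      exact ⟨hUo, by lia⟩
  obtain ⟨U, -, hU⟩ := exists_isMinimalInvariant_le (End.invtSubmodule.top_mem (x : End F V))
    top_ne_bot
  obtain ⟨hUle, hUK⟩ := hlag U hU
  have hUo : B.orthogonal U = U := by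
    refine (Submodule.eq_of_le_of_finrank_eq hUle ?_).symm
    rw [BilinForm.finrank_orthogonal hB.nondegenerate]
    lia
  refine hswap (swapsOrthogonal_of_invtSubmodule hB hx (by lia) ?_ hUo hU.prop.1
    (hU.eq_bot_or_eq_or_eq_top hB hx hUo fun Z hZ ↦ by_contra fun hne ↦ hfield ?_))
  · rintro rfl
    rw [finrank_top] at hUK
    lia
  · obtain ⟨hZle, hZK⟩ := hlag Z hZ
    have hc : IsCompl U Z :=
      (Submodule.isCompl_iff_disjoint U Z (by lia)).2 (hU.disjoint hZ (Ne.symm hne))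
    exact preservesFieldStructure_of_isCompl hB hx hU.prop.1 hZ.prop.1 hc hUle hZle hU.prop.2
      hU.eq_bot_or_eq hUK

end MinimalInvariant

/-! ### Orthogonal sums -/

section PiForm

variable {F ι : Type*} [Field F] [Fintype ι] {M : ι → Type*} [∀ i, AddCommGroup (M i)]
  [∀ i, Module F (M i)]

/-- The orthogonal direct sum of a family of bilinear forms. -/
def piForm (B : ∀ i, BilinForm F (M i)) : BilinForm F (∀ i, M i) :=
  ∑ i, (B i).compl₁₂ (.proj i) (.proj i)

variable {B : ∀ i, BilinForm F (M i)}

theorem piForm_apply (v w : ∀ i, M i) : piForm B v w = ∑ i, B i (v i) (w i) := by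
  simp [piForm]

theorem piForm_apply_single [DecidableEq ι] (v : ∀ i, M i) (i : ι) (a : M i) :
    piForm B v (Pi.single i a) = B i (v i) a := by
  rw [piForm_apply, Fintype.sum_eq_single i fun j hj ↦ by rw [Pi.single_eq_of_ne hj, map_zero],
    Pi.single_eq_same]

theorem isSymplectic_piForm (hB : ∀ i, IsSymplectic (B i)) : IsSymplectic (piForm B) := by
  classical
  have halt : (piForm B).IsAlt := fun v ↦ by
    rw [piForm_apply, Finset.sum_eq_zero fun i _ ↦ (hB i).isAlt (v i)]
  refine ⟨halt, halt.isRefl.nondegenerate_iff_separatingLeft.2 fun v hv ↦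
    funext fun i ↦ (hB i).nondegenerate.1 _ fun a ↦ ?_⟩
  rw [← piForm_apply_single, hv]

theorem finrank_submodule_pi [∀ i, FiniteDimensional F (M i)] (U : ∀ i, Submodule F (M i)) :
    finrank F (Submodule.pi Set.univ U) = ∑ i, finrank F (U i) := by
  let f : (∀ i, U i) →ₗ[F] ∀ i, M i := .pi fun i ↦ (U i).subtype ∘ₗ .proj i
  have hf : Function.Injective f := fun u v huv ↦ funext fun i ↦ Subtype.ext (congrFun huv i)
  have hrange : f.range = Submodule.pi Set.univ U := by
    ext v
    exact ⟨by rintro ⟨u, rfl⟩ i -; exact (u i).2, fun hv ↦ ⟨fun i ↦ ⟨v i, hv i trivial⟩, rfl⟩⟩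
  rw [← hrange, LinearMap.finrank_range_of_inj hf, finrank_pi_fintype]

theorem disjoint_pi_orthogonal_piForm {U : ∀ i, Submodule F (M i)}
    (hU : ∀ i, Disjoint (U i) ((B i).orthogonal (U i))) :
    Disjoint (Submodule.pi Set.univ U) ((piForm B).orthogonal (Submodule.pi Set.univ U)) := by
  classical
  refine Submodule.disjoint_def.2 fun v hv horth ↦ funext fun i ↦
    Submodule.disjoint_def.1 (hU i) _ (hv i trivial) fun a ha ↦ ?_
  have hmem : Pi.single i a ∈ Submodule.pi Set.univ U := fun j _ ↦ by
    obtain rfl | hj := eq_or_ne j i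
    · rwa [Pi.single_eq_same]
    · rw [Pi.single_eq_of_ne hj]
      exact zero_mem _
  have h := horth _ hmem
  rwa [piForm_apply, Fintype.sum_eq_single i fun j hj ↦ by
    rw [Pi.single_eq_of_ne hj, map_zero, LinearMap.zero_apply], Pi.single_eq_same] at h

variable {e : ∀ i, M i ≃ₗ[F] M i}

theorem piCongrRight_mem_Sp (he : ∀ i, e i ∈ Sp (B i)) :
    LinearEquiv.piCongrRight e ∈ Sp (piForm B) := fun v w ↦ by
  simp only [piForm_apply, LinearEquiv.piCongrRight_apply]
  exact Finset.sum_congr rfl fun i _ ↦ he i _ _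

theorem HasNondegenerateInvariant.pi [∀ i, FiniteDimensional F (M i)] {k : ι → ℕ}
    (he : ∀ i, HasNondegenerateInvariant (B i) (k i) (e i)) :
    HasNondegenerateInvariant (piForm B) (∑ i, k i) (LinearEquiv.piCongrRight e) := by
  choose U hinv hdisj hrank using he
  refine ⟨.pi Set.univ U, fun v hv i _ ↦ hinv i (hv i trivial),
    disjoint_pi_orthogonal_piForm hdisj, ?_⟩
  rw [finrank_submodule_pi, Finset.mul_sum, Finset.sum_congr rfl fun i _ ↦ hrank i]

theorem HasIsotropicInvariant.pi [∀ i, FiniteDimensional F (M i)] {k : ι → ℕ}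
    (he : ∀ i, HasIsotropicInvariant (B i) (k i) (e i)) :
    HasIsotropicInvariant (piForm B) (∑ i, k i) (LinearEquiv.piCongrRight e) := by
  choose U hinv hiso hrank using he
  refine ⟨.pi Set.univ U, fun v hv i _ ↦ hinv i (hv i trivial), fun v hv w hw ↦ ?_, ?_⟩
  · exact (piForm_apply w v).trans <|
      Finset.sum_eq_zero fun i _ ↦ hiso i (hv i trivial) _ (hw i trivial)
  · rw [finrank_submodule_pi, Finset.sum_congr rfl fun i _ ↦ hrank i]

theorem IsHyperbolic.pi [∀ i, FiniteDimensional F (M i)] {Q : ∀ i, QuadraticForm F (M i)}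
    (hQ : ∀ i, IsHyperbolic (Q i)) : IsHyperbolic (QuadraticMap.pi Q) := by
  choose U hzero hrank using hQ
  refine ⟨.pi Set.univ U, fun v hv ↦ ?_, ?_⟩
  · rw [QuadraticMap.pi_apply, Finset.sum_eq_zero fun i _ ↦ hzero i _ (hv i trivial)]
  · rw [finrank_submodule_pi, Finset.mul_sum, Finset.sum_congr rfl fun i _ ↦ hrank i,
      finrank_pi_fintype]

variable [CharP F 2]

theorem HasArfInvariant.pi [∀ i, FiniteDimensional F (M i)] {Q : ∀ i, QuadraticForm F (M i)}
    {c : ι → ArfGroup F} (hQ : ∀ i, HasArfInvariant (B i) (Q i) (c i)) :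
    HasArfInvariant (piForm B) (QuadraticMap.pi Q) (∑ i, c i) := by
  choose Q₀ w hpolar hyp hshift hc using hQ
  refine ⟨.pi Q₀, w, ?_, .pi hyp, ?_, ?_⟩
  · rw [QuadraticMap.Ring.polarBilin_pi, piForm, Finset.sum_congr rfl fun i _ ↦ by rw [hpolar i]]
  · ext v
    simp only [shift_apply, QuadraticMap.pi_apply, piForm_apply, hshift, CharTwo.sum_sq,
      Finset.sum_add_distrib]
  · rw [QuadraticMap.pi_apply, QuotientAddGroup.mk_sum, Finset.sum_congr rfl fun i _ ↦ hc i]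

theorem FixesQuadraticForm.pi [∀ i, FiniteDimensional F (M i)] {c : ι → ArfGroup F}
    (he : ∀ i, FixesQuadraticForm (B i) (c i) (e i)) :
    FixesQuadraticForm (piForm B) (∑ i, c i) (LinearEquiv.piCongrRight e) := by
  choose Q hQ hfix using he
  refine ⟨_, .pi hQ, fun v ↦ ?_⟩
  simp only [QuadraticMap.pi_apply, LinearEquiv.piCongrRight_apply, hfix]

end PiForm

/-! ### Model elements of maximal tori -/

section TraceForm

variable {F K : Type*} [Field F] [Field K]

theorem mk_inv_arfGroup_eq_zero_iff [CharP K 2] {τ : K} (hτ : τ ≠ 0) :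
    ((τ⁻¹ : K) : ArfGroup K) = 0 ↔ ∃ r, r ^ 2 = 1 + τ * r := by
  rw [← mk_arfGroup_sq, QuotientAddGroup.eq_zero_iff]
  constructor
  · rintro ⟨z, hz⟩
    rw [artinSchreier_apply] at hz
    refine ⟨τ * z, ?_⟩
    have hz' : τ ^ 2 * (z ^ 2 + z) = 1 := by rw [hz, ← mul_pow, mul_inv_cancel₀ hτ, one_pow]
    rw [← hz', mul_add, mul_pow, ← mul_assoc, ← sq, CharTwo.add_cancel_right]
  · rintro ⟨r, hr⟩
    refine ⟨τ⁻¹ * r, ?_⟩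
    rw [artinSchreier_apply, mul_pow, hr]
    field_simp
    rw [CharTwo.add_cancel_right]

variable [Algebra F K] [Finite F] [FiniteDimensional F K]

theorem trace_sq [CharP K 2] (c : K) :
    Algebra.trace F K (c ^ 2) = Algebra.trace F K c ^ 2 := by
  have : Finite K := Module.finite_of_finite F
  apply (algebraMap F K).injective
  rw [map_pow (algebraMap F K), FiniteField.algebraMap_trace_eq_sum_pow,
    FiniteField.algebraMap_trace_eq_sum_pow, CharTwo.sum_sq]
  exact Finset.sum_congr rfl fun i _ ↦ pow_right_comm _ _ _

variable [CharP F 2]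

theorem mk_trace_arfGroup_eq_zero_iff [CharP K 2] {c : K} :
    (Algebra.trace F K c : ArfGroup F) = 0 ↔ (c : ArfGroup K) = 0 := by
  have : Finite K := Module.finite_of_finite F
  have htrace : (artinSchreier K).range ≤
      (artinSchreier F).range.comap (Algebra.trace F K).toAddMonoidHom := by
    rintro _ ⟨z, rfl⟩
    exact ⟨Algebra.trace F K z, by simp [artinSchreier_apply, trace_sq]⟩
  let f : ArfGroup K →+ ArfGroup F := QuotientAddGroup.map _ _ _ htrace
  have hsurj : Function.Surjective f := fun d ↦ by
    obtain ⟨d, rfl⟩ := QuotientAddGroup.mk_surjective d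
    obtain ⟨c, rfl⟩ := Algebra.trace_surjective F K d
    exact ⟨c, rfl⟩
  have hbij : Function.Bijective f :=
    (Nat.bijective_iff_surjective_and_card f).2 ⟨hsurj, card_arfGroup.trans card_arfGroup.symm⟩
  exact map_eq_zero_iff (x := (c : ArfGroup K)) f hbij.injective

theorem mk_trace_inv_arfGroup_eq_zero_iff {τ : K} (hτ : τ ≠ 0) :
    (Algebra.trace F K τ⁻¹ : ArfGroup F) = 0 ↔ ∃ r, r ^ 2 = 1 + τ * r := by
  have : CharP K 2 := charP_of_injective_algebraMap (algebraMap F K).injective 2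
  rw [mk_trace_arfGroup_eq_zero_iff, mk_inv_arfGroup_eq_zero_iff hτ]

end TraceForm

section PlaneElement

variable (F : Type*) {K : Type*} [Field F] [Field K] [Algebra F K]

/-- The element of `SL₂(K)` with matrix `!![0, 1; 1, τ]` (in characteristic two), whose
characteristic polynomial is `X ^ 2 - τ X + 1`. -/
def planeElement (τ : K) : (K × K) ≃ₗ[F] K × K where
  toFun p := (p.2, p.1 + τ * p.2)
  invFun p := (p.2 - τ * p.1, p.1)
  map_add' p q := Prod.ext rfl (by simp only [Prod.fst_add, Prod.snd_add]; ring)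
  map_smul' c p := Prod.ext rfl (by simp)
  left_inv p := by simp
  right_inv p := by simp

theorem planeElement_apply (τ a b : K) : planeElement F τ (a, b) = (b, a + τ * b) := rfl

theorem hasIsotropicInvariant_planeElement [CharP F 2] {τ r : K} (hr : r ^ 2 = 1 + τ * r) :
    HasIsotropicInvariant (tracePairing F K) (finrank F K) (planeElement F τ) := by
  have : CharP K 2 := charP_of_injective_algebraMap (algebraMap F K).injective 2
  let f : K →ₗ[F] K × K := .prod .id (LinearMap.mulLeft F r)
  refine ⟨f.range, ?_, ?_, LinearMap.finrank_range_of_inj fun a b h ↦ congrArg Prod.fst h⟩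
  · rintro _ ⟨a, rfl⟩
    exact ⟨r * a, Prod.ext rfl (by
      change r * (r * a) = a + τ * (r * a)
      linear_combination a * hr)⟩
  · rintro _ ⟨a, rfl⟩ _ ⟨b, rfl⟩
    rw [tracePairing_apply]
    change Algebra.trace F K (b * (r * a) + r * b * a) = 0
    rw [mul_left_comm, ← mul_assoc, CharTwo.add_self_eq_zero, map_zero]

theorem planeElement_mem_Sp [CharP F 2] (τ : K) :
    planeElement F τ ∈ Sp (tracePairing F K) := by
  rintro ⟨a, b⟩ ⟨c, d⟩
  have : CharP K 2 := charP_of_injective_algebraMap (algebraMap F K).injective 2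
  rw [planeElement_apply, planeElement_apply, tracePairing_apply, tracePairing_apply]
  congr 1
  linear_combination τ * b * d * CharTwo.two_eq_zero (R := K)

/-- The quadratic form `Tr(ab)` on `K × K`. -/
noncomputable def traceProd (K : Type*) [Field K] [Algebra F K] : QuadraticForm F (K × K) :=
  LinearMap.BilinMap.toQuadraticMap
    ((Algebra.traceForm F K).compl₁₂ (.fst F K K) (.snd F K K))

theorem traceProd_apply (a b : K) : traceProd F K (a, b) = Algebra.trace F K (a * b) := rfl

theorem polarBilin_traceProd : (traceProd F K).polarBilin = tracePairing F K := by
  rw [traceProd, LinearMap.BilinMap.polarBilin_toQuadraticMap]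
  ext p q <;> simp [tracePairing_apply, mul_comm]

theorem isHyperbolic_traceProd [FiniteDimensional F K] : IsHyperbolic (traceProd F K) := by
  refine ⟨(LinearMap.inl F K K).range, ?_, ?_⟩
  · rintro _ ⟨a, rfl⟩
    rw [LinearMap.inl_apply, traceProd_apply, mul_zero, map_zero]
  · rw [LinearMap.finrank_range_of_inj LinearMap.inl_injective, finrank_prod, two_mul]

theorem fixesQuadraticForm_planeElement [CharP F 2] [Finite F] [FiniteDimensional F K] {τ : K}
    (hτ : τ ≠ 0) :
    FixesQuadraticForm (tracePairing F K) (Algebra.trace F K τ⁻¹) (planeElement F τ) := by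
  have : Finite K := Module.finite_of_finite F
  have : CharP K 2 := charP_of_injective_algebraMap (algebraMap F K).injective 2
  obtain ⟨s, hs⟩ := FiniteField.isSquare_of_char_two (ringChar.eq K 2) τ⁻¹
  refine ⟨_, ⟨traceProd F K, (s, s), polarBilin_traceProd F, isHyperbolic_traceProd F, rfl, ?_⟩, ?_⟩
  · rw [traceProd_apply, ← hs]
  · rintro ⟨a, b⟩
    have hvalue (a b : K) : shift (tracePairing F K) (traceProd F K) (s, s) (a, b) =
        Algebra.trace F K (a * b + τ⁻¹ * (a + b) ^ 2) := by
      rw [shift_apply, traceProd_apply, tracePairing_apply, ← trace_sq, ← map_add, hs]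
      congr 1
      ring
    rw [planeElement_apply, hvalue, hvalue]
    congr 1
    field_simp
    linear_combination (τ ^ 2 * b ^ 2 + τ * b * (a + b)) * CharTwo.two_eq_zero (R := K)

end PlaneElement

section TorusElement

variable {F V ι : Type*} [Field F] [AddCommGroup V] [Module F V]

theorem hasNondegenerateInvariant_zero (B : BilinForm F V) (x : V ≃ₗ[F] V) :
    HasNondegenerateInvariant B 0 x :=
  ⟨⊥, End.invtSubmodule.bot_mem _, disjoint_bot_left, by rw [finrank_bot, mul_zero]⟩

theorem IsSymplectic.hasNondegenerateInvariant {B : BilinForm F V} (hB : IsSymplectic B) {k : ℕ}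
    (hdim : finrank F V = 2 * k) (x : V ≃ₗ[F] V) : HasNondegenerateInvariant B k x := by
  refine ⟨⊤, End.invtSubmodule.top_mem _, ?_, by rw [finrank_top, hdim]⟩
  rw [BilinForm.orthogonal_top_eq_bot hB.nondegenerate]
  exact disjoint_bot_right

theorem hasIsotropicInvariant_zero (B : BilinForm F V) (x : V ≃ₗ[F] V) :
    HasIsotropicInvariant B 0 x :=
  ⟨⊥, End.invtSubmodule.bot_mem _, bot_le, finrank_bot F V⟩

variable (F) [Fintype ι] {K : ι → Type*} [∀ i, Field (K i)] [∀ i, Algebra F (K i)]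

/-- The symplectic form on `⨁ i, K i × K i` for which the summands are orthogonal and each carries
its trace pairing. -/
noncomputable abbrev torusForm (K : ι → Type*) [∀ i, Field (K i)] [∀ i, Algebra F (K i)] :
    BilinForm F (∀ i, K i × K i) :=
  piForm fun i ↦ tracePairing F (K i)

/-- The element of `∏ i, SL₂(K i)` whose components have traces `τ i`. -/
abbrev torusElement (τ : ∀ i, K i) : (∀ i, K i × K i) ≃ₗ[F] ∀ i, K i × K i :=
  .piCongrRight fun i ↦ planeElement F (τ i)

/-- The traces `τ i` are nonzero, and `X ^ 2 - τ i X + 1` has a root in `K i` exactly for those `i`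
at which the sign is `1`. The torus element with these traces then lies in a maximal torus with
factors of order `|K i| - sg i`. -/
def HasSplittingType (sg : ι → ℤˣ) (τ : ∀ i, K i) : Prop :=
  ∀ i, τ i ≠ 0 ∧ ((∃ r, r ^ 2 = 1 + τ i * r) ↔ sg i = 1)

theorem isSymplectic_torusForm [CharP F 2] [PerfectField F] [∀ i, FiniteDimensional F (K i)] :
    IsSymplectic (torusForm F K) :=
  isSymplectic_piForm fun i ↦ isSymplectic_tracePairing F (K i)

theorem torusElement_mem_Sp [CharP F 2] (τ : ∀ i, K i) :
    torusElement F τ ∈ Sp (torusForm F K) :=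
  piCongrRight_mem_Sp fun i ↦ planeElement_mem_Sp F (τ i)

/-- `torusElement` as an element of the symplectic group. -/
def torusSp [CharP F 2] (τ : ∀ i, K i) : Sp (torusForm F K) :=
  ⟨torusElement F τ, torusElement_mem_Sp F τ⟩

theorem fixesQuadraticForm_torusSp [CharP F 2] [Finite F] [∀ i, FiniteDimensional F (K i)]
    {τ : ∀ i, K i} (hτ : ∀ i, τ i ≠ 0) :
    FixesQuadraticForm (torusForm F K) (∑ i, (Algebra.trace F (K i) (τ i)⁻¹ : ArfGroup F))
      (torusSp F τ) :=
  .pi fun i ↦ fixesQuadraticForm_planeElement F (hτ i)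

theorem hasNondegenerateInvariant_torusSp [CharP F 2] [PerfectField F]
    [∀ i, FiniteDimensional F (K i)] (τ : ∀ i, K i) (S : Finset ι) :
    HasNondegenerateInvariant (torusForm F K) (∑ i ∈ S, finrank F (K i)) (torusSp F τ) := by
  classical
  rw [← Finset.univ_inter S, ← Finset.sum_ite_mem]
  refine .pi fun i ↦ ?_
  split_ifs
  · exact (isSymplectic_tracePairing F (K i)).hasNondegenerateInvariant
      (by rw [finrank_prod, two_mul]) _
  · exact hasNondegenerateInvariant_zero _ _

theorem HasSplittingType.hasIsotropicInvariant [CharP F 2] [∀ i, FiniteDimensional F (K i)]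
    {sg : ι → ℤˣ} {τ : ∀ i, K i} (hτ : HasSplittingType sg τ) {S : Finset ι}
    (hS : ∀ i ∈ S, sg i = 1) :
    HasIsotropicInvariant (torusForm F K) (∑ i ∈ S, finrank F (K i)) (torusSp F τ) := by
  classical
  rw [← Finset.univ_inter S, ← Finset.sum_ite_mem]
  refine .pi fun i ↦ ?_
  split_ifs with hi
  · obtain ⟨r, hr⟩ := (hτ i).2.2 (hS i hi)
    exact hasIsotropicInvariant_planeElement F hr
  · exact hasIsotropicInvariant_zero _ _

theorem preservesFieldStructure_torusSp [CharP F 2] {L : Type*} [Field L] [Algebra F L]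
    (τ : ι → L) :
    PreservesFieldStructure L (torusForm F fun _ : ι ↦ L) (torusSp F τ) := by
  refine ⟨Algebra.lsmul F F (ι → L × L), fun a v w ↦ ?_, fun a ↦ LinearMap.ext fun v ↦
    funext fun i ↦ Prod.ext rfl ?_⟩
  · simp only [piForm_apply, tracePairing_apply, Algebra.lsmul_coe, Pi.smul_apply, Prod.smul_fst,
      Prod.smul_snd, smul_eq_mul]
    exact Finset.sum_congr rfl fun i _ ↦ congrArg _ (by ring)
  · change a * ((v i).1 + τ i * (v i).2) = a * (v i).1 + τ i * (a * (v i).2)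
    ring

theorem finrank_pi_prod_self [∀ i, FiniteDimensional F (K i)] :
    finrank F (∀ i, K i × K i) = 2 * ∑ i, finrank F (K i) := by
  simp only [finrank_pi_fintype, finrank_prod, ← two_mul, Finset.mul_sum]

end TorusElement

/-! ### Weights of maximal tori -/

section Weights

variable {Ω ι : Type*} [Field Ω]

/-- The index set of the weights of a maximal torus with factors of degrees `d i`: a factor, a power
of Frobenius and an exponent `±1`. -/
abbrev WeightIndex (d : ι → ℕ) : Type _ :=
  (i : ι) × (Fin (d i) × ℤˣ)

/-- The character `t ↦ t i ^ (± q ^ l)`. -/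
def weight (q : ℕ) {d : ι → ℕ} (e : WeightIndex d) : (ι → Ωˣ) →* Ωˣ :=
  (zpowGroupHom (e.2.2 * q ^ (e.2.1 : ℕ) : ℤ)).comp (Pi.evalMonoidHom _ e.1)

/-- The character whose kernel is the locus where the weights `e` and `e'` agree. -/
def weightDiv (q : ℕ) {d : ι → ℕ} (e e' : WeightIndex d) : (ι → Ωˣ) →* Ωˣ :=
  weight q e / weight q e'

/-- `t` is separated by the weights, so the torus element it represents is regular. -/
def HasDistinctWeights (q : ℕ) (d : ι → ℕ) (t : ι → Ωˣ) : Prop :=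
  Function.Injective fun e : WeightIndex d ↦ weight q e t

/-- The order `q ^ d - s` of a torus factor. -/
def torusOrder (q d : ℕ) (s : ℤˣ) : ℕ :=
  ((q : ℤ) ^ d - s).toNat

/-- The group of eigenvalues of a maximal torus with factors of order `q ^ d i - sg i`. -/
def torus (Ω : Type*) [Field Ω] (q : ℕ) (d : ι → ℕ) (sg : ι → ℤˣ) : Subgroup (ι → Ωˣ) :=
  .pi Set.univ fun i ↦ rootsOfUnity (torusOrder q (d i) (sg i)) Ω

variable {q : ℕ} {d : ι → ℕ} {sg : ι → ℤˣ}

theorem weight_apply (e : WeightIndex d) (t : ι → Ωˣ) :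
    weight q e t = t e.1 ^ (e.2.2 * q ^ (e.2.1 : ℕ) : ℤ) := rfl

theorem natCast_torusOrder (hq : 0 < q) (d : ℕ) (s : ℤˣ) :
    (torusOrder q d s : ℤ) = q ^ d - s := by
  have hpow : (1 : ℤ) ≤ q ^ d := one_le_pow₀ (mod_cast hq)
  rw [torusOrder, Int.toNat_of_nonneg]
  obtain rfl | rfl := Int.units_eq_one_or s
  · simpa using hpow
  · simp only [Units.val_neg, Units.val_one]
    lia

theorem pow_le_two_mul_torusOrder (hq : 2 ≤ q) {d : ℕ} (hd : d ≠ 0) (s : ℤˣ) :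
    q ^ d ≤ 2 * torusOrder q d s := by
  have h := natCast_torusOrder (by lia : 0 < q) d s
  have hpow : 2 ≤ q ^ d := hq.trans (Nat.le_self_pow hd q)
  zify at hpow ⊢
  obtain rfl | rfl := Int.units_eq_one_or s <;>
  · simp only [Units.val_neg, Units.val_one] at h
    lia

theorem torusOrder_pos (hq : 2 ≤ q) {d : ℕ} (hd : d ≠ 0) (s : ℤˣ) : 0 < torusOrder q d s := by
  have := pow_le_two_mul_torusOrder hq hd s
  have : 0 < q ^ d := by positivity
  lia

theorem mem_rootsOfUnity_torusOrder_iff (hq : 0 < q) {d : ℕ} {s : ℤˣ} {z : Ωˣ} :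
    z ∈ rootsOfUnity (torusOrder q d s) Ω ↔ z ^ q ^ d = z ^ (s : ℤ) := by
  rw [mem_rootsOfUnity, ← zpow_natCast, natCast_torusOrder hq, zpow_sub, mul_inv_eq_one]
  norm_cast

theorem mem_torus_iff (hq : 0 < q) {t : ι → Ωˣ} :
    t ∈ torus Ω q d sg ↔ ∀ i, t i ^ q ^ d i = t i ^ (sg i : ℤ) := by
  simp only [torus, Subgroup.mem_pi, Set.mem_univ, true_imp_iff, mem_rootsOfUnity_torusOrder_iff hq]

theorem natCard_torusFactor [IsAlgClosed Ω] (hq : 2 ≤ q) (hqΩ : (q : Ω) = 0) {d : ℕ} (hd : d ≠ 0)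
    (s : ℤˣ) : Nat.card (rootsOfUnity (torusOrder q d s) Ω) = torusOrder q d s := by
  have hcast : ((torusOrder q d s : ℤ) : Ω) = 0 - s := by
    rw [natCast_torusOrder (by lia : 0 < q), Int.cast_sub, Int.cast_pow, Int.cast_natCast, hqΩ,
      zero_pow hd]
  have : NeZero (torusOrder q d s : Ω) := ⟨fun h ↦ by
    rw [Int.cast_natCast, h, eq_comm, zero_sub, neg_eq_zero] at hcast
    obtain rfl | rfl := Int.units_eq_one_or s <;> simp at hcast⟩
  have : NeZero (torusOrder q d s) := .of_neZero_natCast Ω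
  exact HasEnoughRootsOfUnity.natCard_rootsOfUnity Ω _

theorem finite_torus [Finite ι] (hq : 2 ≤ q) (hd : ∀ i, d i ≠ 0) : Finite (torus Ω q d sg) := by
  have (i : ι) : NeZero (torusOrder q (d i) (sg i)) := ⟨(torusOrder_pos hq (hd i) _).ne'⟩
  have hfin (i : ι) : Finite (rootsOfUnity (torusOrder q (d i) (sg i)) Ω) := inferInstance
  exact Set.Finite.pi fun i ↦ (hfin i : Set.Finite _)

theorem natCard_le_natAbs_mul_natCard_map (A : Subgroup Ωˣ) [Finite A] {a : ℤ} (ha : a ≠ 0) :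
    Nat.card A ≤ a.natAbs * Nat.card (A.map (zpowGroupHom a)) := by
  have : NeZero a.natAbs := ⟨Int.natAbs_ne_zero.2 ha⟩
  have hker : Nat.card ((zpowGroupHom a).domRestrict A).ker ≤ a.natAbs := by
    refine (Nat.card_le_card_of_injective (fun z ↦ (⟨z.1.1, ?_⟩ : rootsOfUnity a.natAbs Ω))
      fun z w h ↦ ?_).trans (card_rootsOfUnity Ω _)
    · rw [mem_rootsOfUnity, pow_natAbs_eq_one]
      exact z.2
    · exact Subtype.ext (Subtype.ext (Subtype.mk.inj h))
  rw [← ((zpowGroupHom a).domRestrict A).ker.card_mul_index, Subgroup.index_ker,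
    MonoidHom.domRestrict_range]
  gcongr

theorem natAbs_weightExponent_le (hq : 0 < q) {d : ℕ} (l : Fin d) (s : ℤˣ) :
    (s * q ^ (l : ℕ) : ℤ).natAbs ≤ q ^ (d - 1) := by
  rw [Int.natAbs_mul, Int.units_natAbs, one_mul, Int.natAbs_pow, Int.natAbs_natCast]
  exact Nat.pow_le_pow_right hq (by lia)

theorem weightExponent_injective (hq : 2 ≤ q) (d : ℕ) :
    Function.Injective fun e : Fin d × ℤˣ ↦ (e.2 * q ^ (e.1 : ℕ) : ℤ) := by
  rintro ⟨l, s⟩ ⟨l', s'⟩ (h : (s * q ^ (l : ℕ) : ℤ) = s' * q ^ (l' : ℕ))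
  have hl : q ^ (l : ℕ) = q ^ (l' : ℕ) := by
    simpa [Int.natAbs_mul, Int.natAbs_pow] using congrArg Int.natAbs h
  obtain rfl := Fin.ext (Nat.pow_right_injective hq hl)
  rw [Prod.mk.injEq, ← Units.val_inj]
  exact ⟨rfl, mul_right_cancel₀ (by positivity) h⟩

theorem exists_weightDiv_mulSingle_eq_zpow [DecidableEq ι] (hq : 2 ≤ q) {e e' : WeightIndex d}
    (hne : e ≠ e') : ∃ i, ∃ a : ℤ, a ≠ 0 ∧ a.natAbs ≤ 2 * q ^ (d i - 1) ∧
      ∀ z : Ωˣ, weightDiv q e e' (Pi.mulSingle i z) = z ^ a := by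
  obtain ⟨i, l, s⟩ := e
  obtain ⟨i', l', s'⟩ := e'
  have hle := natAbs_weightExponent_le (by lia : 0 < q) l s
  by_cases hi : i' = i
  · subst hi
    have hle' := natAbs_weightExponent_le (by lia : 0 < q) l' s'
    refine ⟨i', s * q ^ (l : ℕ) - s' * q ^ (l' : ℕ), sub_ne_zero.2 fun h ↦ hne ?_, by lia,
      fun z ↦ ?_⟩
    · rw [weightExponent_injective hq (d i') (a₁ := (l, s)) (a₂ := (l', s')) h]
    · simp only [weightDiv, MonoidHom.div_apply, weight_apply, Pi.mulSingle_eq_same, zpow_sub,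
        div_eq_mul_inv]
  · refine ⟨i, s * q ^ (l : ℕ), by simp [show q ≠ 0 by lia], by lia, fun z ↦ ?_⟩
    simp only [weightDiv, MonoidHom.div_apply, weight_apply, Pi.mulSingle_eq_same,
      Pi.mulSingle_eq_of_ne hi, one_zpow, div_one]

theorem mul_natCard_ker_weightDiv_le [Finite ι] [IsAlgClosed Ω] (hq : 2 ≤ q) (hqΩ : (q : Ω) = 0)
    (hd : ∀ i, d i ≠ 0) {e e' : WeightIndex d} (hne : e ≠ e') :
    q * Nat.card ((weightDiv q e e').domRestrict (torus Ω q d sg)).ker ≤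
      4 * Nat.card (torus Ω q d sg) := by
  classical
  obtain ⟨i, a, ha, hle, hψ⟩ := exists_weightDiv_mulSingle_eq_zpow hq hne (Ω := Ω)
  set ψ := weightDiv q e e' (Ω := Ω)
  set A := rootsOfUnity (torusOrder q (d i) (sg i)) Ω
  have hA : Nat.card A = torusOrder q (d i) (sg i) := natCard_torusFactor hq hqΩ (hd i) _
  have : Finite A := Nat.finite_of_card_ne_zero (hA ▸ (torusOrder_pos hq (hd i) _).ne')
  have hmap : A.map (zpowGroupHom a) ≤ (torus Ω q d sg).map ψ := by
    rintro _ ⟨z, hz, rfl⟩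
    exact ⟨Pi.mulSingle i z, (Subgroup.mulSingle_mem_pi (f := fun _ ↦ Ωˣ) i z).2 fun _ ↦ hz, hψ z⟩
  have hrange : q ≤ 4 * Nat.card ((torus Ω q d sg).map ψ) := by
    refine Nat.le_of_mul_le_mul_left (c := q ^ (d i - 1)) ?_ (by positivity)
    calc q ^ (d i - 1) * q = q ^ d i := pow_sub_one_mul (hd i) q
      _ ≤ 2 * Nat.card A := hA ▸ pow_le_two_mul_torusOrder hq (hd i) _
      _ ≤ 2 * (a.natAbs * Nat.card (A.map (zpowGroupHom a))) := by
        gcongr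
        exact natCard_le_natAbs_mul_natCard_map A ha
      _ ≤ 2 * (2 * q ^ (d i - 1) * Nat.card ((torus Ω q d sg).map ψ)) := by
        gcongr
        exact Nat.card_mono (Set.Finite.image ψ (show Set.Finite _ from finite_torus hq hd)) hmap
      _ = _ := by ring
  have hker := (ψ.domRestrict (torus Ω q d sg)).ker.card_mul_index
  rw [Subgroup.index_ker, MonoidHom.domRestrict_range] at hker
  rw [← hker, mul_left_comm, mul_comm]
  gcongr

theorem natCard_weightIndex [Fintype ι] : Nat.card (WeightIndex d) = 2 * ∑ i, d i := by
  simp [Nat.card_eq_fintype_card, Finset.sum_mul, mul_comm 2]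

theorem mul_ncard_le_of_subset_biUnion {α β : Type*} [Finite α] {s : Set α} {P : Finset β}
    {Z : β → Set α} (hs : s ⊆ ⋃ p ∈ P, Z p) {n : ℕ} (hZ : ∀ p ∈ P, q * (Z p).ncard ≤ n) :
    q * s.ncard ≤ P.card * n :=
  calc q * s.ncard ≤ q * ∑ p ∈ P, (Z p).ncard :=
        Nat.mul_le_mul_left q ((Set.ncard_le_ncard hs).trans (P.set_ncard_biUnion_le Z))
    _ = ∑ p ∈ P, q * (Z p).ncard := Finset.mul_sum ..
    _ ≤ P.card * n := Finset.sum_le_card_nsmul _ _ _ hZ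

theorem mul_natCard_torus_le [Fintype ι] [IsAlgClosed Ω] (hq : 2 ≤ q) (hqΩ : (q : Ω) = 0)
    (hd : ∀ i, d i ≠ 0) : q * Nat.card (torus Ω q d sg) ≤
      q * Nat.card {t : torus Ω q d sg // HasDistinctWeights q d t.1} +
        16 * (∑ i, d i) ^ 2 * Nat.card (torus Ω q d sg) := by
  classical
  have : Finite (torus Ω q d sg) := finite_torus hq hd
  let R : Set (torus Ω q d sg) := {t | HasDistinctWeights q d t.1}
  have hcover : Rᶜ ⊆ ⋃ p ∈ (Finset.univ : Finset (WeightIndex d)).offDiag,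
      (((weightDiv q p.1 p.2).domRestrict (torus Ω q d sg)).ker : Set (torus Ω q d sg)) :=
    fun t ht ↦ by
      obtain ⟨e, e', h, hne⟩ := Function.not_injective_iff.1 ht
      exact Set.mem_biUnion (x := (e, e')) (by simpa using hne) (div_eq_one.2 h)
  have hcard := Finset.offDiag_card (Finset.univ : Finset (WeightIndex d))
  rw [Finset.card_univ, ← Nat.card_eq_fintype_card, natCard_weightIndex] at hcard
  have hcompl := mul_ncard_le_of_subset_biUnion hcover fun p hp ↦
    mul_natCard_ker_weightDiv_le hq hqΩ hd (Finset.mem_offDiag.1 hp).2.2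
  rw [← R.ncard_add_ncard_compl, mul_add]
  refine Nat.add_le_add_left (hcompl.trans ?_) _
  rw [R.ncard_add_ncard_compl, hcard, show 16 * (∑ i, d i) ^ 2 * Nat.card (torus Ω q d sg) =
    2 * (∑ i, d i) * (2 * ∑ i, d i) * (4 * Nat.card (torus Ω q d sg)) by ring]
  exact Nat.mul_le_mul_right _ (Nat.sub_le _ _)

theorem HasDistinctWeights.zpow_injective {t : ι → Ωˣ} (hd : ∀ i, d i ≠ 0)
    (ht : HasDistinctWeights q d t) :
    Function.Injective fun e : ι × ℤˣ ↦ t e.1 ^ (e.2 : ℤ) := by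
  rintro ⟨i, s⟩ ⟨i', s'⟩ (h : t i ^ (s : ℤ) = t i' ^ (s' : ℤ))
  have : (⟨i, ⟨0, Nat.pos_of_ne_zero (hd i)⟩, s⟩ : WeightIndex d) =
      ⟨i', ⟨0, Nat.pos_of_ne_zero (hd i')⟩, s'⟩ := ht (by simpa [weight_apply] using h)
  rw [Sigma.mk.injEq] at this
  obtain ⟨rfl, h⟩ := this
  rw [(Prod.mk.inj (eq_of_heq h)).2]

theorem HasDistinctWeights.ne_inv {t : ι → Ωˣ} (hd : ∀ i, d i ≠ 0)
    (ht : HasDistinctWeights q d t) (i : ι) : t i ≠ (t i)⁻¹ := fun h ↦ by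
  have := ht.zpow_injective hd (a₁ := (i, 1)) (a₂ := (i, -1)) (by simpa using h)
  simp at this

theorem natCard_embedding_prod_sign_le [Fintype ι] (hd : ∀ i, d i ≠ 0) :
    Nat.card ((ι ↪ Σ i, Fin (d i)) × (ι → ℤˣ)) ≤ 2 ^ (∑ i, d i) * (∑ i, d i).factorial := by
  classical
  have hle : Fintype.card ι ≤ ∑ i, d i := by
    simpa using Finset.card_nsmul_le_sum Finset.univ d 1 fun i _ ↦ Nat.pos_of_ne_zero (hd i)
  calc Nat.card ((ι ↪ Σ i, Fin (d i)) × (ι → ℤˣ))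
      = 2 ^ Fintype.card ι * (∑ i, d i).descFactorial (Fintype.card ι) := by
        simp [Nat.card_eq_fintype_card, Fintype.card_embedding_eq, mul_comm]
    _ ≤ 2 ^ (∑ i, d i) * (∑ i, d i).factorial :=
        Nat.mul_le_mul (Nat.pow_le_pow_right two_pos hle) <| Nat.le_of_dvd (Nat.factorial_pos _)
          (Dvd.intro_left _ (Nat.factorial_mul_descFactorial hle))

theorem natCard_le_of_forall_exists_eq_weight [Fintype ι] (hd : ∀ i, d i ≠ 0) {t : ι → Ωˣ}
    {α : Type*} {f : α → ι → Ωˣ} (hf : Function.Injective f)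
    (hreg : ∀ a, HasDistinctWeights q d (f a))
    (hw : ∀ a i, ∃ e : WeightIndex d, f a i = weight q e t) :
    Nat.card α ≤ 2 ^ (∑ i, d i) * (∑ i, d i).factorial := by
  classical
  choose e he using hw
  let slot (a : α) (i : ι) : Σ i, Fin (d i) := ⟨(e a i).1, (e a i).2.1⟩
  let value (x : Σ i, Fin (d i)) : Ωˣ := t x.1 ^ q ^ (x.2 : ℕ)
  have hvalue (a : α) (i : ι) : f a i = value (slot a i) ^ ((e a i).2.2 : ℤ) := by
    rw [he, weight_apply, mul_comm, zpow_mul]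
    norm_cast
  have hslot (a : α) : Function.Injective (slot a) := fun i i' h ↦ by
    have hsq (i : ι) : f a i ^ ((e a i).2.2 : ℤ) = value (slot a i) := by
      rw [hvalue, ← zpow_mul, ← Units.val_mul, Int.units_mul_self, Units.val_one, zpow_one]
    have heq : f a i ^ ((e a i).2.2 : ℤ) = f a i' ^ ((e a i').2.2 : ℤ) := by
      rw [hsq, hsq, h]
    exact congrArg Prod.fst ((hreg a).zpow_injective hd (a₁ := (i, _)) (a₂ := (i', _)) heq)
  let code (a : α) : (ι ↪ Σ i, Fin (d i)) × (ι → ℤˣ) :=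
    (⟨slot a, hslot a⟩, fun i ↦ (e a i).2.2)
  have hcode : Function.Injective code := fun a b h ↦ by
    obtain ⟨hs, hsign⟩ := Prod.mk.inj h
    refine hf (funext fun i ↦ ?_)
    rw [hvalue, hvalue, show slot a i = slot b i from DFunLike.congr_fun hs i,
      show (e a i).2.2 = (e b i).2.2 from congrFun hsign i]
  exact (Nat.card_le_card_of_injective code hcode).trans (natCard_embedding_prod_sign_le hd)

end Weights

/-! ### Eigenvalues of torus elements -/

section Polynomials

variable {F V W : Type*} [Field F] [AddCommGroup V] [Module F V] [AddCommGroup W] [Module F W]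

theorem map_aeval_apply {f : V →ₗ[F] W} {S : End F V} {T : End F W} (h : ∀ v, f (S v) = T (f v))
    (p : F[X]) (v : V) : f (aeval S p v) = aeval T p (f v) := by
  induction p using Polynomial.induction_on generalizing v with
  | C a => simp [algebraMap_end_apply]
  | add p q hp hq => simp [hp, hq]
  | monomial n a ih =>
    rw [pow_succ, ← mul_assoc, map_mul (aeval S), map_mul (aeval T), aeval_X, aeval_X,
      End.mul_apply, End.mul_apply, ih, h]

theorem map_aeval_apply_of_eigen {Ω : Type*} [Field Ω] [Algebra F Ω] {φ : V →ₗ[F] Ω} {S : End F V}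
    {z : Ω} (h : ∀ v, φ (S v) = z * φ v) (p : F[X]) (v : V) :
    φ (aeval S p v) = aeval z p * φ v := by
  rw [map_aeval_apply (T := Algebra.lmul F Ω z) h, aeval_algHom_apply, Algebra.coe_lmul_eq_mul,
    LinearMap.mul_apply']

theorem isAdjointPair_aeval {B : BilinForm F V} {S T : End F V}
    (h : LinearMap.IsAdjointPair B B S T) (p : F[X]) :
    LinearMap.IsAdjointPair B B (aeval S p) (aeval T p) := by
  induction p using Polynomial.induction_on with
  | C a => intro v w; simp [algebraMap_end_apply]
  | add p q hp hq => rw [map_add, map_add]; exact hp.add hq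
  | monomial n a ih =>
    rw [pow_succ, ← mul_assoc, map_mul (aeval S), mul_comm (C a * X ^ n), map_mul (aeval T),
      aeval_X, aeval_X]
    exact ih.mul h

theorem exists_aeval_eq_of_commute {S g : End F V} {v₀ : V}
    (hv₀ : ∀ v, ∃ p : F[X], aeval S p v₀ = v) (hg : Commute g S) : ∃ p : F[X], aeval S p = g := by
  obtain ⟨p, hp⟩ := hv₀ (g v₀)
  refine ⟨p, LinearMap.ext fun v ↦ ?_⟩
  obtain ⟨b, rfl⟩ := hv₀ v
  rw [map_aeval_apply (LinearMap.congr_fun hg.eq), ← hp, ← End.mul_apply, ← End.mul_apply,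
    ← map_mul, ← map_mul, mul_comm]

theorem exists_aeval_apply_eq [FiniteDimensional F V] {S : End F V} {v₀ : V}
    (h : ∀ p : F[X], p ≠ 0 → aeval S p v₀ = 0 → finrank F V ≤ p.natDegree) (v : V) :
    ∃ p : F[X], aeval S p v₀ = v := by
  let f : degreeLT F (finrank F V) →ₗ[F] V :=
    (LinearMap.applyₗ v₀ ∘ₗ (aeval S).toLinearMap).domRestrict _
  have : FiniteDimensional F (degreeLT F (finrank F V)) := .equiv (degreeLTEquiv F _).symm
  have hinj : Function.Injective f := by
    refine (injective_iff_map_eq_zero f).2 fun p hp ↦ Subtype.ext ?_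
    by_contra hp0
    exact (natDegree_lt_iff_degree_lt hp0).2 (mem_degreeLT.1 p.2) |>.not_ge (h p hp0 hp)
  have hfinrank : finrank F (degreeLT F (finrank F V)) = finrank F V := by
    rw [(degreeLTEquiv F _).finrank_eq, finrank_fin_fun]
  obtain ⟨p, hp⟩ := (LinearMap.injective_iff_surjective_of_finrank_eq_finrank hfinrank).1 hinj v
  exact ⟨p, hp⟩

theorem natCard_le_natDegree {Ω α : Type*} [Field Ω] [Algebra F Ω] [Finite α] {p : F[X]}
    (hp : p ≠ 0) {r : α → Ω} (hr : Function.Injective r) (hroot : ∀ a, aeval (r a) p = 0) :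
    Nat.card α ≤ p.natDegree := by
  have := Fintype.ofFinite α
  by_contra! h
  rw [Nat.card_eq_fintype_card, ← natDegree_map (algebraMap F Ω)] at h
  exact hp ((Polynomial.map_eq_zero _).1 (eq_zero_of_natDegree_lt_card_of_eval_eq_zero _ hr
    (fun a ↦ by rw [eval_map_algebraMap, hroot]) h))

theorem exists_eq_of_aeval_eq_zero {Ω α : Type*} [Field Ω] [Algebra F Ω] [Finite α] {p : F[X]}
    (hp : p ≠ 0) {r : α → Ω} (hr : Function.Injective r) (hroot : ∀ a, aeval (r a) p = 0)
    (hdeg : p.natDegree ≤ Nat.card α) {z : Ω} (hz : aeval z p = 0) : ∃ a, r a = z := by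
  by_contra h
  have hinj : Function.Injective fun a : Option α ↦ a.elim z r :=
    Option.injective_iff.2 ⟨hr, h⟩
  have := natCard_le_natDegree hp hinj (Option.rec hz hroot)
  rw [Finite.card_option] at this
  lia

end Polynomials

section Frobenius

variable {F Ω : Type*} [Field F] [Finite F] [Field Ω] [Algebra F Ω]

theorem aeval_pow_natCard_pow (p : F[X]) (z : Ω) (l : ℕ) :
    aeval (z ^ Nat.card F ^ l) p = aeval z p ^ Nat.card F ^ l := by
  have := Fintype.ofFinite F
  rw [Nat.card_eq_fintype_card]
  induction l with
  | zero => simp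
  | succ l ih => rw [pow_succ, pow_mul, pow_mul, ← ih, ← map_pow, ← FiniteField.expand_card,
      expand_aeval]

theorem add_pow_natCard_pow (z w : Ω) (l : ℕ) :
    (z + w) ^ Nat.card F ^ l = z ^ Nat.card F ^ l + w ^ Nat.card F ^ l := by
  have := Fintype.ofFinite F
  rw [Nat.card_eq_fintype_card]
  simpa [FiniteField.coe_frobeniusAlgHom, AlgHom.coe_pow, pow_iterate] using
    map_add (FiniteField.frobeniusAlgHom F Ω ^ l) z w

theorem exists_algHom_apply_eq_iff {K : Type*} [Field K] [Algebra F K] [FiniteDimensional F K]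
    (j : K →ₐ[F] Ω) {z : Ω} : (∃ a, j a = z) ↔ z ^ Nat.card F ^ finrank F K = z := by
  have : Finite K := Module.finite_of_finite F
  have := Fintype.ofFinite K
  rw [← Module.natCard_eq_pow_finrank, Nat.card_eq_fintype_card]
  constructor
  · rintro ⟨a, rfl⟩
    rw [← map_pow, FiniteField.pow_card]
  · intro hz
    have hcard := Fintype.one_lt_card (α := K)
    refine exists_eq_of_aeval_eq_zero (FiniteField.X_pow_card_sub_X_ne_zero F hcard) j.injective
      (fun a ↦ ?_) ?_ (by simpa [sub_eq_zero] using hz)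
    · rw [map_sub, map_pow, aeval_X, ← map_pow, FiniteField.pow_card, sub_self]
    · rw [FiniteField.X_pow_card_sub_X_natDegree_eq F hcard, Nat.card_eq_fintype_card]

end Frobenius

section Eigenvalues

variable {F Ω ι : Type*} [Field F] [Field Ω] [Algebra F Ω]
  {K : ι → Type*} [∀ i, Field (K i)] [∀ i, Algebra F (K i)] (j : ∀ i, K i →ₐ[F] Ω)

/-- The eigenvalues of the `i`-th component of the torus element with traces `τ`, viewed as an
element of `SL₂(Ω)` along the embedding `j i`, are `t i` and its inverse. -/
def HasEigenvalues (τ : ∀ i, K i) (t : ι → Ωˣ) : Prop :=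
  ∀ i, j i (τ i) = t i + ↑(t i)⁻¹

/-- The linear functional on the `i`-th component which, in characteristic two, is an eigenvector of
the transpose of the torus element, with eigenvalue `t i ^ s`. -/
def eigenfunctional (t : ι → Ωˣ) (i : ι) (s : ℤˣ) : (∀ i, K i × K i) →ₗ[F] Ω :=
  ((j i).toLinearMap.coprod (((t i ^ (s : ℤ) : Ωˣ) : Ω) • (j i).toLinearMap)) ∘ₗ LinearMap.proj i

variable {j} {τ : ∀ i, K i} {t : ι → Ωˣ}

theorem eigenfunctional_apply (i : ι) (s : ℤˣ) (v : ∀ i, K i × K i) :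
    eigenfunctional j t i s v = j i (v i).1 + (t i ^ (s : ℤ) : Ωˣ) * j i (v i).2 := rfl

theorem eigenfunctional_one_zero (i : ι) (s : ℤˣ) :
    eigenfunctional j t i s (fun _ ↦ (1, 0)) = 1 := by
  simp [eigenfunctional_apply]

theorem HasEigenvalues.eigenfunctional_torusElement [CharP F 2] (h : HasEigenvalues j τ t) (i : ι)
    (s : ℤˣ) (v : ∀ i, K i × K i) : eigenfunctional j t i s (torusElement F τ v) =
      (t i ^ (s : ℤ) : Ωˣ) * eigenfunctional j t i s v := by
  have : CharP Ω 2 := charP_of_injective_algebraMap (algebraMap F Ω).injective 2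
  have hs : j i (τ i) = (t i ^ (s : ℤ) : Ωˣ) + ↑(t i ^ (s : ℤ))⁻¹ := by
    obtain rfl | rfl := Int.units_eq_one_or s
    · simp [h i]
    · simp [h i, add_comm]
  have hτ (a b : K i) : j i (a + τ i * b) = j i a + j i (τ i) * j i b := by
    rw [map_add, map_mul]
  rw [eigenfunctional_apply, eigenfunctional_apply, LinearEquiv.piCongrRight_apply]
  change j i (v i).2 + _ * j i ((v i).1 + τ i * (v i).2) = _
  rw [hτ, hs]
  linear_combination (j i (v i).2) * (Units.mul_inv (t i ^ (s : ℤ)) +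
    CharTwo.two_eq_zero (R := Ω))

theorem HasEigenvalues.eigenfunctional_aeval [CharP F 2] (h : HasEigenvalues j τ t) (i : ι)
    (s : ℤˣ) (p : F[X]) (v : ∀ i, K i × K i) :
    eigenfunctional j t i s (aeval (torusElement F τ : End F (∀ i, K i × K i)) p v) =
      aeval ((t i ^ (s : ℤ) : Ωˣ) : Ω) p * eigenfunctional j t i s v :=
  map_aeval_apply_of_eigen (h.eigenfunctional_torusElement i s) p v

theorem HasEigenvalues.aeval_eq_zero [CharP F 2] (h : HasEigenvalues j τ t) {p : F[X]}
    (hp : aeval (torusElement F τ : End F (∀ i, K i × K i)) p (fun _ ↦ (1, 0)) = 0)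
    (i : ι) (s : ℤˣ) : aeval ((t i ^ (s : ℤ) : Ωˣ) : Ω) p = 0 := by
  rw [← mul_one (aeval _ p), ← eigenfunctional_one_zero (j := j) i s, ← h.eigenfunctional_aeval,
    hp, map_zero]

theorem eq_zero_of_eigenfunctional_eq_zero (ht : ∀ i, t i ≠ (t i)⁻¹) {v : ∀ i, K i × K i}
    (hv : ∀ i s, eigenfunctional j t i s v = 0) : v = 0 := by
  funext i
  have hpos := hv i 1
  have hneg := hv i (-1)
  rw [eigenfunctional_apply] at hpos hneg
  have hsnd : j i (v i).2 = 0 := by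
    refine (mul_eq_zero.1 (?_ : ((t i : Ω) - ↑(t i)⁻¹) * _ = 0)).resolve_left
      (sub_ne_zero.2 (Units.val_injective.ne (ht i)))
    simp only [Units.val_one, Units.val_neg, zpow_one, zpow_neg] at hpos hneg
    linear_combination hpos - hneg
  have hfst : j i (v i).1 = 0 := by rw [← hpos, hsnd, mul_zero, add_zero]
  exact Prod.ext ((map_eq_zero _).1 hfst) ((map_eq_zero _).1 hsnd)

theorem exists_hasEigenvalues [Finite F] [∀ i, FiniteDimensional F (K i)]
    (j : ∀ i, K i →ₐ[F] Ω) {sg : ι → ℤˣ}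
    (ht : t ∈ torus Ω (Nat.card F) (fun i ↦ finrank F (K i)) sg) :
    ∃ τ, HasEigenvalues j τ t := by
  rw [mem_torus_iff Nat.card_pos] at ht
  refine Classical.skolem.1 fun i ↦ (exists_algHom_apply_eq_iff (j i)).2 ?_
  have hpow := ht i
  rw [add_pow_natCard_pow, ← Units.val_pow_eq_pow_val, ← Units.val_pow_eq_pow_val, inv_pow, hpow]
  obtain hs | hs := Int.units_eq_one_or (sg i)
  · simp [hs]
  · simp [hs, add_comm]

end Eigenvalues

section Regular

variable {F Ω ι : Type*} [Field F] [Finite F] [Field Ω] [Algebra F Ω]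
  {K : ι → Type*} [∀ i, Field (K i)] [∀ i, Algebra F (K i)]
  {j : ∀ i, K i →ₐ[F] Ω} {τ : ∀ i, K i} {t : ι → Ωˣ}

theorem aeval_weight_eq_zero {p : F[X]}
    (hp : ∀ i (s : ℤˣ), aeval ((t i ^ (s : ℤ) : Ωˣ) : Ω) p = 0)
    (e : WeightIndex fun i ↦ finrank F (K i)) :
    aeval ((weight (Nat.card F) e t : Ωˣ) : Ω) p = 0 := by
  rw [weight_apply, zpow_mul, ← Nat.cast_pow, zpow_natCast, Units.val_pow_eq_pow_val,
    aeval_pow_natCard_pow, hp, zero_pow (pow_ne_zero _ Nat.card_pos.ne')]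

variable [CharP F 2] [∀ i, FiniteDimensional F (K i)]

theorem HasEigenvalues.hasSplittingType (h : HasEigenvalues j τ t) {sg : ι → ℤˣ}
    (ht : t ∈ torus Ω (Nat.card F) (fun i ↦ finrank F (K i)) sg)
    (hreg : HasDistinctWeights (Nat.card F) (fun i ↦ finrank F (K i)) t) :
    HasSplittingType sg τ := by
  have : CharP Ω 2 := charP_of_injective_algebraMap (algebraMap F Ω).injective 2
  intro i
  have hne := hreg.ne_inv (fun i ↦ Module.finrank_pos.ne') i
  have hpow := (mem_torus_iff Nat.card_pos).1 ht i
  have hroot (r : K i) : r ^ 2 = 1 + τ i * r ↔ j i r = t i ∨ j i r = ↑(t i)⁻¹ := by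
    have himage : r ^ 2 = 1 + τ i * r ↔ j i r ^ 2 = 1 + (t i + ↑(t i)⁻¹) * j i r := by
      rw [← h i, ← map_pow, ← map_mul, ← map_one (j i), ← map_add]
      exact (j i).injective.eq_iff.symm
    have hfactor : j i r ^ 2 - (1 + (t i + ↑(t i)⁻¹) * j i r) =
        (j i r - t i) * (j i r - ↑(t i)⁻¹) := by
      linear_combination - Units.mul_inv (t i) - CharTwo.two_eq_zero (R := Ω)
    rw [himage, ← sub_eq_zero, hfactor, mul_eq_zero, sub_eq_zero, sub_eq_zero]
  have hroots : (∃ r, r ^ 2 = 1 + τ i * r) ↔ t i ^ Nat.card F ^ finrank F (K i) = t i := by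
    rw [← Units.val_inj, Units.val_pow_eq_pow_val, ← exists_algHom_apply_eq_iff (j i)]
    simp only [hroot]
    refine ⟨?_, fun ⟨r, hr⟩ ↦ ⟨r, .inl hr⟩⟩
    rintro ⟨r, hr | hr⟩
    · exact ⟨r, hr⟩
    · exact ⟨r⁻¹, by rw [map_inv₀, hr, Units.val_inv_eq_inv_val, inv_inv]⟩
  refine ⟨fun hτ ↦ hne (Units.ext (CharTwo.add_eq_zero.1 ?_)), ?_⟩
  · rw [← h i, hτ, map_zero]
  · rw [hroots, hpow]
    obtain hs | hs := Int.units_eq_one_or (sg i)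
    · simp [hs]
    · simpa [hs] using hne.symm

theorem HasEigenvalues.exists_aeval_torusElement_eq [Finite ι]
    (h : HasEigenvalues j τ t)
    (hreg : HasDistinctWeights (Nat.card F) (fun i ↦ finrank F (K i)) t) (v : ∀ i, K i × K i) :
    ∃ p : F[X], aeval (torusElement F τ : End F (∀ i, K i × K i)) p (fun _ ↦ (1, 0)) = v := by
  have := Fintype.ofFinite ι
  refine exists_aeval_apply_eq (fun p hp0 hp ↦ ?_) v
  rw [finrank_pi_prod_self, ← natCard_weightIndex]
  exact natCard_le_natDegree hp0 (Units.val_injective.comp hreg)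
    (aeval_weight_eq_zero (h.aeval_eq_zero hp))

theorem HasEigenvalues.exists_eq_weight_of_aeval_charpoly [Finite ι]
    (h : HasEigenvalues j τ t)
    (hreg : HasDistinctWeights (Nat.card F) (fun i ↦ finrank F (K i)) t) {z : Ωˣ}
    (hz : aeval (z : Ω) (torusElement F τ : End F (∀ i, K i × K i)).charpoly = 0) :
    ∃ e : WeightIndex fun i ↦ finrank F (K i), z = weight (Nat.card F) e t := by
  have := Fintype.ofFinite ι
  obtain ⟨e, he⟩ := exists_eq_of_aeval_eq_zero (LinearMap.charpoly_monic _).ne_zero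
    (Units.val_injective.comp hreg)
    (aeval_weight_eq_zero (h.aeval_eq_zero (by rw [LinearMap.aeval_self_charpoly]; rfl)))
    (by rw [LinearMap.charpoly_natDegree, finrank_pi_prod_self, natCard_weightIndex]) hz
  exact ⟨e, (Units.ext he).symm⟩

end Regular

section Centralizers

variable {F Ω ι : Type*} [Field F] [CharP F 2] [Fintype ι] {K : ι → Type*} [∀ i, Field (K i)]
  [∀ i, Algebra F (K i)] [Field Ω] [Algebra F Ω] {j : ∀ i, K i →ₐ[F] Ω}
  {τ : ∀ i, K i} {t : ι → Ωˣ} [Finite F] [∀ i, FiniteDimensional F (K i)]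

theorem HasEigenvalues.aeval_mul_aeval_inv (h : HasEigenvalues j τ t)
    {g : (∀ i, K i × K i) ≃ₗ[F] ∀ i, K i × K i} (hg : g ∈ Sp (torusForm F K)) {p : F[X]}
    (hp : aeval (torusElement F τ : End F (∀ i, K i × K i)) p = g) (i : ι) :
    aeval (t i : Ω) p * aeval (↑(t i)⁻¹ : Ω) p = 1 := by
  have hB := isSymplectic_torusForm (K := K) F
  have hadj := isAdjointPair_aeval (B := torusForm F K)
    (S := torusElement F τ) (T := (torusElement F τ).symm)
    (fun v w ↦ apply_left_of_mem_Sp (torusElement_mem_Sp F τ) v w) p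
  have hinv (w : ∀ i, K i × K i) :
      aeval ((torusElement F τ).symm : End F (∀ i, K i × K i)) p (g w) = w := by
    refine sub_eq_zero.1 (hB.nondegenerate.2 _ fun v ↦ ?_)
    rw [map_sub, ← hadj, hp, sub_eq_zero]
    exact hg v w
  have heigen := map_aeval_apply_of_eigen (φ := eigenfunctional j t i 1)
    (S := (torusElement F τ).symm) (z := ↑(t i)⁻¹) (fun v ↦ by
      obtain ⟨w, rfl⟩ := (torusElement F τ).surjective v
      rw [LinearEquiv.coe_coe, LinearEquiv.symm_apply_apply, h.eigenfunctional_torusElement]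
      simp) p (g (fun _ ↦ (1, 0)))
  rw [hinv, ← LinearEquiv.coe_coe, ← hp, h.eigenfunctional_aeval,
    eigenfunctional_one_zero] at heigen
  simpa [mul_comm] using heigen.symm

theorem HasEigenvalues.exists_eigenfunctional_eq_of_mem_centralizer (h : HasEigenvalues j τ t)
    {sg : ι → ℤˣ} (ht : t ∈ torus Ω (Nat.card F) (fun i ↦ finrank F (K i)) sg)
    (hreg : HasDistinctWeights (Nat.card F) (fun i ↦ finrank F (K i)) t) {g : Sp (torusForm F K)}
    (hg : g ∈ Subgroup.centralizer {torusSp F τ}) :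
    ∃ u ∈ torus Ω (Nat.card F) (fun i ↦ finrank F (K i)) sg, ∀ i (s : ℤˣ) v,
      eigenfunctional j t i s (g.1 v) = (u i ^ (s : ℤ) : Ωˣ) * eigenfunctional j t i s v := by
  rw [Subgroup.mem_centralizer_singleton_iff] at hg
  have hcomm : Commute (g.1 : End F (∀ i, K i × K i)) (torusElement F τ) :=
    LinearMap.ext fun v ↦ LinearEquiv.congr_fun (congrArg Subtype.val hg) v
  obtain ⟨p, hp⟩ := exists_aeval_eq_of_commute (h.exists_aeval_torusElement_eq hreg) hcomm
  let u (i : ι) : Ωˣ := .mkOfMulEqOne _ _ (h.aeval_mul_aeval_inv g.2 hp i)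
  have hu (i : ι) (s : ℤˣ) :
      ((u i ^ (s : ℤ) : Ωˣ) : Ω) = aeval ((t i ^ (s : ℤ) : Ωˣ) : Ω) p := by
    obtain rfl | rfl := Int.units_eq_one_or s
    · simp [u]
    · simpa [u, Units.val_inv_eq_inv_val] using
        (eq_inv_of_mul_eq_one_right (h.aeval_mul_aeval_inv g.2 hp i)).symm
  refine ⟨u, (mem_torus_iff Nat.card_pos).2 fun i ↦ Units.ext ?_, fun i s v ↦ ?_⟩
  · rw [hu, ← (mem_torus_iff Nat.card_pos).1 ht i, Units.val_pow_eq_pow_val,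
      Units.val_pow_eq_pow_val, aeval_pow_natCard_pow]
    rfl
  · rw [hu, ← h.eigenfunctional_aeval, hp]
    rfl

theorem HasEigenvalues.natCard_centralizer_le (h : HasEigenvalues j τ t)
    {sg : ι → ℤˣ} (ht : t ∈ torus Ω (Nat.card F) (fun i ↦ finrank F (K i)) sg)
    (hreg : HasDistinctWeights (Nat.card F) (fun i ↦ finrank F (K i)) t) :
    Nat.card (Subgroup.centralizer {torusSp F τ}) ≤
      Nat.card (torus Ω (Nat.card F) (fun i ↦ finrank F (K i)) sg) := by
  have : Finite (torus Ω (Nat.card F) (fun i ↦ finrank F (K i)) sg) :=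
    finite_torus Finite.one_lt_card fun i ↦ finrank_pos.ne'
  choose u hu hgu using fun g : Subgroup.centralizer {torusSp F τ} ↦
    h.exists_eigenfunctional_eq_of_mem_centralizer ht hreg g.2
  refine Nat.card_le_card_of_injective (fun g ↦ ⟨u g, hu g⟩) fun g g' hgg' ↦ ?_
  refine Subtype.ext (Subtype.ext (LinearEquiv.ext fun v ↦ sub_eq_zero.1 ?_))
  refine eq_zero_of_eigenfunctional_eq_zero (hreg.ne_inv fun i ↦ finrank_pos.ne')
    (j := j) fun i s ↦ ?_
  rw [map_sub, hgu, hgu, show u g = u g' from congrArg Subtype.val hgg', sub_self]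

theorem HasEigenvalues.exists_eq_weight_of_isConj (h : HasEigenvalues j τ t)
    (hreg : HasDistinctWeights (Nat.card F) (fun i ↦ finrank F (K i)) t) {τ' : ∀ i, K i}
    {t' : ι → Ωˣ} (h' : HasEigenvalues j τ' t') (hconj : IsConj (torusSp F τ) (torusSp F τ'))
    (i : ι) : ∃ e : WeightIndex fun i ↦ finrank F (K i), t' i = weight (Nat.card F) e t := by
  obtain ⟨g, hg⟩ := isConj_iff.1 hconj
  have hconj : g.1.conj (torusElement F τ : End F (∀ i, K i × K i)) = torusElement F τ' :=
    LinearMap.ext fun v ↦ LinearEquiv.congr_fun (congrArg Subtype.val hg) v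
  refine h.exists_eq_weight_of_aeval_charpoly hreg ?_
  rw [← LinearEquiv.charpoly_conj g.1, hconj]
  simpa using h'.aeval_eq_zero
    (by rw [LinearMap.aeval_self_charpoly, LinearMap.zero_apply]) i 1

end Centralizers

section Counting

variable {G T : Type*} [Group G] [Finite G]

theorem natCard_carrier_mul_natCard_centralizer (x : G) :
    Nat.card (ConjClasses.mk x).carrier * Nat.card (Subgroup.centralizer {x}) = Nat.card G := by
  classical
  have := Fintype.ofFinite G
  have h := MulAction.card_orbit_mul_card_stabilizer_eq_card_group (ConjAct G) x
  simp only [← Nat.card_eq_fintype_card] at h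
  rwa [Subgroup.nat_card_centralizer_nat_card_stabilizer, ← ConjAct.orbit_eq_carrier_conjClasses]

theorem natCard_mul_natCard_le_of_isConj [Finite T] (f : T → G) {N D : ℕ} {S : Set G}
    (hS : ∀ t x, IsConj (f t) x → x ∈ S)
    (hN : ∀ t, Nat.card (Subgroup.centralizer {f t}) ≤ N)
    (hD : ∀ t, Nat.card {t' // IsConj (f t) (f t')} ≤ D) :
    Nat.card T * Nat.card G ≤ N * (D * Nat.card S) := by
  classical
  have := Fintype.ofFinite G
  have := Fintype.ofFinite T
  let r (t : T) (x : G) : Prop := IsConj (f t) x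
  have habove (t : T) : Nat.card G ≤ N * (S.toFinset.bipartiteAbove r t).card := by
    have hcard : (S.toFinset.bipartiteAbove r t).card =
        Nat.card (ConjClasses.mk (f t)).carrier := by
      rw [Nat.card_coe_set_eq, ← Set.ncard_coe_finset]
      congr 1
      ext x
      rw [Finset.mem_coe, Finset.mem_bipartiteAbove, Set.mem_toFinset,
        ConjClasses.mem_carrier_iff_mk_eq, ConjClasses.mk_eq_mk_iff_isConj, isConj_comm]
      exact and_iff_right_of_imp (hS t x)
    rw [hcard, mul_comm, ← natCard_carrier_mul_natCard_centralizer (f t)]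
    exact Nat.mul_le_mul_left _ (hN t)
  have hbelow (x : G) : ((Finset.univ : Finset T).bipartiteBelow r x).card ≤ D := by
    obtain hempty | ⟨t, ht⟩ := (Finset.univ.bipartiteBelow r x).eq_empty_or_nonempty
    · simp [hempty]
    · refine le_trans ?_ (hD t)
      rw [Nat.card_eq_fintype_card, Fintype.card_subtype]
      refine Finset.card_le_card fun t' ht' ↦ ?_
      have ht : IsConj (f t) x := (Finset.mem_bipartiteBelow _).1 ht |>.2
      have ht' : IsConj (f t') x := (Finset.mem_bipartiteBelow _).1 ht' |>.2
      exact Finset.mem_filter.2 ⟨Finset.mem_univ _, ht.trans ht'.symm⟩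
  calc Nat.card T * Nat.card G
      ≤ ∑ t : T, N * (S.toFinset.bipartiteAbove r t).card := by
        simpa using Finset.card_nsmul_le_sum Finset.univ _ _ fun t _ ↦ habove t
    _ = N * ∑ x ∈ S.toFinset, ((Finset.univ : Finset T).bipartiteBelow r x).card := by
        rw [← Finset.mul_sum, Finset.sum_card_bipartiteAbove_eq_sum_card_bipartiteBelow]
    _ ≤ N * (S.toFinset.card * D) :=
        Nat.mul_le_mul_left _ (Finset.sum_le_card_nsmul _ _ _ fun x _ ↦ hbelow x)
    _ = N * (D * Nat.card S) := by rw [mul_comm D, Set.toFinset_card, Nat.card_eq_fintype_card]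

end Counting

/-! ### Counting conjugates of regular torus elements -/

section Transport

variable {F V W : Type*} [Field F] [AddCommGroup V] [Module F V] [AddCommGroup W] [Module F W]
  {B : BilinForm F V} {C : BilinForm F W}

/-- Conjugation by an isometry, as an isomorphism of symplectic groups. -/
def symplecticCongr (Φ : C.IsometryEquiv B) : Sp C ≃* Sp B where
  toFun y := ⟨Φ.toLinearEquiv.symm ≪≫ₗ y.1 ≪≫ₗ Φ.toLinearEquiv, fun v w ↦
    (Φ.map_app _ _).trans <| (y.2 _ _).trans (Φ.symm.map_app w v)⟩
  invFun x := ⟨Φ.toLinearEquiv ≪≫ₗ x.1 ≪≫ₗ Φ.toLinearEquiv.symm, fun v w ↦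
    (Φ.symm.map_app _ _).trans <| (x.2 _ _).trans (Φ.map_app w v)⟩
  left_inv y := Subtype.ext <| LinearEquiv.ext fun w ↦
    (Φ.toLinearEquiv.symm_apply_apply _).trans (congrArg y.1 (Φ.toLinearEquiv.symm_apply_apply w))
  right_inv x := Subtype.ext <| LinearEquiv.ext fun v ↦
    (Φ.toLinearEquiv.apply_symm_apply _).trans (congrArg x.1 (Φ.toLinearEquiv.apply_symm_apply v))
  map_mul' x _ := Subtype.ext <| LinearEquiv.ext fun _ ↦
    congrArg (fun w ↦ Φ.toLinearEquiv (x.1 w)) (Φ.toLinearEquiv.symm_apply_apply _).symm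

theorem FixesQuadraticForm.symplecticCongr [CharP F 2] (Φ : C.IsometryEquiv B) {c : ArfGroup F}
    {y : Sp C} (hy : FixesQuadraticForm C c y) :
    FixesQuadraticForm B c (symplecticCongr Φ y) := by
  obtain ⟨Q, hQ, hQy⟩ := hy
  refine ⟨_, hQ.comp Φ.symm, fun v ↦ ?_⟩
  change Q (Φ.toLinearEquiv.symm (Φ.toLinearEquiv (y.1 (Φ.toLinearEquiv.symm v)))) = _
  rw [LinearEquiv.symm_apply_apply, hQy]
  rfl

theorem map_mem_invtSubmodule_symplecticCongr (Φ : C.IsometryEquiv B) {y : Sp C}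
    {U : Submodule F W} (hU : U ∈ End.invtSubmodule (y.1 : End F W)) :
    U.map (Φ.toLinearEquiv : W →ₗ[F] V) ∈
      End.invtSubmodule ((symplecticCongr Φ y).1 : End F V) :=
  Φ.toLinearEquiv.map_mem_invtSubmodule_conj_iff.2 hU

theorem HasNondegenerateInvariant.symplecticCongr (Φ : C.IsometryEquiv B) {k : ℕ} {y : Sp C}
    (hy : HasNondegenerateInvariant C k y) :
    HasNondegenerateInvariant B k (symplecticCongr Φ y) := by
  obtain ⟨U, hUy, hU, hk⟩ := hy
  refine ⟨_, map_mem_invtSubmodule_symplecticCongr Φ hUy, ?_,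
    (LinearEquiv.finrank_map_eq Φ.toLinearEquiv U).trans hk⟩
  rw [← map_orthogonal]
  exact Submodule.disjoint_map Φ.toLinearEquiv.injective hU

theorem HasIsotropicInvariant.symplecticCongr (Φ : C.IsometryEquiv B) {k : ℕ} {y : Sp C}
    (hy : HasIsotropicInvariant C k y) : HasIsotropicInvariant B k (symplecticCongr Φ y) := by
  obtain ⟨U, hUy, hU, hk⟩ := hy
  refine ⟨_, map_mem_invtSubmodule_symplecticCongr Φ hUy, ?_,
    (LinearEquiv.finrank_map_eq Φ.toLinearEquiv U).trans hk⟩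
  rw [← map_orthogonal]
  exact Submodule.map_mono hU

theorem PreservesFieldStructure.symplecticCongr (Φ : C.IsometryEquiv B) {L : Type*} [Field L]
    [Algebra F L] {y : Sp C} (hy : PreservesFieldStructure L C y) :
    PreservesFieldStructure L B (symplecticCongr Φ y) := by
  obtain ⟨ρ, hadj, hcomm⟩ := hy
  let conj := Φ.toLinearEquiv.conjAlgEquiv F
  refine ⟨conj.toAlgHom.comp ρ, fun a v w ↦ ?_, fun a ↦ (hcomm a).map conj⟩
  obtain ⟨v, rfl⟩ := Φ.toLinearEquiv.surjective v
  obtain ⟨w, rfl⟩ := Φ.toLinearEquiv.surjective w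
  have hconj (u : W) : conj (ρ a) (Φ.toLinearEquiv u) = Φ.toLinearEquiv (ρ a u) :=
    congrArg (fun u ↦ Φ.toLinearEquiv (ρ a u)) (Φ.toLinearEquiv.symm_apply_apply u)
  change B (conj (ρ a) _) _ = B _ (conj (ρ a) _)
  rw [hconj, hconj]
  exact (Φ.map_app _ _).trans ((hadj a v w).trans (Φ.map_app _ _).symm)

end Transport

instance {F V : Type*} [Field F] [Finite F] [AddCommGroup V] [Module F V] [FiniteDimensional F V]
    (B : BilinForm F V) : Finite (Sp B) :=
  have : Finite V := Module.finite_of_finite F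
  have : Finite (V ≃ₗ[F] V) := DFunLike.finite _
  inferInstance

section TorusCount

variable {F V ι : Type*} [Field F] [Finite F] [CharP F 2] [Fintype ι] {K : ι → Type*}
  [∀ i, Field (K i)] [∀ i, Algebra F (K i)] [∀ i, FiniteDimensional F (K i)]

theorem natCard_mul_natCard_Sp_torusForm_le (sg : ι → ℤˣ) {S : Set (Sp (torusForm F K))}
    (hS : ∀ τ x, HasSplittingType sg τ → IsConj (torusSp F τ) x → x ∈ S) :
    Nat.card F * Nat.card (Sp (torusForm F K)) ≤
      Nat.card F * (2 ^ (∑ i, finrank F (K i)) * (∑ i, finrank F (K i)).factorial * Nat.card S) +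
        16 * (∑ i, finrank F (K i)) ^ 2 * Nat.card (Sp (torusForm F K)) := by
  let q := Nat.card F
  let d (i : ι) := finrank F (K i)
  let Ω := AlgebraicClosure F
  let j (i : ι) : K i →ₐ[F] Ω := IsAlgClosed.lift
  have hd (i : ι) : d i ≠ 0 := finrank_pos.ne'
  have hq : 2 ≤ q := Finite.one_lt_card
  have hqΩ : (q : Ω) = 0 := by
    have := Fintype.ofFinite F
    rw [← map_natCast (algebraMap F Ω) q, show q = _ from Nat.card_eq_fintype_card,
      FiniteField.cast_card_eq_zero, map_zero]
  have : Finite (torus Ω q d sg) := finite_torus hq hd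
  let T := {t : torus Ω q d sg // HasDistinctWeights q d t.1}
  choose τ hτ using fun t : T ↦ exists_hasEigenvalues j t.1.2
  have hT : q * Nat.card (torus Ω q d sg) ≤
      q * Nat.card T + 16 * (∑ i, d i) ^ 2 * Nat.card (torus Ω q d sg) :=
    mul_natCard_torus_le hq hqΩ hd
  have hcount := natCard_mul_natCard_le_of_isConj (fun t : T ↦ torusSp F (τ t))
    (fun t x ↦ hS (τ t) x ((hτ t).hasSplittingType t.1.2 t.2))
    (fun t ↦ (hτ t).natCard_centralizer_le t.1.2 t.2)
    (fun t ↦ natCard_le_of_forall_exists_eq_weight hd (f := fun t' ↦ t'.1.1.1)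
      (Subtype.val_injective.comp <| Subtype.val_injective.comp Subtype.val_injective)
      (fun t' ↦ t'.1.2) fun t' ↦ (hτ t).exists_eq_weight_of_isConj t.2 (hτ t'.1) t'.2)
  refine Nat.le_of_mul_le_mul_left ?_ (Nat.card_pos (α := torus Ω q d sg))
  nlinarith [Nat.mul_le_mul_right (Nat.card (Sp (torusForm F K))) hT,
    Nat.mul_le_mul_left q hcount]

variable [AddCommGroup V] [Module F V] [FiniteDimensional F V] {B : BilinForm F V}

theorem natCard_mul_natCard_Sp_le (hB : IsSymplectic B) {m : ℕ} (hV : finrank F V = 2 * m)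
    (hm : ∑ i, finrank F (K i) = m) (sg : ι → ℤˣ) {S : Set (Sp B)}
    (hS : ∀ (Φ : (torusForm F K).IsometryEquiv B) (τ : ∀ i, K i), HasSplittingType sg τ →
      symplecticCongr Φ (torusSp F τ) ∈ S) :
    Nat.card F * Nat.card (Sp B) ≤
      Nat.card F * (2 ^ m * m.factorial * Nat.card S) + 16 * m ^ 2 * Nat.card (Sp B) := by
  subst hm
  obtain ⟨Φ⟩ := (isSymplectic_torusForm (K := K) F).equivalent hB
    (by rw [finrank_pi_prod_self, hV])
  have hcard : Nat.card (symplecticCongr Φ ⁻¹' S) = Nat.card S :=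
    Nat.card_congr ((symplecticCongr Φ).toEquiv.subtypeEquiv fun _ ↦ Iff.rfl)
  rw [← hcard, ← Nat.card_congr (symplecticCongr Φ).toEquiv]
  refine natCard_mul_natCard_Sp_torusForm_le sg fun τ x hτ hx ↦ ?_
  obtain ⟨g, rfl⟩ := isConj_iff.1 hx
  exact hS ((isometryEquivOfMemSp g.2).trans Φ) τ hτ

end TorusCount

/-! ### Types of invariant quadratic forms -/

section QuadraticType

variable {F V : Type*} [Field F] [CharP F 2] [AddCommGroup V] [Module F V] {B : BilinForm F V}

/-- The map `x` preserves a quadratic form of type `s` polarizing to `B`, where `s = 1` is plus type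
(trivial Arf invariant) and `s = -1` is minus type. -/
def HasQuadraticType (B : BilinForm F V) (s : ℤˣ) (x : V ≃ₗ[F] V) : Prop :=
  ∃ c, (c = 0 ↔ s = 1) ∧ FixesQuadraticForm B c x

theorem HasQuadraticType.symplecticCongr {W : Type*} [AddCommGroup W] [Module F W]
    {C : BilinForm F W} (Φ : C.IsometryEquiv B) {s : ℤˣ} {y : Sp C} (hy : HasQuadraticType C s y) :
    HasQuadraticType B s (symplecticCongr Φ y) :=
  hy.imp fun _ ↦ And.imp_right (FixesQuadraticForm.symplecticCongr Φ)

variable [Finite F]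

theorem not_invGen_of_hasQuadraticType (hF : 2 < Nat.card F) [Nontrivial V]
    [FiniteDimensional F V] (hB : IsSymplectic B) {s : ℤˣ} {x y : Sp B}
    (hx : HasQuadraticType B s x) (hy : HasQuadraticType B s y) : ¬ InvGen x y := by
  obtain ⟨c, hc, hcx⟩ := hx
  obtain ⟨d, hd, hdy⟩ := hy
  obtain rfl : c = d := by
    by_cases hs : s = 1
    · rw [hc.2 hs, hd.2 hs]
    · exact arfGroup_eq_of_ne_zero (mt hc.1 hs) (mt hd.1 hs)
  exact not_invGen_of_fixesQuadraticForm hF hB hcx hdy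

theorem hasQuadraticType_one_or_neg_one [FiniteDimensional F V] (hB : IsSymplectic B) {K : Type*}
    [Field K] [Algebra F K] [FiniteDimensional F K] (hdim : finrank F V = 2 * finrank F K)
    {x : V ≃ₗ[F] V} (hx : x ∈ Sp B) : HasQuadraticType B 1 x ∨ HasQuadraticType B (-1) x := by
  obtain ⟨Φ⟩ := hB.equivalent (isSymplectic_tracePairing F K)
    (by rw [hdim, finrank_prod, two_mul])
  obtain ⟨c, hc⟩ := exists_fixesQuadraticForm hB
    (polarBilin_comp_eq (polarBilin_traceProd F) Φ) ((isHyperbolic_traceProd F).comp _) hx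
  by_cases h0 : c = 0
  · exact .inl ⟨c, by simp [h0], hc⟩
  · exact .inr ⟨c, by simp [h0], hc⟩

theorem arfGroup_add_eq_zero_iff {c d : ArfGroup F} : c + d = 0 ↔ (c = 0 ↔ d = 0) := by
  by_cases hc : c = 0
  · simp [hc]
  by_cases hd : d = 0
  · simp [hd]
  simpa [hc, hd, add_eq_zero_iff_eq_neg] using arfGroup_eq_of_ne_zero hc (neg_ne_zero.2 hd)

theorem arfGroup_sum_eq_zero_iff {ι : Type*} (t : Finset ι) {c : ι → ArfGroup F} {s : ι → ℤˣ}
    (h : ∀ i, c i = 0 ↔ s i = 1) : ∑ i ∈ t, c i = 0 ↔ ∏ i ∈ t, s i = 1 := by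
  have hmul (u v : ℤˣ) : u * v = 1 ↔ (u = 1 ↔ v = 1) := by decide +revert
  classical
  induction t using Finset.induction_on with
  | empty => simp
  | insert i t hi ih =>
    rw [Finset.sum_insert hi, Finset.prod_insert hi, arfGroup_add_eq_zero_iff, hmul]
    exact iff_congr (h i) ih

theorem HasSplittingType.hasQuadraticType {ι : Type*} [Fintype ι] {K : ι → Type*}
    [∀ i, Field (K i)] [∀ i, Algebra F (K i)] [∀ i, FiniteDimensional F (K i)] {sg : ι → ℤˣ}
    {τ : ∀ i, K i} (hτ : HasSplittingType sg τ) :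
    HasQuadraticType (torusForm F K) (∏ i, sg i) (torusSp F τ) :=
  ⟨_, arfGroup_sum_eq_zero_iff _ fun i ↦
    (mk_trace_inv_arfGroup_eq_zero_iff (hτ i).1).trans (hτ i).2,
    fixesQuadraticForm_torusSp F fun i ↦ (hτ i).1⟩

end QuadraticType

/-! ### Choice of the torus -/

section NonGenerators

variable {F V : Type*} [Field F] [Finite F] [AddCommGroup V] [Module F V]
  [FiniteDimensional F V] {B : BilinForm F V} {m : ℕ}

/-- The elements of `Sp B` that invariably generate it together with no element of `Y`. -/
def nonGenerators (Y : Set (Sp B)) : Set (Sp B) := {y | ∀ x ∈ Y, ¬ InvGen x y}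

/-- With `q = |F|` and `m` the rank of `Sp B`, the set `S` has density at least
`1 / (2 ^ m * m !) - 16 * m ^ 2 / q` in `Sp B`. Here `2 ^ m * m !` is the order of the Weyl group,
and denominators are cleared. -/
def HasLargeDensity (m : ℕ) (S : Set (Sp B)) : Prop :=
  Nat.card F * Nat.card (Sp B) ≤
    Nat.card F * (2 ^ m * m.factorial * Nat.card S) + 16 * m ^ 2 * Nat.card (Sp B)

theorem HasLargeDensity.natCard_compl_le {S : Set (Sp B)} (hS : HasLargeDensity m S) :
    (Nat.card (Sᶜ : Set (Sp B)) : ℝ) ≤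
      (1 - 1 / (2 ^ m * m.factorial) + 16 * m ^ 2 / Nat.card F) * Nat.card (Sp B) := by
  have hcompl : (Nat.card S : ℝ) + Nat.card (Sᶜ : Set (Sp B)) = Nat.card (Sp B) :=
    mod_cast Set.ncard_add_ncard_compl S
  have hq : (0 : ℝ) < Nat.card F := mod_cast Finite.card_pos
  have hN : (1 : ℝ) ≤ 2 ^ m * m.factorial := mod_cast Nat.one_le_iff_ne_zero.2 (by positivity)
  have hdensity : (Nat.card F : ℝ) * Nat.card (Sp B) ≤
      Nat.card F * (2 ^ m * m.factorial * Nat.card S) + 16 * m ^ 2 * Nat.card (Sp B) := mod_cast hS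
  generalize (2 ^ m * m.factorial : ℝ) = N at *
  have herror : 0 ≤ (16 * m ^ 2 / Nat.card F * Nat.card (Sp B) : ℝ) := by positivity
  have hratio : (Nat.card (Sp B) : ℝ) / N ≤
      Nat.card S + 16 * m ^ 2 / Nat.card F * Nat.card (Sp B) := by
    rw [div_le_iff₀ (by positivity)]
    calc (Nat.card (Sp B) : ℝ)
        ≤ N * Nat.card S + 16 * m ^ 2 / Nat.card F * Nat.card (Sp B) := by
          rw [← mul_le_mul_iff_right₀ hq]
          exact hdensity.trans_eq (by field_simp)
      _ ≤ (Nat.card S + 16 * m ^ 2 / Nat.card F * Nat.card (Sp B)) * N := by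
          linarith [le_mul_of_one_le_right herror hN]
  linarith [one_div_mul_eq_div N (Nat.card (Sp B) : ℝ)]

variable [CharP F 2]

theorem hasLargeDensity_nonGenerators_of_split (hF : 2 < Nat.card F) (hB : IsSymplectic B)
    (hm : 0 < m) (hV : finrank F V = 2 * m) {Y : Set (Sp B)}
    (hY : ∀ x ∈ Y, HasQuadraticType B 1 x ∨
      (∃ k, 0 < k ∧ k < m ∧ HasNondegenerateInvariant B k x) ∨
      ∃ k, 0 < k ∧ k ≤ m ∧ HasIsotropicInvariant B k x) :
    HasLargeDensity m (nonGenerators Y) := by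
  have : Nontrivial V := nontrivial_of_finrank_pos (R := F) (by lia)
  refine natCard_mul_natCard_Sp_le (K := fun _ : Fin m ↦ F) hB hV (by simp) 1
    fun Φ τ hτ x hx ↦ ?_
  have htype := hτ.hasQuadraticType (F := F)
  simp only [Pi.one_apply, Finset.prod_const_one] at htype
  obtain h | ⟨k, hk, hkm, h⟩ | ⟨k, hk, hkm, h⟩ := hY x hx
  · exact not_invGen_of_hasQuadraticType hF hB h (htype.symplecticCongr Φ)
  · obtain ⟨S, -, hS⟩ := Finset.exists_subset_card_eq (s := (Finset.univ : Finset (Fin m)))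
      (n := k) (by simpa using hkm.le)
    have hy := hasNondegenerateInvariant_torusSp F τ S
    rw [finrank_self, Finset.sum_const, hS, smul_eq_mul, mul_one] at hy
    exact not_invGen_of_hasNondegenerateInvariant hB hk (by lia) h (hy.symplecticCongr Φ)
  · obtain ⟨S, -, hS⟩ := Finset.exists_subset_card_eq (s := (Finset.univ : Finset (Fin m)))
      (n := k) (by simpa using hkm)
    have hy := hτ.hasIsotropicInvariant F (S := S) fun _ _ ↦ rfl
    rw [finrank_self, Finset.sum_const, hS, smul_eq_mul, mul_one] at hy
    exact not_invGen_of_hasIsotropicInvariant hB hk (by lia) h (hy.symplecticCongr Φ)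

theorem hasLargeDensity_nonGenerators_of_cyclic {L : Type*} [Field L] [Algebra F L]
    (hF : 2 < Nat.card F) (hB : IsSymplectic B) (hL : finrank F L = m) (hm : 2 ≤ m)
    (hV : finrank F V = 2 * m) (s : ℤˣ) {Y : Set (Sp B)}
    (hY : ∀ x ∈ Y, HasQuadraticType B s x ∨ PreservesFieldStructure L B x) :
    HasLargeDensity m (nonGenerators Y) := by
  have : Nontrivial V := nontrivial_of_finrank_pos (R := F) (by lia)
  have : FiniteDimensional F L := .of_finrank_pos (by lia)
  refine natCard_mul_natCard_Sp_le (K := fun _ : Unit ↦ L) hB hV (by simpa) (fun _ ↦ s)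
    fun Φ τ hτ x hx ↦ ?_
  have htype := hτ.hasQuadraticType (F := F)
  simp only [Finset.univ_unique, Finset.prod_singleton] at htype
  obtain h | h := hY x hx
  · exact not_invGen_of_hasQuadraticType hF hB h (htype.symplecticCongr Φ)
  · exact not_invGen_of_preservesFieldStructure hB (by rw [hV, hL]) (by lia) h
      ((preservesFieldStructure_torusSp F τ).symplecticCongr Φ)

theorem hasLargeDensity_nonGenerators_of_mixed (hF : 2 < Nat.card F) (hB : IsSymplectic B)
    (hV : finrank F V = 2 * m) {k : ℕ} (hk : 0 < k) (hkm : k < m) {Y : Set (Sp B)}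
    (hY : ∀ x ∈ Y, HasQuadraticType B (-1) x ∨ HasNondegenerateInvariant B k x ∨
      HasIsotropicInvariant B k x ∨ SwapsOrthogonal B x ∧ m = 2 * k) :
    HasLargeDensity m (nonGenerators Y) := by
  have : Nontrivial V := nontrivial_of_finrank_pos (R := F) (by lia)
  let d (b : Bool) : ℕ := if b then k else m - k
  have hd (b : Bool) : NeZero (d b) := ⟨by cases b <;> simp [d] <;> lia⟩
  have := Fact.mk Nat.prime_two
  let K (b : Bool) := FiniteField.Extension F 2 (d b)
  have hK (b : Bool) : finrank F (K b) = d b := FiniteField.finrank_extension F 2 (d b)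
  refine natCard_mul_natCard_Sp_le (K := K) hB hV (by simp [hK, d]; lia)
    (fun b ↦ if b then 1 else -1) fun Φ τ hτ x hx ↦ ?_
  have htype := hτ.hasQuadraticType (F := F)
  simp only [Fintype.prod_bool, reduceIte, one_mul, Bool.false_eq_true] at htype
  have hnondeg := hasNondegenerateInvariant_torusSp F τ {true}
  have hiso := hτ.hasIsotropicInvariant F (S := {true}) (by simp)
  rw [Finset.sum_singleton, hK] at hnondeg hiso
  obtain h | h | h | ⟨h, hmk⟩ := hY x hx
  · exact not_invGen_of_hasQuadraticType hF hB h (htype.symplecticCongr Φ)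
  · exact not_invGen_of_hasNondegenerateInvariant hB hk (by lia) h (hnondeg.symplecticCongr Φ)
  · exact not_invGen_of_hasIsotropicInvariant hB hk (by lia) h (hiso.symplecticCongr Φ)
  · exact not_invGen_of_swapsOrthogonal hB hk (by lia) h (hnondeg.symplecticCongr Φ)

theorem exists_hasInvariant_or_swapsOrthogonal {L : Type*} [Field L] [Algebra F L]
    (hB : IsSymplectic B) (hL : finrank F L = m) (hm : 2 ≤ m) (hV : finrank F V = 2 * m)
    {x : V ≃ₗ[F] V} (hx : x ∈ Sp B) (hxL : ¬ PreservesFieldStructure L B x) :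
    ∃ k, 0 < k ∧ k < m ∧ (HasNondegenerateInvariant B k x ∨ HasIsotropicInvariant B k x ∨
      SwapsOrthogonal B x ∧ m = 2 * k) := by
  subst hL
  obtain h | ⟨k, hk, hkm, h⟩ | h :=
    preservesFieldStructure_or_hasInvariant_or_swapsOrthogonal hB hx hm hV
  · exact absurd h hxL
  · exact ⟨k, hk, hkm, h.imp_right .inl⟩
  · obtain ⟨k, hk⟩ := h.exists_finrank_eq hB
    exact ⟨k, by lia, by lia, .inr (.inr ⟨h, by lia⟩)⟩

/-- Elements that fail the hypotheses of `hasLargeDensity_nonGenerators_of_split` and of both cases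
of `hasLargeDensity_nonGenerators_of_cyclic` are pairwise distinct, hence exhaust `Y`. -/
theorem hasLargeDensity_nonGenerators_of_two_lt (hF : 2 < Nat.card F) (hB : IsSymplectic B)
    (hm : 2 ≤ m) (hV : finrank F V = 2 * m) {Y : Finset (Sp B)} (hY : Y.card ≤ 3) :
    HasLargeDensity m (nonGenerators (Y : Set (Sp B))) := by
  classical
  have : Nontrivial V := nontrivial_of_finrank_pos (R := F) (by lia)
  have := Fact.mk Nat.prime_two
  have : NeZero m := ⟨by lia⟩
  let L := FiniteField.Extension F 2 m
  have hL : finrank F L = m := FiniteField.finrank_extension F 2 m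
  by_contra hsmall
  obtain ⟨x₁, hx₁, h₁⟩ := not_forall₂.1 <|
    mt (hasLargeDensity_nonGenerators_of_split hF hB (by lia) hV) hsmall
  obtain ⟨x₂, hx₂, h₂⟩ := not_forall₂.1 <|
    mt (hasLargeDensity_nonGenerators_of_cyclic hF hB hL hm hV 1) hsmall
  obtain ⟨x₃, hx₃, h₃⟩ := not_forall₂.1 <|
    mt (hasLargeDensity_nonGenerators_of_cyclic hF hB hL hm hV (-1)) hsmall
  rw [not_or] at h₁ h₂ h₃
  have htype (x : Sp B) := hasQuadraticType_one_or_neg_one hB (hL.symm ▸ hV) x.2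
  have hfield₁ : PreservesFieldStructure L B x₁ := by
    have := hasInvariant_or_preservesFieldStructure hB x₁.2 (hL.symm ▸ hV)
    rw [hL, ← or_assoc] at this
    exact this.resolve_left h₁.2
  have h₁₂ : x₁ ≠ x₂ := by rintro rfl; exact h₂.2 hfield₁
  have h₁₃ : x₁ ≠ x₃ := by rintro rfl; exact h₃.2 hfield₁
  have h₂₃ : x₂ ≠ x₃ := by rintro rfl; exact (htype x₂).elim h₂.1 h₃.1
  have hYeq : {x₁, x₂, x₃} = Y := Finset.eq_of_subset_of_card_le
    (Finset.insert_subset hx₁ (Finset.insert_subset hx₂ (Finset.singleton_subset_iff.2 hx₃)))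
    (by rwa [Finset.card_eq_three.2 ⟨x₁, x₂, x₃, h₁₂, h₁₃, h₂₃, rfl⟩])
  obtain ⟨k, hk, hkm, hx₃k⟩ := exists_hasInvariant_or_swapsOrthogonal hB hL hm hV x₃.2 h₃.2
  refine hsmall (hasLargeDensity_nonGenerators_of_mixed hF hB hV hk hkm ?_)
  simp only [← hYeq, Finset.coe_insert, Finset.coe_singleton, Set.forall_mem_insert,
    Set.mem_singleton_iff, forall_eq]
  exact ⟨.inl ((htype x₁).resolve_left h₁.1), .inl ((htype x₂).resolve_left h₂.1), .inr hx₃k⟩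

theorem hasLargeDensity_nonGenerators (hB : IsSymplectic B) (hm : 2 ≤ m)
    (hV : finrank F V = 2 * m) {Y : Finset (Sp B)} (hY : Y.card ≤ 3) :
    HasLargeDensity m (nonGenerators (Y : Set (Sp B))) := by
  obtain hF | hF := lt_or_ge 2 (Nat.card F)
  · exact hasLargeDensity_nonGenerators_of_two_lt hF hB hm hV hY
  · exact (Nat.mul_le_mul_right _ (by nlinarith)).trans (Nat.le_add_left _ _)

end NonGenerators

/-! ### The matrix symplectic group -/

section MatrixGroup

theorem invGen_map {G H : Type*} [Group G] [Group H] (e : G ≃* H) {x y : G} (h : InvGen x y) :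
    InvGen (e x) (e y) := by
  intro a b
  have hclosure := congrArg (Subgroup.map e.toMonoidHom) (h (e.symm a) (e.symm b))
  rw [MonoidHom.map_closure, Set.image_pair,
    Subgroup.map_top_of_surjective _ e.surjective] at hclosure
  simpa using hclosure

variable (F l : Type*) [Field F] [Fintype l] [DecidableEq l]

/-- The bilinear form on column vectors with Gram matrix `Matrix.J`. -/
noncomputable def standardForm : BilinForm F (l ⊕ l → F) := (Matrix.J l F).toBilin'

theorem standardForm_apply (v w : l ⊕ l → F) :
    standardForm F l v w = ∑ i, (v (.inr i) * w (.inl i) - v (.inl i) * w (.inr i)) := by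
  rw [standardForm, Matrix.toBilin'_apply', Matrix.J, Matrix.fromBlocks_mulVec, dotProduct,
    Fintype.sum_sum_type, Finset.sum_sub_distrib]
  simp [Function.comp_def, Matrix.neg_mulVec]
  ring

theorem isSymplectic_standardForm : IsSymplectic (standardForm F l) where
  isAlt v := by
    rw [standardForm_apply]
    exact Finset.sum_eq_zero fun i _ ↦ by ring
  nondegenerate :=
    BilinForm.nondegenerate_toBilin'_of_det_ne_zero' _ (Matrix.isUnit_det_J l F).ne_zero

variable {F l}

theorem mem_symplecticGroup_iff_forall_apply {A : Matrix (l ⊕ l) (l ⊕ l) F} :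
    A ∈ Matrix.symplecticGroup l F ↔
      ∀ v w, standardForm F l (A.toLin' v) (A.toLin' w) = standardForm F l v w := by
  rw [SymplecticGroup.mem_iff', ← (Matrix.toBilin' (R₁ := F) (n := l ⊕ l)).injective.eq_iff,
    ← Matrix.toBilin'_comp, LinearMap.ext_iff₂]
  rfl

variable (F l)

/-- A symplectic matrix acts on column vectors as an isometry of `standardForm`. -/
noncomputable def symplecticGroupEquiv : Matrix.symplecticGroup l F ≃* Sp (standardForm F l) where
  toFun A := ⟨Matrix.toLin'OfInv (congrArg Subtype.val (inv_mul_cancel A))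
    (congrArg Subtype.val (mul_inv_cancel A)), mem_symplecticGroup_iff_forall_apply.1 A.2⟩
  invFun g := ⟨LinearMap.toMatrix' g.1, mem_symplecticGroup_iff_forall_apply.2 <| by
    rw [Matrix.toLin'_toMatrix']; exact g.2⟩
  left_inv A := Subtype.ext (LinearMap.toMatrix'_toLin' A.1)
  right_inv g := Subtype.ext <| LinearEquiv.toLinearMap_injective <|
    Matrix.toLin'_toMatrix' (g.1 : (l ⊕ l → F) →ₗ[F] l ⊕ l → F)
  map_mul' A A' := Subtype.ext <| LinearEquiv.toLinearMap_injective (Matrix.toLin'_mul A.1 A'.1)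

end MatrixGroup

end SpInvGen

open SpInvGen

theorem stmt_16 :
    ∀ m : ℕ, 2 ≤ m →
      ∃ C : ℝ, 0 < C ∧
        ∀ (F : Type) [Field F] [Fintype F], Even (Fintype.card F) →
          ∀ Y : Finset (Matrix.symplecticGroup (Fin m) F), Y.card ≤ 3 →
            (Nat.card {y : Matrix.symplecticGroup (Fin m) F //
                ∃ x ∈ Y, InvGen x y} : ℝ) ≤
              (1 - 1 / (2 ^ m * Nat.factorial m) + C / Fintype.card F) *
                Nat.card (Matrix.symplecticGroup (Fin m) F) := by
  intro m hm
  refine ⟨16 * m ^ 2, by positivity, fun F _ _ hF Y hY ↦ ?_⟩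
  have hchar : ringChar F = 2 := FiniteField.even_card_iff_char_two.2 (Nat.even_iff.1 hF)
  have : CharP F 2 := ringChar.of_eq hchar
  let e := symplecticGroupEquiv F (Fin m)
  have hbound := (hasLargeDensity_nonGenerators (isSymplectic_standardForm F (Fin m)) hm
    (by simp [two_mul]) (Y := Y.map e.toEquiv.toEmbedding) (by rwa [Y.card_map])).natCard_compl_le
  rw [← Nat.card_eq_fintype_card, Nat.card_congr e.toEquiv]
  refine le_trans (Nat.cast_le.2 (Nat.card_le_card_of_injective
    (Subtype.map e fun y ⟨x, hx, hxy⟩ hy ↦ ?_) (Subtype.map_injective _ e.injective))) hbound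
  exact hy (e x) (Finset.mem_coe.2 (Finset.mem_map_of_mem _ hx)) (invGen_map e hxy)
end

section
/- Let F be a finite field and let K be a field extension of F whose degree [K : F] = b is a prime number. Let V be a nonzero finite-dimensional vector space over K and let f be a K-linear automorphism of V. Regard V as an F-vector space and f as an F-linear endomorphism by restriction of scalars, and assume that the characteristic polynomial of this F-linear endomorphism is squarefree. Then every minimal nonzero f-invariant F-subspace W of V has F-dimension divisible by b. -/
/-!
Let `W` be any `f`-invariant `F`-subspace. The characteristic polynomial of `f` is the product of
the characteristic polynomials `p` of `f` on `W` and `q` of `f` on `V ⧸ W`; as it is squarefree,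
`p` and `q` are coprime. By Cayley–Hamilton `p(f)` kills `W` and `q(f)` maps `V` into `W`, and
coprimality then forces `W = ker p(f)`. Such a kernel is stable under everything that commutes
with `f`, in particular under the scalars of `K`, so `W` is a `K`-subspace.
-/

open Polynomial Module

section Intertwining

variable {R M N : Type*} [CommSemiring R] [AddCommMonoid M] [Module R M] [AddCommMonoid N]
  [Module R N] {f : End R M} {g : End R N} {φ : M →ₗ[R] N}

theorem map_aeval_apply_of_comp_eq (h : φ ∘ₗ f = g ∘ₗ φ) (p : R[X]) (x : M) :
    φ (aeval f p x) = aeval g p (φ x) := by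
  induction p using Polynomial.induction_on' with
  | add p q hp hq => simp only [map_add, LinearMap.add_apply, hp, hq]
  | monomial n a =>
    have hpow : (g ^ n) (φ x) = φ ((f ^ n) x) :=
      LinearMap.congr_fun (End.commute_pow_left_of_commute h.symm n) x
    simp only [aeval_monomial, End.mul_apply, algebraMap_end_apply, map_smul, hpow]

theorem ker_aeval_mem_invtSubmodule_of_commute {f g : End R M} (h : Commute f g) (p : R[X]) :
    LinearMap.ker (aeval f p) ∈ g.invtSubmodule := fun x hx ↦ by
  rw [Submodule.mem_comap, LinearMap.mem_ker, ← map_aeval_apply_of_comp_eq h.symm.eq,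
    LinearMap.mem_ker.mp hx, map_zero]

end Intertwining

section Invariant

variable {R M : Type*} [CommRing R] [AddCommGroup M] [Module R M] {f : End R M}
  {W : Submodule R M}

theorem charpoly_eq_charpoly_restrict_mul_charpoly_mapQ [Module.Finite R M] [Module.Free R M]
    [Module.Finite R W] [Module.Free R W] [Module.Free R (M ⧸ W)] (hW : W ≤ W.comap f) :
    f.charpoly = (f.restrict hW).charpoly * (W.mapQ W f hW).charpoly := by
  let bW := Free.chooseBasis R W
  let bQ := Free.chooseBasis R (M ⧸ W)
  let b := bW.sumQuot bQ
  let A := LinearMap.toMatrix b b f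
  have h₁₁ : A.toBlocks₁₁ = LinearMap.toMatrix bW bW (f.restrict hW) := by
    ext i j
    simpa [A, b, Matrix.toBlocks₁₁, LinearMap.toMatrix_apply, LinearMap.restrict_apply] using
      bW.sumQuot_repr_inl_of_mem bQ _ (hW (bW j).2) i
  have h₂₁ : A.toBlocks₂₁ = 0 := by
    ext i j
    simpa [A, b, Matrix.toBlocks₂₁, LinearMap.toMatrix_apply] using
      bW.sumQuot_repr_inr_of_mem bQ _ (hW (bW j).2) i
  have h₂₂ : A.toBlocks₂₂ = LinearMap.toMatrix bQ bQ (W.mapQ W f hW) := by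
    ext i j
    have h : W.mapQ W f hW (bQ j) = W.mkQ (f (b (Sum.inr j))) := by
      rw [← bW.sumQuot_inr bQ j, W.mapQ_apply, W.mkQ_apply]
    simp [A, b, Matrix.toBlocks₂₂, LinearMap.toMatrix_apply, h]
  calc f.charpoly
    _ = A.charpoly := (f.charpoly_toMatrix b).symm
    _ = A.toBlocks₁₁.charpoly * A.toBlocks₂₂.charpoly := by
      rw [← Matrix.charpoly_fromBlocks_zero₂₁ _ A.toBlocks₁₂, ← h₂₁, A.fromBlocks_toBlocks]
    _ = (f.restrict hW).charpoly * (W.mapQ W f hW).charpoly := by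
      rw [h₁₁, h₂₂, LinearMap.charpoly_toMatrix, LinearMap.charpoly_toMatrix]

theorem eq_ker_aeval_of_isCoprime (hW : W ≤ W.comap f) {p q : R[X]} (hpq : IsCoprime p q)
    (hp : aeval (f.restrict hW) p = 0) (hq : aeval (W.mapQ W f hW) q = 0) :
    W = LinearMap.ker (aeval f p) := by
  apply le_antisymm
  · intro w hw
    have h : W.subtype ∘ₗ f.restrict hW = f ∘ₗ W.subtype := f.subtype_comp_restrict hW
    simpa [hp] using (map_aeval_apply_of_comp_eq h p ⟨w, hw⟩).symm
  · intro v hv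
    have hqv : aeval f q v ∈ W := by
      have h : W.mkQ ∘ₗ f = W.mapQ W f hW ∘ₗ W.mkQ := (W.mapQ_mkQ W f).symm
      simpa [hq] using map_aeval_apply_of_comp_eq h q v
    obtain ⟨a, b, hab⟩ := hpq
    have hv_eq : aeval f b (aeval f q v) = v := by
      simpa [LinearMap.mem_ker.mp hv] using congr_arg (fun r : R[X] ↦ aeval f r v) hab
    rw [← hv_eq]
    exact aeval_apply_smul_mem_of_le_comap' hqv b f hW

end Invariant

section Squarefree

variable {F V : Type*} [Field F] [AddCommGroup V] [Module F V] [FiniteDimensional F V]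
  {f : End F V}

theorem eq_ker_aeval_charpoly_restrict_of_squarefree (hf : Squarefree f.charpoly)
    {W : Submodule F V} (hW : W ≤ W.comap f) :
    W = LinearMap.ker (aeval f (f.restrict hW).charpoly) := by
  rw [charpoly_eq_charpoly_restrict_mul_charpoly_mapQ hW, squarefree_mul_iff] at hf
  exact eq_ker_aeval_of_isCoprime hW hf.1.isCoprime (LinearMap.aeval_self_charpoly _)
    (LinearMap.aeval_self_charpoly _)

theorem invtSubmodule_le_of_commute_of_squarefree_charpoly (hf : Squarefree f.charpoly)
    {g : End F V} (h : Commute f g) : f.invtSubmodule ≤ g.invtSubmodule := fun W hW ↦ by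
  rw [eq_ker_aeval_charpoly_restrict_of_squarefree hf hW]
  exact ker_aeval_mem_invtSubmodule_of_commute h _

end Squarefree

section Scalars

variable {F K V : Type*} [Field F] [DivisionRing K] [Algebra F K] [AddCommGroup V] [Module K V]
  [Module F V] [IsScalarTower F K V]

theorem finrank_dvd_finrank_of_smul_mem (W : Submodule F V) (hW : ∀ (k : K), ∀ w ∈ W, k • w ∈ W) :
    finrank F K ∣ finrank F W := by
  let W' : Submodule K V := { W with smul_mem' := fun k w hw ↦ hW k w hw }
  exact finrank_dvd_finrank_right F K W'

theorem stmt_18_general [FiniteDimensional F V] (f : End K V)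
    (hsq : Squarefree (LinearMap.charpoly (f.restrictScalars F)))
    (W : Submodule F V) (hinv : ∀ w ∈ W, f w ∈ W) :
    finrank F K ∣ finrank F W := by
  refine finrank_dvd_finrank_of_smul_mem W fun k ↦ ?_
  have hcomm : Commute (f.restrictScalars F) (Algebra.lsmul F F V k) :=
    LinearMap.ext fun v ↦ f.map_smul k v
  exact invtSubmodule_le_of_commute_of_squarefree_charpoly hsq hcomm hinv

end Scalars

theorem stmt_18 (F K V : Type*) [Field F] [Finite F] [Field K] [Algebra F K]
    [FiniteDimensional F K] (hb : Nat.Prime (Module.finrank F K))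
    [AddCommGroup V] [Module K V] [Module F V] [IsScalarTower F K V]
    [Nontrivial V] [FiniteDimensional K V] [FiniteDimensional F V]
    (f : V ≃ₗ[K] V)
    (hsq : Squarefree (LinearMap.charpoly (f.toLinearMap.restrictScalars F)))
    (W : Submodule F V) (hW : W ≠ ⊥) (hinv : ∀ w ∈ W, f w ∈ W)
    (hmin : ∀ W' : Submodule F V, (∀ w ∈ W', f w ∈ W') → W' ≤ W →
      W' = ⊥ ∨ W' = W) :
    Module.finrank F K ∣ Module.finrank F W :=
  stmt_18_general f.toLinearMap hsq W hinv
end
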